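/- Assume f satisfies (f1), (f2), (f3): f(s) ≥ f'(s)(s−β) for all s ≥ β, and (f4): (F/f)'(s) ≥ (n−2)/(2n) for all s > β. Then the problem u''(r) + ((n−1)/r)u'(r) + f(u(r)) = 0 on (0,∞), u'(0) = 0, lim_{r→∞} u(r) = 0, has at most one solution u with u(0) > 0 having exactly one sign change in (0,∞); i.e., if u₁ and u₂ are two such solutions, then u₁(0) = u₂(0) and u₁ ≡ u₂. -/

import Mathlib

open Set Filter MeasureTheory

namespace Paper

noncomputable section

/-- `F s = ∫₀ˢ f t dt`. -/
def Fint (f : ℝ → ℝ) (s : ℝ) : ℝ := ∫ t in (0:ℝ)..s, f t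

/-- Hypothesis (f1): `f` is odd, `f 0 = 0`, there are `β > b > 0` with `f > 0` on `(b,∞)`,
`f ≤ 0`, `f ≢ 0` on `[0,b]`, and `F β = 0`. -/
def Hf1 (f : ℝ → ℝ) (b β : ℝ) : Prop :=
  (∀ s, f (-s) = -f s) ∧ f 0 = 0 ∧ 0 < b ∧ b < β ∧
    (∀ s, b < s → 0 < f s) ∧ (∀ s ∈ Icc (0:ℝ) b, f s ≤ 0) ∧
    (∃ s ∈ Icc (0:ℝ) b, f s ≠ 0) ∧ Fint f β = 0

/-- Hypothesis (f2): `f` continuous on `[0,∞)`, C¹ on `(0,∞)`, `f' ∈ L¹(0,1)`. -/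
def Hf2 (f : ℝ → ℝ) : Prop :=
  ContinuousOn f (Ici 0) ∧ (∀ s : ℝ, 0 < s → DifferentiableAt ℝ f s) ∧
    ContinuousOn (deriv f) (Ioi 0) ∧ IntegrableOn (deriv f) (Ioo 0 1)

/-- Hypothesis (f3): `f s ≥ f' s * (s - β)` for `s ≥ β`. -/
def Hf3 (f : ℝ → ℝ) (β : ℝ) : Prop := ∀ s, β ≤ s → deriv f s * (s - β) ≤ f s

/-- Hypothesis (f4): `(F/f)' s ≥ (n-2)/(2n)` for `s > β`. -/
def Hf4 (n : ℕ) (f : ℝ → ℝ) (β : ℝ) : Prop :=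
  ∀ s, β < s → ((n : ℝ) - 2) / (2 * (n : ℝ)) ≤ deriv (fun t => Fint f t / f t) s

/-- Hypothesis (f4'): `(F/f)' s ≥ (n-2)/2` for `s > β`. -/
def Hf4' (n : ℕ) (f : ℝ → ℝ) (β : ℝ) : Prop :=
  ∀ s, β < s → ((n : ℝ) - 2) / 2 ≤ deriv (fun t => Fint f t / f t) s

/-- Hypothesis (f5): `s ↦ s f' s / f s` is nonincreasing on `[β,∞)`. -/
def Hf5 (f : ℝ → ℝ) (β : ℝ) : Prop := AntitoneOn (fun s => s * deriv f s / f s) (Ici β)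

/-- Hypothesis (f6): `β f' β / f β ≤ n/(n-2)`. -/
def Hf6 (n : ℕ) (f : ℝ → ℝ) (β : ℝ) : Prop := β * deriv f β / f β ≤ (n : ℝ) / ((n : ℝ) - 2)

/-- Hypothesis (f1'): `f 0 = 0` and `s f s > 0` for `s > 0`. -/
def Hf1' (f : ℝ → ℝ) : Prop := f 0 = 0 ∧ ∀ s : ℝ, 0 < s → 0 < s * f s

/-- Hypothesis (f3'): `f s ≥ s f' s` for `s > 0`, with strict inequality at points
arbitrarily close to `0`. -/
def Hf3' (f : ℝ → ℝ) : Prop :=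
  (∀ s : ℝ, 0 < s → s * deriv f s ≤ f s) ∧
    ∀ ε : ℝ, 0 < ε → ∃ s ∈ Ioo (0:ℝ) ε, s * deriv f s < f s

/-- `v` is a C² solution of (E) on `(0,∞)`, continuous on `[0,∞)`,
with `v 0 = α` and `v' 0 = 0`. -/
def IVPsol (n : ℕ) (f : ℝ → ℝ) (α : ℝ) (v : ℝ → ℝ) : Prop :=
  v 0 = α ∧ deriv v 0 = 0 ∧ ContinuousOn v (Ici 0) ∧
    (∀ r : ℝ, 0 < r → DifferentiableAt ℝ v r ∧ DifferentiableAt ℝ (deriv v) r) ∧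
    (∀ r : ℝ, 0 < r → deriv (deriv v) r + ((n : ℝ) - 1) / r * deriv v r + f (v r) = 0)

/-- The family `α ↦ u α` of solutions of the IVP, with `u α r` and `u' α r`
continuous in `(α, r)`. -/
def Family (n : ℕ) (f : ℝ → ℝ) (u : ℝ → ℝ → ℝ) : Prop :=
  (∀ α : ℝ, 0 < α → IVPsol n f α (u α)) ∧
    ContinuousOn (fun p : ℝ × ℝ => u p.1 p.2) (Ioi 0 ×ˢ Ici 0) ∧
    ContinuousOn (fun p : ℝ × ℝ => deriv (u p.1) p.2) (Ioi 0 ×ˢ Ici 0)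

/-- The set whose supremum is `Z_k α`, given `T = T_{k-1} α`. -/
def ZsetAux (u : ℝ → ℝ → ℝ) (k : ℕ) (T α : ℝ) : Set ℝ :=
  {r | T < r ∧ ∀ s ∈ Ioo T r, (-1 : ℝ) ^ k * u α s < 0 ∧ 0 < (-1 : ℝ) ^ k * deriv (u α) s}

/-- The pair `(Z_k, T_k)`, with `T₀ = 0`;
`Z_k α = sup {r > T_{k-1} α | (-1)^k u < 0, (-1)^k u' > 0 on (T_{k-1} α, r)}` and
`T_k α = inf {r > Z_k α | u'(r, α) = 0}`. -/
def ZT (u : ℝ → ℝ → ℝ) : ℕ → (ℝ → ℝ) × (ℝ → ℝ)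
  | 0 => (fun _ => 0, fun _ => 0)
  | k + 1 =>
    let Z : ℝ → ℝ := fun α => sSup (ZsetAux u (k + 1) ((ZT u k).2 α) α)
    (Z, fun α => sInf {r | Z α < r ∧ deriv (u α) r = 0})

/-- `Z_k α` (as a real number; the genuine value when the defining set is bounded above). -/
def Zk (u : ℝ → ℝ → ℝ) (k : ℕ) (α : ℝ) : ℝ := (ZT u k).1 α

/-- `T_k α`, with `T₀ = 0`. -/
def Tk (u : ℝ → ℝ → ℝ) (k : ℕ) (α : ℝ) : ℝ := (ZT u k).2 α

/-- The defining set of `Z_k α`; `Z_k α = ∞` iff this set is unbounded above. -/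
def ZsetK (u : ℝ → ℝ → ℝ) (k : ℕ) (α : ℝ) : Set ℝ := ZsetAux u k (Tk u (k - 1) α) α

open Classical in
/-- The value of `u (·, α)` at `Z_k α`, as a limit `r → ∞` when `Z_k α = ∞`. -/
def uAtZ (u : ℝ → ℝ → ℝ) (k : ℕ) (α : ℝ) : ℝ :=
  if BddAbove (ZsetK u k α) then u α (Zk u k α) else limUnder atTop (u α)

open Classical in
/-- The value of `u' (·, α)` at `Z_k α`, as a limit `r → ∞` when `Z_k α = ∞`. -/
def duAtZ (u : ℝ → ℝ → ℝ) (k : ℕ) (α : ℝ) : ℝ :=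
  if BddAbove (ZsetK u k α) then deriv (u α) (Zk u k α) else limUnder atTop (deriv (u α))

open Classical in
/-- `Z_k α` as an extended real number. -/
def ZkE (u : ℝ → ℝ → ℝ) (k : ℕ) (α : ℝ) : WithTop ℝ :=
  if BddAbove (ZsetK u k α) then (Zk u k α : WithTop ℝ) else ⊤

/-- Membership in `F̃_k` (for `α ∈ N_{k-1}`): `(-1)^k u' (r, α) < 0` for all `r > Z_{k-1} α`. -/
def Ftil (u : ℝ → ℝ → ℝ) (k : ℕ) (α : ℝ) : Prop :=
  ∀ r, Zk u (k - 1) α < r → (-1 : ℝ) ^ k * deriv (u α) r < 0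

/-- The sets `N_k` (with `N₀ := (0,∞)`). -/
def Nk (u : ℝ → ℝ → ℝ) : ℕ → Set ℝ
  | 0 => Ioi 0
  | 1 => {α | 0 < α ∧ uAtZ u 1 α = 0 ∧ duAtZ u 1 α < 0}
  | k + 2 => {α | α ∈ Nk u (k + 1) ∧ ¬Ftil u (k + 2) α ∧ uAtZ u (k + 2) α = 0 ∧
      0 < (-1 : ℝ) ^ (k + 2) * duAtZ u (k + 2) α}

/-- The sets `G_k`. -/
def Gk (u : ℝ → ℝ → ℝ) : ℕ → Set ℝ
  | 0 => ∅
  | 1 => {α | 0 < α ∧ uAtZ u 1 α = 0 ∧ duAtZ u 1 α = 0}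
  | k + 2 => {α | α ∈ Nk u (k + 1) ∧ ¬Ftil u (k + 2) α ∧ uAtZ u (k + 2) α = 0 ∧
      duAtZ u (k + 2) α = 0}

/-- The set `F̃_k` (for `k ≥ 2`). -/
def FtilSet (u : ℝ → ℝ → ℝ) (k : ℕ) : Set ℝ := {α | α ∈ Nk u (k - 1) ∧ Ftil u k α}

/-- The set `F_k` (for `k ≥ 2`). -/
def Fk (u : ℝ → ℝ → ℝ) (k : ℕ) : Set ℝ :=
  {α | α ∈ Nk u (k - 1) ∧ ¬Ftil u k α ∧ (-1 : ℝ) ^ k * uAtZ u k α < 0}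

/-- The sets `P_k`. -/
def Pk (u : ℝ → ℝ → ℝ) : ℕ → Set ℝ
  | 0 => ∅
  | 1 => {α | 0 < α ∧ 0 < uAtZ u 1 α}
  | k + 2 => FtilSet u (k + 2) ∪ Fk u (k + 2)

/-- The set of extremal points (zeros of `u' (·, α)`) in `[0, A]`. -/
def ExtSet (u : ℝ → ℝ → ℝ) (α A : ℝ) : Set ℝ := {r | r ∈ Icc 0 A ∧ deriv (u α) r = 0}

/-- The conclusion of the δ₁-lemma (Lemma 4.1): every solution with initial value in
`(α*-δ₁, α*+δ₁)` has exactly `k` extremal points in `[0, T_{k-1}(α*) + a]`, with minimum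
values `< -β` and maximum values `> β`; moreover any two such solutions intersect between
any two of their consecutive extremal points, and in `(T_{k-1}(α*), Z_k(α*))`. -/
def DeltaOneLemma (f : ℝ → ℝ) (β : ℝ) (u : ℝ → ℝ → ℝ) (k : ℕ) (αs a δ₁ : ℝ) : Prop :=
  0 < a ∧ 0 < δ₁ ∧
    (∀ α ∈ Ioo (αs - δ₁) (αs + δ₁),
      (ExtSet u α (Tk u (k - 1) αs + a)).Finite ∧
        (ExtSet u α (Tk u (k - 1) αs + a)).ncard = k ∧
        ∀ r ∈ ExtSet u α (Tk u (k - 1) αs + a),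
          (IsLocalMin (u α) r → u α r < -β) ∧ (IsLocalMax (u α) r → β < u α r)) ∧
    ∀ α₁ ∈ Ioo (αs - δ₁) (αs + δ₁), ∀ α₂ ∈ Ioo (αs - δ₁) (αs + δ₁), α₁ < α₂ →
      (∀ i : ℕ, 1 ≤ i → i ≤ k - 1 →
        ∃ t, max (Tk u (i - 1) α₁) (Tk u (i - 1) α₂) < t ∧
          t < min (Tk u i α₁) (Tk u i α₂) ∧ u α₁ t = u α₂ t) ∧
      ∃ t, Tk u (k - 1) αs < t ∧ (BddAbove (ZsetK u k αs) → t < Zk u k αs) ∧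
        u α₁ t = u α₂ t

/-- `ρ` is the inverse of the monotone branch of `v` on `[t₁, t₂]`, whose set of values
is `[m, M]`. -/
def InvBranch (v ρ : ℝ → ℝ) (t₁ t₂ m M : ℝ) : Prop :=
  (∀ s ∈ Icc m M, ρ s ∈ Icc t₁ t₂ ∧ v (ρ s) = s) ∧
    ∀ s ∈ Ioo m M, HasDerivAt ρ (1 / deriv v (ρ s)) s

/-- `ρ` inverts a decreasing branch of `v` over the value interval `[m, M]`, along which
`(v')² + 2F > 0`. -/
def DecBranchInv (f : ℝ → ℝ) (v ρ : ℝ → ℝ) (m M : ℝ) : Prop :=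
  ∀ s ∈ Icc m M, 0 ≤ ρ s ∧ v (ρ s) = s ∧ deriv v (ρ s) < 0 ∧
    HasDerivAt ρ (1 / deriv v (ρ s)) s ∧ 0 < (deriv v (ρ s)) ^ 2 + 2 * Fint f s

/-- The functional `Q(s) = -4 (F/f)(s) r/r' - r²/(r')² - 2 r² F(s) + H(s)` computed along
the branch inverse `ρ`. -/
def Qfun (f H ρ : ℝ → ℝ) (s : ℝ) : ℝ :=
  -4 * (Fint f s / f s) * (ρ s / deriv ρ s) - (ρ s) ^ 2 / (deriv ρ s) ^ 2 -
    2 * (ρ s) ^ 2 * Fint f s + H s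

/-- The functional `P(s) = -2n (F/f)(s) r^{n-1}/r' - r^n/(r')² - 2 r^n F(s)`. -/
def Pfun (n : ℕ) (f : ℝ → ℝ) (ρ : ℝ → ℝ) (s : ℝ) : ℝ :=
  -(2 * (n : ℝ)) * (Fint f s / f s) * (ρ s ^ (n - 1) / deriv ρ s) -
    ρ s ^ n / (deriv ρ s) ^ 2 - 2 * ρ s ^ n * Fint f s

/-- The functional `W(s) = r(s) √((u'(r(s)))² + 2 F(s))`. -/
def Wfun (f v ρ : ℝ → ℝ) (s : ℝ) : ℝ :=
  ρ s * Real.sqrt ((deriv v (ρ s)) ^ 2 + 2 * Fint f s)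

/-- The functional `W̃(s) = r(s)^{n-1} √((u'(r(s)))² + 2 F(s))`. -/
def Wtil (n : ℕ) (f : ℝ → ℝ) (v ρ : ℝ → ℝ) (s : ℝ) : ℝ :=
  ρ s ^ (n - 1) * Real.sqrt ((deriv v (ρ s)) ^ 2 + 2 * Fint f s)

/-- `v` changes sign at `z ∈ (0,∞)`: `v z = 0` and `v` takes both signs in every
neighborhood of `z` (within `(0,∞)`). -/
def SignChange (v : ℝ → ℝ) (z : ℝ) : Prop :=
  v z = 0 ∧ ∀ ε : ℝ, 0 < ε →
    (∃ x ∈ Ioo (z - ε) (z + ε) ∩ Ioi 0, 0 < v x) ∧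
    (∃ x ∈ Ioo (z - ε) (z + ε) ∩ Ioi 0, v x < 0)

/-- `v` has exactly `m` sign changes in `(0,∞)`. -/
def ExactSignChanges (v : ℝ → ℝ) (m : ℕ) : Prop :=
  {z | 0 < z ∧ SignChange v z}.Finite ∧ {z | 0 < z ∧ SignChange v z}.ncard = m

/-- Bound state: a C² solution of (E) on `(0,∞)` with `v' 0 = 0` and `v r → 0` as `r → ∞`. -/
def BoundState (n : ℕ) (f : ℝ → ℝ) (v : ℝ → ℝ) : Prop :=
  ContinuousOn v (Ici 0) ∧
    (∀ r : ℝ, 0 < r → DifferentiableAt ℝ v r ∧ DifferentiableAt ℝ (deriv v) r) ∧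
    (∀ r : ℝ, 0 < r → deriv (deriv v) r + ((n : ℝ) - 1) / r * deriv v r + f (v r) = 0) ∧
    deriv v 0 = 0 ∧ Tendsto v atTop (nhds 0)

/-- Solution of the Dirichlet problem on the ball of radius `R`. -/
def DirichletSol (n : ℕ) (f : ℝ → ℝ) (R : ℝ) (v : ℝ → ℝ) : Prop :=
  ContinuousOn v (Icc 0 R) ∧
    (∀ r ∈ Ioo (0:ℝ) R, DifferentiableAt ℝ v r ∧ DifferentiableAt ℝ (deriv v) r) ∧
    (∀ r ∈ Ioo (0:ℝ) R, deriv (deriv v) r + ((n : ℝ) - 1) / r * deriv v r + f (v r) = 0) ∧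
    deriv v 0 = 0 ∧ v R = 0

end
end Paper

/-!
A solution with one sign change falls from `u 0 > β` to a minimum `u T < -β` and then rises to `0`.
Invert the falling piece of `-u` and the rising piece of `u`, so that each is described by the
radius `r τ` and the slope `x τ > 0` at level `τ`, and let `u₁ 0 < u₂ 0`.

By (f3), a Wronskian of `u₁ - β` and `u₂ - β` gives `r₁ < r₂` at the levels of `-u` below `-β`, and
`x₁ < x₂` at `-β`. If `r₁ < r₂` persists up to the minima, then `u₂` has the later and deeper
minimum, and the same two facts hold on the rising pieces. Otherwise the radii cross at some level,
where `x₁ < x₂`. From there the Pohozaev functional, monotone by (f4), decides: up to the minima,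
`x₂` stays ahead in momentum and `P₂ < P₁`, so `u₂` is deeper; this survives the passage through
the minimum, and on the rising pieces `x₁ < x₂` still holds at level `-β`.

On the levels `[-β, 0)`, where `F ≤ 0`, the lead of `u₂`, in the slope if `r₁ < r₂` and in
`r √(x² + 2 F)` otherwise, is kept up to level `0`, so that the energy `x₂² + 2 F` does not tend to
zero there, which it does for every solution.
Hence `u₁ 0 = u₂ 0`, and since `f` is locally Lipschitz where `|u| > β`, the inverted pieces agree.
-/

namespace Paper

open Topology

section Calculus

variable {g g' p q u u' v v' : ℝ → ℝ} {a c t C p' q' : ℝ}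

theorem forall_lt_of_ne_at_first_eq (hp : ContinuousOn p (Icc a c))
    (hq : ContinuousOn q (Icc a c)) (ha : p a < q a)
    (H : ∀ t ∈ Ioc a c, (∀ s ∈ Ico a t, p s < q s) → p t ≠ q t) :
    ∀ t ∈ Icc a c, p t < q t := by
  by_contra! hcon
  obtain ⟨t₀, ht₀, hle⟩ := hcon
  have hK : IsCompact {t ∈ Icc a c | q t ≤ p t} :=
    isCompact_Icc.of_isClosed_subset (isClosed_Icc.isClosed_le hq hp) fun _ h => h.1
  obtain ⟨t, ht, hmin⟩ := hK.exists_isLeast ⟨t₀, ht₀, hle⟩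
  have hlt : ∀ s ∈ Ico a t, p s < q s := fun s hs => by
    by_contra! hs'
    exact absurd (hmin ⟨⟨hs.1, hs.2.le.trans ht.1.2⟩, hs'⟩) (not_le.2 hs.2)
  have hat : a < t := ht.1.1.lt_of_ne (by rintro rfl; exact absurd ht.2 (not_le.2 ha))
  have hsub : Ico a t ⊆ Icc a c := fun s hs => ⟨hs.1, hs.2.le.trans ht.1.2⟩
  have hclosure : t ∈ closure (Ico a t) := by
    rw [closure_Ico hat.ne]
    exact right_mem_Icc.2 hat.le
  refine H t ⟨hat, ht.1.2⟩ hlt (le_antisymm ?_ ht.2)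
  exact ((hp t ht.1).mono hsub).closure_le hclosure ((hq t ht.1).mono hsub)
    fun s hs => (hlt s hs).le

theorem deriv_le_deriv_at_first_eq (hat : a < t) (hp : HasDerivAt p p' t)
    (hq : HasDerivAt q q' t) (hlt : ∀ s ∈ Ico a t, p s < q s) (heq : p t = q t) :
    q' ≤ p' := by
  have hslope : Tendsto (slope (fun s => q s - p s) t) (𝓝[<] t) (𝓝 (q' - p')) :=
    (hasDerivAt_iff_tendsto_slope.1 (hq.sub hp)).mono_left
      (nhdsWithin_mono _ fun s hs => ne_of_lt hs)
  refine sub_nonpos.1 (le_of_tendsto hslope ?_)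
  filter_upwards [Ico_mem_nhdsLT hat] with s hs
  rw [slope_def_field, heq, sub_self, sub_zero]
  exact div_nonpos_of_nonneg_of_nonpos (sub_pos.2 (hlt s hs)).le (sub_neg.2 hs.2).le

theorem le_of_hasDerivAt_nonneg (hac : a ≤ c) (hg : ContinuousOn g (Icc a c))
    (hd : ∀ t ∈ Ioo a c, HasDerivAt g (g' t) t) (h : ∀ t ∈ Ioo a c, 0 ≤ g' t) : g a ≤ g c := by
  refine monotoneOn_of_hasDerivWithinAt_nonneg (convex_Icc a c) hg ?_ ?_ (left_mem_Icc.2 hac)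
    (right_mem_Icc.2 hac) hac (f' := g') <;> rw [interior_Icc]
  exacts [fun t ht => (hd t ht).hasDerivWithinAt, h]

theorem sub_le_sub_of_hasDerivAt_le (hac : a ≤ c) (hu : ∀ t ∈ Icc a c, HasDerivAt u (u' t) t)
    (hv : ∀ t ∈ Icc a c, HasDerivAt v (v' t) t) (h : ∀ t ∈ Ioo a c, u' t ≤ v' t) :
    u c - u a ≤ v c - v a := by
  have hd : ∀ t ∈ Icc a c, HasDerivAt (fun s => v s - u s) (v' t - u' t) t :=
    fun t ht => (hv t ht).sub (hu t ht)
  have := le_of_hasDerivAt_nonneg hac (HasDerivAt.continuousOn hd)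
    (fun t ht => hd t (Ioo_subset_Icc_self ht)) fun t ht => sub_nonneg.2 (h t ht)
  linarith

theorem antitoneOn_of_hasDerivAt_nonpos (hd : ∀ t ∈ Icc a c, HasDerivAt g (g' t) t)
    (h : ∀ t ∈ Ioo a c, g' t ≤ 0) : AntitoneOn g (Icc a c) := by
  refine antitoneOn_of_hasDerivWithinAt_nonpos (convex_Icc a c) (HasDerivAt.continuousOn hd)
    ?_ ?_ (f' := g') <;> rw [interior_Icc]
  exacts [fun t ht => (hd t (Ioo_subset_Icc_self ht)).hasDerivWithinAt, h]

theorem le_mul_exp_of_hasDerivAt_le_mul (hac : a ≤ c)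
    (hd : ∀ t ∈ Icc a c, HasDerivAt g (g' t) t) (H : ∀ t ∈ Ico a c, g' t ≤ C * g t) :
    g c ≤ g a * Real.exp (C * (c - a)) := by
  have := le_gronwallBound_of_liminf_deriv_right_le (ε := 0) (HasDerivAt.continuousOn hd)
    (fun t ht _ hr => (hd t (Ico_subset_Icc_self ht)).hasDerivWithinAt.liminf_right_slope_le hr)
    le_rfl (fun t ht => by simpa only [add_zero] using H t ht) c (right_mem_Icc.2 hac)
  rwa [gronwallBound_ε0] at this

theorem pos_of_hasDerivAt_ge_mul (ha : 0 < g a) (hd : ∀ t ∈ Icc a c, HasDerivAt g (g' t) t)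
    (H : ∀ t ∈ Icc a c, 0 < g t → C * g t ≤ g' t) : ∀ t ∈ Icc a c, 0 < g t := by
  refine forall_lt_of_ne_at_first_eq continuousOn_const (HasDerivAt.continuousOn hd) ha
    fun t ht hpos h0 => ?_
  have hsub : Icc a t ⊆ Icc a c := Icc_subset_Icc_right ht.2
  have hgrowth := le_mul_exp_of_hasDerivAt_le_mul (g := -g) (C := C) ht.1.le
    (fun s hs => (hd s (hsub hs)).neg) fun s hs => by
      simpa only [Pi.neg_apply, mul_neg, neg_le_neg_iff] using
        H s (hsub (Ico_subset_Icc_self hs)) (hpos s hs)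
  have := mul_pos ha (Real.exp_pos (C * (t - a)))
  simp only [Pi.neg_apply, ← h0] at hgrowth
  linarith

theorem eq_zero_of_hasDerivAt_le_mul (hd : ∀ t ∈ Ioc a c, HasDerivAt g (g' t) t)
    (H : ∀ t ∈ Ioc a c, g' t ≤ C * g t) (h0 : ∀ t ∈ Ioc a c, 0 ≤ g t)
    (hlim : Tendsto g (𝓝[>] a) (𝓝 0)) : ∀ t ∈ Ioc a c, g t = 0 := by
  refine fun t ht => le_antisymm ?_ (h0 t ht)
  have hexp : Tendsto (fun s => Real.exp (C * (t - s))) (𝓝[>] a) (𝓝 (Real.exp (C * (t - a)))) :=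
    (Continuous.tendsto (by fun_prop) a).mono_left nhdsWithin_le_nhds
  refine (ge_of_tendsto (hlim.mul hexp) ?_).trans_eq (zero_mul _)
  filter_upwards [Ioc_mem_nhdsGT ht.1] with s hs
  have hsub : Icc s t ⊆ Ioc a c := fun r hr => ⟨hs.1.trans_le hr.1, hr.2.trans ht.2⟩
  exact le_mul_exp_of_hasDerivAt_le_mul hs.2 (fun r hr => hd r (hsub hr))
    fun r hr => H r (hsub (Ico_subset_Icc_self hr))

theorem eq_zero_of_mul_deriv_add_le (hu : ∀ t ∈ Ioc a c, HasDerivAt u (u' t) t)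
    (hv : ∀ t ∈ Ioc a c, HasDerivAt v (v' t) t)
    (H : ∀ t ∈ Ioc a c, u t * u' t + v t * v' t ≤ C * (u t ^ 2 + v t ^ 2))
    (hu0 : Tendsto u (𝓝[>] a) (𝓝 0)) (hv0 : Tendsto v (𝓝[>] a) (𝓝 0)) :
    ∀ t ∈ Ioc a c, u t = 0 ∧ v t = 0 := by
  intro t ht
  have hzero := eq_zero_of_hasDerivAt_le_mul (g := fun s => u s ^ 2 + v s ^ 2) (C := 2 * C)
    (fun s hs => ((hu s hs).pow 2).add ((hv s hs).pow 2))
    (fun s hs => by norm_num; linarith [H s hs]) (fun s _ => by positivity)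
    (by simpa using (hu0.pow 2).add (hv0.pow 2)) t ht
  simpa using (add_eq_zero_iff_of_nonneg (sq_nonneg (u t)) (sq_nonneg (v t))).1 hzero

theorem tendsto_sub_nhdsGT_of_eq (hu : ContinuousAt u a) (hv : ContinuousAt v a)
    (h : u a = v a) : Tendsto (fun t => v t - u t) (𝓝[>] a) (𝓝 0) := by
  have := (hv.sub hu).tendsto.mono_left (nhdsWithin_le_nhds (s := Ioi a))
  rwa [Pi.sub_apply, h, sub_self] at this

theorem abs_mul_le_sq_add_sq (x y : ℝ) : |x * y| ≤ x ^ 2 + y ^ 2 := by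
  rw [abs_le]
  constructor <;> nlinarith [sq_nonneg (x + y), sq_nonneg (x - y)]

end Calculus

/-- A monotone branch of a solution in dimension `k + 2`, parametrized by its level `τ`, oriented
so that `τ` increases with the radius: `r τ` is the radius and `x τ` the modulus of the derivative
at which the level is attained. -/
structure Branch (k : ℕ) (f r x : ℝ → ℝ) (I : Set ℝ) : Prop where
  r_pos : ∀ τ ∈ I, 0 < r τ
  x_pos : ∀ τ ∈ I, 0 < x τ
  r_deriv : ∀ τ ∈ I, HasDerivAt r (1 / x τ) τ
  x_deriv : ∀ τ ∈ I, HasDerivAt x (-((k + 1) / r τ) - f τ / x τ) τ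

/-- The momentum `r^(n-1) |u'|` along a branch, in dimension `n = k + 2`. -/
def momentum (k : ℕ) (r x : ℝ → ℝ) (τ : ℝ) : ℝ := r τ ^ (k + 1) * x τ

/-- The energy `|u'|² + 2 F(u)` along a branch. -/
def levelEnergy (F x : ℝ → ℝ) (τ : ℝ) : ℝ := x τ ^ 2 + 2 * F τ

/-- The functional `W = r √(|u'|² + 2 F(u))` along a branch. -/
noncomputable def radialEnergy (F r x : ℝ → ℝ) (τ : ℝ) : ℝ := r τ * √(levelEnergy F x τ)

/-- The Pohozaev-type functional `P` along a branch, in dimension `n = k + 2`. It agrees with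
`Pfun`, the derivative of the inverse function `r` being `1 / x` up to sign. -/
noncomputable def pohozaev (k : ℕ) (f F r x : ℝ → ℝ) (τ : ℝ) : ℝ :=
  -(2 * (k + 2) * (F τ / f τ) * momentum k r x τ) - r τ ^ (k + 2) * levelEnergy F x τ

/-- The condition `(F/f)' ≥ (n-2)/(2n)` on `I`, in dimension `n = k + 2`, under which `pohozaev`
is nonincreasing along a branch. -/
structure PohozaevOn (k : ℕ) (f F : ℝ → ℝ) (I : Set ℝ) : Prop where
  hasDerivAt : ∀ τ ∈ I, HasDerivAt F (f τ) τ
  ne_zero : ∀ τ ∈ I, f τ ≠ 0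
  differentiableAt : ∀ τ ∈ I, DifferentiableAt ℝ (fun s => F s / f s) τ
  le_deriv : ∀ τ ∈ I, k ≤ 2 * (k + 2) * deriv (fun s => F s / f s) τ

theorem PohozaevOn.mono {k : ℕ} {f F : ℝ → ℝ} {I J : Set ℝ} (h : PohozaevOn k f F I)
    (hJ : J ⊆ I) : PohozaevOn k f F J :=
  ⟨fun τ hτ => h.hasDerivAt τ (hJ hτ), fun τ hτ => h.ne_zero τ (hJ hτ),
    fun τ hτ => h.differentiableAt τ (hJ hτ), fun τ hτ => h.le_deriv τ (hJ hτ)⟩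

namespace Branch

variable {k : ℕ} {f F r x r₁ x₁ r₂ x₂ : ℝ → ℝ} {I J : Set ℝ} {a c d τ : ℝ}

theorem mono (h : Branch k f r x I) (hJ : J ⊆ I) : Branch k f r x J :=
  ⟨fun τ hτ => h.r_pos τ (hJ hτ), fun τ hτ => h.x_pos τ (hJ hτ),
    fun τ hτ => h.r_deriv τ (hJ hτ), fun τ hτ => h.x_deriv τ (hJ hτ)⟩

theorem r_cont (h : Branch k f r x I) : ContinuousOn r I := HasDerivAt.continuousOn h.r_deriv

theorem x_cont (h : Branch k f r x I) : ContinuousOn x I := HasDerivAt.continuousOn h.x_deriv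

theorem r_strictMonoOn (h : Branch k f r x I) (hI : Convex ℝ I) : StrictMonoOn r I :=
  strictMonoOn_of_deriv_pos hI h.r_cont fun τ hτ => by
    rw [(h.r_deriv τ (interior_subset hτ)).deriv]
    exact one_div_pos.2 (h.x_pos τ (interior_subset hτ))

theorem momentum_pos (h : Branch k f r x I) (hτ : τ ∈ I) : 0 < momentum k r x τ :=
  mul_pos (pow_pos (h.r_pos τ hτ) _) (h.x_pos τ hτ)

theorem momentum_deriv (h : Branch k f r x I) (hτ : τ ∈ I) :
    HasDerivAt (momentum k r x) (-(r τ ^ (k + 1) * f τ / x τ)) τ := by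
  have hr := h.r_pos τ hτ
  have hx := h.x_pos τ hτ
  refine (((h.r_deriv τ hτ).pow (k + 1)).mul (h.x_deriv τ hτ)).congr_deriv ?_
  simp only [Pi.pow_apply, Nat.add_sub_cancel]
  push_cast
  field_simp
  ring

theorem levelEnergy_deriv (h : Branch k f r x I) (hF : HasDerivAt F (f τ) τ) (hτ : τ ∈ I) :
    HasDerivAt (levelEnergy F x) (-(2 * (k + 1) * x τ / r τ)) τ := by
  have hr := h.r_pos τ hτ
  have hx := h.x_pos τ hτ
  refine (((h.x_deriv τ hτ).pow 2).add (hF.const_mul 2)).congr_deriv ?_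
  push_cast
  field_simp
  ring

theorem r_sub_le (h₁ : Branch k f r₁ x₁ (Icc a c)) (h₂ : Branch k f r₂ x₂ (Icc a c))
    (hac : a ≤ c) (hx : ∀ τ ∈ Ioo a c, x₁ τ < x₂ τ) : r₂ c - r₂ a ≤ r₁ c - r₁ a :=
  sub_le_sub_of_hasDerivAt_le hac h₂.r_deriv h₁.r_deriv fun τ hτ =>
    one_div_le_one_div_of_le (h₁.x_pos τ (Ioo_subset_Icc_self hτ)) (hx τ hτ).le

theorem x_sub_le (h₁ : Branch k f r₁ x₁ (Icc a c)) (h₂ : Branch k f r₂ x₂ (Icc a c))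
    (hac : a ≤ c) (hf : ∀ τ ∈ Icc a c, 0 ≤ f τ) (hr : ∀ τ ∈ Icc a c, r₁ τ ≤ r₂ τ)
    (hx : ∀ τ ∈ Icc a c, x₁ τ < x₂ τ) : x₁ c - x₁ a ≤ x₂ c - x₂ a := by
  refine sub_le_sub_of_hasDerivAt_le hac h₁.x_deriv h₂.x_deriv fun τ hτ => ?_
  have hτ' := Ioo_subset_Icc_self hτ
  have hcurv : (k + 1 : ℝ) / r₂ τ ≤ (k + 1) / r₁ τ :=
    div_le_div_of_nonneg_left (by positivity) (h₁.r_pos τ hτ') (hr τ hτ')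
  have hforce : f τ / x₂ τ ≤ f τ / x₁ τ :=
    div_le_div_of_nonneg_left (hf τ hτ') (h₁.x_pos τ hτ') (hx τ hτ').le
  linarith

theorem exists_abs_div_mul_le (h₁ : Branch k f r₁ x₁ (Icc a c))
    (h₂ : Branch k f r₂ x₂ (Icc a c)) (hf : ContinuousOn f (Icc a c)) :
    ∃ C, ∀ τ ∈ Icc a c, |f τ / (x₁ τ * x₂ τ)| ≤ C :=
  isCompact_Icc.exists_bound_of_continuousOn <| hf.div (h₁.x_cont.mul h₂.x_cont) fun τ hτ =>
    (mul_pos (h₁.x_pos τ hτ) (h₂.x_pos τ hτ)).ne'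

theorem x_lt_of_r_le (h₁ : Branch k f r₁ x₁ (Icc a c)) (h₂ : Branch k f r₂ x₂ (Icc a c))
    (hf : ContinuousOn f (Icc a c)) (hr : ∀ τ ∈ Icc a c, r₁ τ ≤ r₂ τ) (ha : x₁ a < x₂ a) :
    ∀ τ ∈ Icc a c, x₁ τ < x₂ τ := by
  obtain ⟨C, hC⟩ := h₁.exists_abs_div_mul_le h₂ hf
  have hpos := pos_of_hasDerivAt_ge_mul (g := fun τ => x₂ τ - x₁ τ) (C := -C) (sub_pos.2 ha)
    (fun τ hτ => (h₂.x_deriv τ hτ).sub (h₁.x_deriv τ hτ)) fun τ hτ hgap => ?_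
  · exact fun τ hτ => sub_pos.1 (hpos τ hτ)
  have p₁ := h₁.x_pos τ hτ
  have p₂ := h₂.x_pos τ hτ
  have hcurv : (k + 1 : ℝ) / r₂ τ ≤ (k + 1) / r₁ τ :=
    div_le_div_of_nonneg_left (by positivity) (h₁.r_pos τ hτ) (hr τ hτ)
  have hforce : f τ / x₁ τ - f τ / x₂ τ = f τ / (x₁ τ * x₂ τ) * (x₂ τ - x₁ τ) := by
    field_simp
  have := mul_le_mul_of_nonneg_right (abs_le.1 (hC τ hτ)).1 hgap.le
  linarith

theorem forall_r_lt_or_exists_eq (h₁ : Branch k f r₁ x₁ (Ico a c))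
    (h₂ : Branch k f r₂ x₂ (Ico a c)) (ha : r₁ a < r₂ a) :
    (∀ τ ∈ Ico a c, r₁ τ < r₂ τ) ∨
      ∃ τ ∈ Ico a c, r₁ τ = r₂ τ ∧ ∀ s ∈ Icc a τ, r₁ s ≤ r₂ s := by
  refine or_iff_not_imp_right.2 fun hno τ hτ => ?_
  have hsub : Icc a τ ⊆ Ico a c := Icc_subset_Ico_right hτ.2
  refine forall_lt_of_ne_at_first_eq (h₁.r_cont.mono hsub) (h₂.r_cont.mono hsub) ha
    (fun t ht hlt heq => hno ⟨t, hsub (Ioc_subset_Icc_self ht), heq, fun s hs => ?_⟩) τ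
    (right_mem_Icc.2 hτ.1)
  rcases hs.2.eq_or_lt with rfl | hst
  exacts [heq.le, (hlt s ⟨hs.1, hst⟩).le]

/-- The common mechanism of the comparison arguments: `steep` turns an advantage in the functional
`g` into a steeper slope, which keeps the radii ordered and, by `growth`, preserves the
advantage. -/
theorem steeper_comparison {g₁ g₂ g₁' g₂' : ℝ → ℝ} (h₁ : Branch k f r₁ x₁ (Icc a c))
    (h₂ : Branch k f r₂ x₂ (Icc a c)) (hg₁ : ∀ τ ∈ Icc a c, HasDerivAt g₁ (g₁' τ) τ)
    (hg₂ : ∀ τ ∈ Icc a c, HasDerivAt g₂ (g₂' τ) τ)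
    (steep : ∀ τ ∈ Icc a c, r₂ τ ≤ r₁ τ → g₁ τ < g₂ τ → x₁ τ < x₂ τ)
    (growth : ∀ τ ∈ Icc a c, r₂ τ ≤ r₁ τ → x₁ τ < x₂ τ → g₁' τ ≤ g₂' τ)
    (hr : r₂ a ≤ r₁ a) (hg : g₁ a < g₂ a) :
    ∀ τ ∈ Icc a c, r₂ τ ≤ r₁ τ ∧ x₁ τ < x₂ τ ∧ g₂ a - g₁ a ≤ g₂ τ - g₁ τ := by
  have persist : ∀ t ∈ Icc a c, (∀ s ∈ Ico a t, x₁ s < x₂ s) →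
      r₂ t ≤ r₁ t ∧ g₂ a - g₁ a ≤ g₂ t - g₁ t := by
    intro t ht hx
    have hsub : Icc a t ⊆ Icc a c := Icc_subset_Icc_right ht.2
    have hrle : ∀ s ∈ Icc a t, r₂ s ≤ r₁ s := fun s hs => by
      have hsub' := (Icc_subset_Icc_right hs.2).trans hsub
      linarith [r_sub_le (h₁.mono hsub') (h₂.mono hsub') hs.1
        fun q hq => hx q ⟨hq.1.le, hq.2.trans_le hs.2⟩]
    have hgap := sub_le_sub_of_hasDerivAt_le ht.1 (fun s hs => hg₁ s (hsub hs))
      (fun s hs => hg₂ s (hsub hs)) fun s hs => growth s (hsub (Ioo_subset_Icc_self hs))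
        (hrle s (Ioo_subset_Icc_self hs)) (hx s (Ioo_subset_Ico_self hs))
    exact ⟨hrle t (right_mem_Icc.2 ht.1), by linarith⟩
  intro τ hτ
  have hx : ∀ s ∈ Icc a c, x₁ s < x₂ s := by
    refine forall_lt_of_ne_at_first_eq h₁.x_cont h₂.x_cont
      (steep a (left_mem_Icc.2 (hτ.1.trans hτ.2)) hr hg) fun t ht hlt => ne_of_lt ?_
    obtain ⟨hrt, hgt⟩ := persist t (Ioc_subset_Icc_self ht) hlt
    exact steep t (Ioc_subset_Icc_self ht) hrt (by linarith)
  obtain ⟨hrτ, hgτ⟩ := persist τ hτ fun s hs => hx s ⟨hs.1, hs.2.le.trans hτ.2⟩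
  exact ⟨hrτ, hx τ hτ, hgτ⟩

theorem r_pow_mul_levelEnergy_deriv (h : Branch k f r x I) (hF : HasDerivAt F (f τ) τ)
    (hτ : τ ∈ I) : HasDerivAt (fun t => r t ^ (2 * k + 2) * levelEnergy F x t)
      (4 * (k + 1) * F τ * (r τ ^ (2 * k + 1) / x τ)) τ := by
  have hr := h.r_pos τ hτ
  have hx := h.x_pos τ hτ
  refine (((h.r_deriv τ hτ).pow (2 * k + 2)).mul (h.levelEnergy_deriv hF hτ)).congr_deriv ?_
  simp only [Pi.pow_apply, levelEnergy, show 2 * k + 2 - 1 = 2 * k + 1 by lia]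
  push_cast
  field_simp
  ring

theorem energy_comparison (h₁ : Branch k f r₁ x₁ (Icc a c)) (h₂ : Branch k f r₂ x₂ (Icc a c))
    (hF : ∀ τ, HasDerivAt F (f τ) τ) (hF0 : ∀ τ ∈ Icc a c, F τ ≤ 0)
    (hE : ∀ τ ∈ Icc a c, 0 ≤ levelEnergy F x₁ τ) (hr : r₂ a ≤ r₁ a)
    (hW : r₁ a ^ (2 * k + 2) * levelEnergy F x₁ a < r₂ a ^ (2 * k + 2) * levelEnergy F x₂ a) :
    ∀ τ ∈ Icc a c, r₂ τ ≤ r₁ τ ∧ x₁ τ < x₂ τ ∧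
      r₂ a ^ (2 * k + 2) * levelEnergy F x₂ a - r₁ a ^ (2 * k + 2) * levelEnergy F x₁ a ≤
        r₂ τ ^ (2 * k + 2) * levelEnergy F x₂ τ - r₁ τ ^ (2 * k + 2) * levelEnergy F x₁ τ := by
  refine steeper_comparison h₁ h₂ (fun τ hτ => h₁.r_pow_mul_levelEnergy_deriv (hF τ) hτ)
    (fun τ hτ => h₂.r_pow_mul_levelEnergy_deriv (hF τ) hτ) (fun τ hτ hrτ hlt => ?_)
    (fun τ hτ hrτ hxτ => ?_) hr hW
  · contrapose! hlt
    have hx : levelEnergy F x₂ τ ≤ levelEnergy F x₁ τ :=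
      add_le_add_left (pow_le_pow_left₀ (h₂.x_pos τ hτ).le hlt 2) _
    have hr₂ := h₂.r_pos τ hτ
    calc r₂ τ ^ (2 * k + 2) * levelEnergy F x₂ τ
        ≤ r₂ τ ^ (2 * k + 2) * levelEnergy F x₁ τ := by gcongr
      _ ≤ r₁ τ ^ (2 * k + 2) * levelEnergy F x₁ τ := by gcongr; exact hE τ hτ
  · have hr₂ := h₂.r_pos τ hτ
    have hx₁ := h₁.x_pos τ hτ
    refine mul_le_mul_of_nonpos_left ?_
      (mul_nonpos_of_nonneg_of_nonpos (by positivity) (hF0 τ hτ))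
    have hr₁ := h₁.r_pos τ hτ
    gcongr

theorem momentum_sq_deriv (h : Branch k f r x I) (hτ : τ ∈ I) :
    HasDerivAt (fun t => momentum k r x t ^ 2) (-(2 * f τ * (r τ ^ (k + 1)) ^ 2)) τ := by
  have hx := h.x_pos τ hτ
  refine ((h.momentum_deriv hτ).pow 2).congr_deriv ?_
  rw [momentum]
  push_cast
  field_simp

theorem momentum_gap_le (h₁ : Branch k f r₁ x₁ (Icc a c))
    (h₂ : Branch k f r₂ x₂ (Icc a c)) (hf : ∀ τ ∈ Icc a c, 0 ≤ f τ) (hr : r₂ a ≤ r₁ a)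
    (hm : momentum k r₁ x₁ a < momentum k r₂ x₂ a) :
    ∀ τ ∈ Icc a c, momentum k r₂ x₂ a ^ 2 - momentum k r₁ x₁ a ^ 2 ≤
      momentum k r₂ x₂ τ ^ 2 - momentum k r₁ x₁ τ ^ 2 := by
  intro t ht
  have hm₁ := h₁.momentum_pos (left_mem_Icc.2 (ht.1.trans ht.2))
  refine (steeper_comparison h₁ h₂ (fun τ hτ => h₁.momentum_sq_deriv hτ)
    (fun τ hτ => h₂.momentum_sq_deriv hτ) (fun τ hτ hrτ hlt => ?_)
    (fun τ hτ hrτ _ => ?_) hr (pow_lt_pow_left₀ hm hm₁.le two_ne_zero) t ht).2.2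
  · have hr₁ := h₁.r_pos τ hτ
    have hr₂ := h₂.r_pos τ hτ
    have hx₂ := h₂.x_pos τ hτ
    contrapose! hlt
    simp only [momentum]
    gcongr
  · have hr₂ := h₂.r_pos τ hτ
    have := hf τ hτ
    gcongr

theorem momentum_lt (h₁ : Branch k f r₁ x₁ (Icc a c))
    (h₂ : Branch k f r₂ x₂ (Icc a c)) (hf : ∀ τ ∈ Icc a c, 0 ≤ f τ) (hr : r₂ a ≤ r₁ a)
    (hm : momentum k r₁ x₁ a < momentum k r₂ x₂ a) :
    ∀ τ ∈ Icc a c, momentum k r₁ x₁ τ < momentum k r₂ x₂ τ := by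
  intro τ hτ
  have hgap := momentum_gap_le h₁ h₂ hf hr hm τ hτ
  have hsq := pow_lt_pow_left₀ hm
    (h₁.momentum_pos (left_mem_Icc.2 (hτ.1.trans hτ.2))).le two_ne_zero
  exact lt_of_pow_lt_pow_left₀ 2 (h₂.momentum_pos hτ).le (by linarith)

theorem not_tendsto_momentum_of_momentum_lt (h₁ : Branch k f r₁ x₁ (Ico a c))
    (h₂ : Branch k f r₂ x₂ (Ico a c)) (hac : a < c) (hf : ∀ τ ∈ Ico a c, 0 ≤ f τ)
    (hr : r₂ a ≤ r₁ a) (hm : momentum k r₁ x₁ a < momentum k r₂ x₂ a) :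
    ¬Tendsto (momentum k r₂ x₂) (𝓝[<] c) (𝓝 0) := by
  intro hlim
  have hgap : momentum k r₂ x₂ a ^ 2 - momentum k r₁ x₁ a ^ 2 ≤ 0 ^ 2 := by
    refine ge_of_tendsto (hlim.pow 2) ?_
    filter_upwards [Ico_mem_nhdsLT hac] with τ hτ
    have hsub : Icc a τ ⊆ Ico a c := Icc_subset_Ico_right hτ.2
    linarith [sq_nonneg (momentum k r₁ x₁ τ), momentum_gap_le (h₁.mono hsub) (h₂.mono hsub)
      (fun s hs => hf s (hsub hs)) hr hm τ (right_mem_Icc.2 hτ.1)]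
  have := pow_lt_pow_left₀ hm (h₁.momentum_pos (left_mem_Ico.2 hac)).le two_ne_zero
  linarith

theorem pohozaev_deriv (h : Branch k f r x I) (hQ : PohozaevOn k f F I) (hτ : τ ∈ I) :
    HasDerivAt (pohozaev k f F r x)
      (-((2 * (k + 2) * deriv (fun s => F s / f s) τ - k) * momentum k r x τ)) τ := by
  have hr := h.r_pos τ hτ
  have hx := h.x_pos τ hτ
  have hf := hQ.ne_zero τ hτ
  refine ((((hQ.differentiableAt τ hτ).hasDerivAt.const_mul (2 * (k + 2 : ℝ))).mul
    (h.momentum_deriv hτ)).neg.sub (((h.r_deriv τ hτ).pow (k + 2)).mul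
      (h.levelEnergy_deriv (hQ.hasDerivAt τ hτ) hτ))).congr_deriv ?_
  simp only [Pi.pow_apply, momentum, levelEnergy, show k + 2 - 1 = k + 1 by lia]
  push_cast
  field_simp
  ring

theorem pohozaev_le (h : Branch k f r x (Icc a c)) (hac : a ≤ c)
    (hQ : PohozaevOn k f F (Icc a c)) : pohozaev k f F r x c ≤ pohozaev k f F r x a :=
  antitoneOn_of_hasDerivAt_nonpos (fun _ hτ => h.pohozaev_deriv hQ hτ)
    (fun τ hτ => neg_nonpos.2 <| mul_nonneg
      (sub_nonneg.2 (hQ.le_deriv τ (Ioo_subset_Icc_self hτ)))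
      (h.momentum_pos (Ioo_subset_Icc_self hτ)).le)
    (left_mem_Icc.2 hac) (right_mem_Icc.2 hac) hac

theorem le_pohozaev_of_tendsto {l : ℝ} (h : Branch k f r x (Ico a c)) (hac : a < c)
    (hQ : PohozaevOn k f F (Ico a c))
    (hlim : Tendsto (pohozaev k f F r x) (𝓝[<] c) (𝓝 l)) : l ≤ pohozaev k f F r x a := by
  refine le_of_tendsto hlim ?_
  filter_upwards [Ioo_mem_nhdsLT hac] with τ hτ
  have hsub : Icc a τ ⊆ Ico a c := Icc_subset_Ico_right hτ.2
  exact (h.mono hsub).pohozaev_le hτ.1.le (hQ.mono hsub)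

theorem pohozaev_le_of_tendsto {l : ℝ} (h : Branch k f r x (Ioc a c)) (hac : a < c)
    (hQ : PohozaevOn k f F (Ioc a c))
    (hlim : Tendsto (pohozaev k f F r x) (𝓝[>] a) (𝓝 l)) : pohozaev k f F r x c ≤ l := by
  refine ge_of_tendsto hlim ?_
  filter_upwards [Ioo_mem_nhdsGT hac] with τ hτ
  have hsub : Icc τ c ⊆ Ioc a c := fun s hs => ⟨hτ.1.trans_le hs.1, hs.2⟩
  exact (h.mono hsub).pohozaev_le hτ.2.le (hQ.mono hsub)

theorem pohozaev_sub_le (h₁ : Branch k f r₁ x₁ (Icc a c)) (h₂ : Branch k f r₂ x₂ (Icc a c))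
    (hac : a ≤ c) (hQ : PohozaevOn k f F (Icc a c))
    (hm : ∀ τ ∈ Icc a c, momentum k r₁ x₁ τ ≤ momentum k r₂ x₂ τ) :
    pohozaev k f F r₂ x₂ c - pohozaev k f F r₂ x₂ a ≤
      pohozaev k f F r₁ x₁ c - pohozaev k f F r₁ x₁ a :=
  sub_le_sub_of_hasDerivAt_le hac (fun _ hτ => h₂.pohozaev_deriv hQ hτ)
    (fun _ hτ => h₁.pohozaev_deriv hQ hτ) fun τ hτ => neg_le_neg <|
      mul_le_mul_of_nonneg_left (hm τ (Ioo_subset_Icc_self hτ))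
        (sub_nonneg.2 (hQ.le_deriv τ (Ioo_subset_Icc_self hτ)))

theorem pohozaev_lt_of_tendsto {l : ℝ} (h₁ : Branch k f r₁ x₁ (Ico a c))
    (h₂ : Branch k f r₂ x₂ (Icc a c)) (hac : a < c) (hQ : PohozaevOn k f F (Icc a c))
    (hm : ∀ τ ∈ Ico a c, momentum k r₁ x₁ τ ≤ momentum k r₂ x₂ τ)
    (hP : pohozaev k f F r₂ x₂ a < pohozaev k f F r₁ x₁ a)
    (hlim : Tendsto (pohozaev k f F r₁ x₁) (𝓝[<] c) (𝓝 l)) : pohozaev k f F r₂ x₂ c < l := by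
  have hlim₂ := (h₂.pohozaev_deriv hQ (right_mem_Icc.2 hac.le)).continuousAt.tendsto.mono_left
    (nhdsWithin_le_nhds (s := Iio c))
  have := le_of_tendsto (hlim₂.sub hlim)
    (b := pohozaev k f F r₂ x₂ a - pohozaev k f F r₁ x₁ a) (by
      filter_upwards [Ioo_mem_nhdsLT hac] with τ hτ
      have hsub : Icc a τ ⊆ Ico a c := Icc_subset_Ico_right hτ.2
      have hsub' := hsub.trans Ico_subset_Icc_self
      linarith [pohozaev_sub_le (h₁.mono hsub) (h₂.mono hsub') hτ.1.le (hQ.mono hsub')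
        fun s hs => hm s (hsub hs)])
  linarith

theorem momentum_ratio_deriv (h₁ : Branch k f r₁ x₁ I) (h₂ : Branch k f r₂ x₂ I) (hτ : τ ∈ I) :
    HasDerivAt (fun t => momentum k r₂ x₂ t / momentum k r₁ x₁ t)
      (momentum k r₂ x₂ τ / momentum k r₁ x₁ τ * (f τ * (1 / x₁ τ ^ 2 - 1 / x₂ τ ^ 2))) τ := by
  have hr₁ := h₁.r_pos τ hτ
  have hx₁ := h₁.x_pos τ hτ
  have hx₂ := h₂.x_pos τ hτ
  refine ((h₂.momentum_deriv hτ).div (h₁.momentum_deriv hτ)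
    (h₁.momentum_pos hτ).ne').congr_deriv ?_
  simp only [momentum]
  field_simp
  ring

theorem momentum_ratio_deriv_nonpos (h₁ : Branch k f r₁ x₁ I) (h₂ : Branch k f r₂ x₂ I)
    (hτ : τ ∈ I) (hf : f τ ≤ 0) (hx : x₁ τ < x₂ τ) :
    momentum k r₂ x₂ τ / momentum k r₁ x₁ τ * (f τ * (1 / x₁ τ ^ 2 - 1 / x₂ τ ^ 2)) ≤ 0 := by
  have hx₁ := h₁.x_pos τ hτ
  refine mul_nonpos_of_nonneg_of_nonpos
    (div_pos (h₂.momentum_pos hτ) (h₁.momentum_pos hτ)).le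
    (mul_nonpos_of_nonpos_of_nonneg hf (sub_nonneg.2 ?_))
  gcongr

theorem momentum_ratio_antitoneOn (h₁ : Branch k f r₁ x₁ (Icc a c))
    (h₂ : Branch k f r₂ x₂ (Icc a c)) (hf : ∀ τ ∈ Icc a c, f τ ≤ 0)
    (hx : ∀ τ ∈ Ico a c, x₁ τ < x₂ τ) :
    AntitoneOn (fun t => momentum k r₂ x₂ t / momentum k r₁ x₁ t) (Icc a c) :=
  antitoneOn_of_hasDerivAt_nonpos (fun _ hτ => h₁.momentum_ratio_deriv h₂ hτ) fun τ hτ =>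
    h₁.momentum_ratio_deriv_nonpos h₂ (Ioo_subset_Icc_self hτ) (hf τ (Ioo_subset_Icc_self hτ))
      (hx τ (Ioo_subset_Ico_self hτ))

theorem pohozaev_lt_of_momentum_le (h₁ : Branch k f r₁ x₁ (Icc a c))
    (h₂ : Branch k f r₂ x₂ (Icc a c)) (hac : a ≤ c) (hQ : PohozaevOn k f F (Icc a c))
    (hf : ∀ τ ∈ Icc a c, f τ ≤ 0) (hx : ∀ τ ∈ Ico a c, x₁ τ < x₂ τ)
    (hm : momentum k r₁ x₁ c ≤ momentum k r₂ x₂ c)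
    (hP : pohozaev k f F r₂ x₂ a < pohozaev k f F r₁ x₁ a) :
    pohozaev k f F r₂ x₂ c < pohozaev k f F r₁ x₁ c := by
  have hc := right_mem_Icc.2 hac
  have hle : ∀ τ ∈ Icc a c, momentum k r₁ x₁ τ ≤ momentum k r₂ x₂ τ := fun τ hτ =>
    (one_le_div (h₁.momentum_pos hτ)).1 <| ((one_le_div (h₁.momentum_pos hc)).2 hm).trans
      (momentum_ratio_antitoneOn h₁ h₂ hf hx hτ hc hτ.2)
  linarith [pohozaev_sub_le h₁ h₂ hac hQ hle]

/-- Once the momentum of the second branch has become the smaller one, the difference of the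
functionals is no longer monotone; `P₂ - (m₂ / m₁) P₁` is. -/
theorem pohozaev_mul_momentum_lt (h₁ : Branch k f r₁ x₁ (Icc a c))
    (h₂ : Branch k f r₂ x₂ (Icc a c)) (hac : a ≤ c) (hQ : PohozaevOn k f F (Icc a c))
    (hf : ∀ τ ∈ Icc a c, f τ ≤ 0) (hP₁ : ∀ τ ∈ Icc a c, pohozaev k f F r₁ x₁ τ ≤ 0)
    (hx : ∀ τ ∈ Ico a c, x₁ τ < x₂ τ) (hma : momentum k r₁ x₁ a ≤ momentum k r₂ x₂ a)
    (hmc : momentum k r₂ x₂ c ≤ momentum k r₁ x₁ c)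
    (hP : pohozaev k f F r₂ x₂ a < pohozaev k f F r₁ x₁ a) :
    pohozaev k f F r₂ x₂ c * momentum k r₁ x₁ c <
      momentum k r₂ x₂ c * pohozaev k f F r₁ x₁ c := by
  have hS := fun τ hτ => h₁.momentum_ratio_deriv h₂ (τ := τ) hτ
  obtain ⟨p, hp, hSp⟩ := intermediate_value_Icc' hac (HasDerivAt.continuousOn hS)
    (show (1 : ℝ) ∈ _ from ⟨(div_le_one (h₁.momentum_pos (right_mem_Icc.2 hac))).2 hmc,
      (one_le_div (h₁.momentum_pos (left_mem_Icc.2 hac))).2 hma⟩)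
  have hap : Icc a p ⊆ Icc a c := Icc_subset_Icc_right hp.2
  have hpc : Icc p c ⊆ Icc a c := Icc_subset_Icc_left hp.1
  have hPp : pohozaev k f F r₂ x₂ p < pohozaev k f F r₁ x₁ p :=
    pohozaev_lt_of_momentum_le (h₁.mono hap) (h₂.mono hap) hp.1 (hQ.mono hap)
      (fun τ hτ => hf τ (hap hτ)) (fun τ hτ => hx τ ⟨hτ.1, hτ.2.trans_le hp.2⟩)
      ((one_le_div (h₁.momentum_pos hp)).1 hSp.ge) hP
  have key := antitoneOn_of_hasDerivAt_nonpos
    (fun τ hτ => (h₂.pohozaev_deriv hQ (hpc hτ)).sub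
      ((hS τ (hpc hτ)).mul (h₁.pohozaev_deriv hQ (hpc hτ)))) (fun τ hτ => ?_)
    (left_mem_Icc.2 hp.2) (right_mem_Icc.2 hp.2) hp.2
  · simp only [Pi.sub_apply, Pi.mul_apply, hSp, one_mul] at key
    rw [← lt_div_iff₀ (h₁.momentum_pos (right_mem_Icc.2 hac)), ← div_mul_eq_mul_div]
    linarith
  · have hτ' := hpc (Ioo_subset_Icc_self hτ)
    have hdrop := mul_nonneg_of_nonpos_of_nonpos
      (h₁.momentum_ratio_deriv_nonpos h₂ hτ' (hf τ hτ') (hx τ ⟨hp.1.trans hτ.1.le, hτ.2⟩))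
      (hP₁ τ hτ')
    have hcancel := div_mul_cancel₀ (momentum k r₂ x₂ τ) (h₁.momentum_pos hτ').ne'
    linear_combination
      (2 * (k + 2) * deriv (fun s => F s / f s) τ - k) * hcancel + hdrop

theorem x_lt_of_pohozaev_lt (h₁ : Branch k f r₁ x₁ (Icc a c)) (h₂ : Branch k f r₂ x₂ (Icc a c))
    (hQ : PohozaevOn k f F (Icc a c)) (hf : ∀ τ ∈ Icc a c, f τ ≤ 0)
    (hF : ∀ τ ∈ Icc a c, 0 ≤ F τ) (hP₁ : ∀ τ ∈ Icc a c, pohozaev k f F r₁ x₁ τ ≤ 0)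
    (hx : x₁ a < x₂ a) (hm : momentum k r₁ x₁ a ≤ momentum k r₂ x₂ a)
    (hP : pohozaev k f F r₂ x₂ a < pohozaev k f F r₁ x₁ a) : ∀ τ ∈ Icc a c, x₁ τ < x₂ τ := by
  refine forall_lt_of_ne_at_first_eq h₁.x_cont h₂.x_cont hx fun t ht hlt heq => ?_
  have ht' := Ioc_subset_Icc_self ht
  have hx₁ := h₁.x_pos t ht'
  have hr₁ := h₁.r_pos t ht'
  have hr₂ := h₂.r_pos t ht'
  rcases lt_or_ge (r₁ t) (r₂ t) with hr | hr
  · have hd := deriv_le_deriv_at_first_eq ht.1 (h₁.x_deriv t ht') (h₂.x_deriv t ht') hlt heq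
    have : (k + 1 : ℝ) / r₂ t < (k + 1) / r₁ t :=
      div_lt_div_of_pos_left (by positivity) hr₁ hr
    rw [heq] at hd
    linarith
  · have hle : momentum k r₂ x₂ t ≤ momentum k r₁ x₁ t := by
      simp only [momentum, heq]
      gcongr
      exact (heq ▸ hx₁).le
    have hsub : Icc a t ⊆ Icc a c := Icc_subset_Icc_right ht.2
    have hlt' := pohozaev_mul_momentum_lt (h₁.mono hsub) (h₂.mono hsub) ht.1.le (hQ.mono hsub)
      (fun τ hτ => hf τ (hsub hτ)) (fun τ hτ => hP₁ τ (hsub hτ)) hlt hm hle hP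
    have hdiff : pohozaev k f F r₂ x₂ t * momentum k r₁ x₁ t -
        momentum k r₂ x₂ t * pohozaev k f F r₁ x₁ t =
        (r₁ t - r₂ t) * (r₁ t ^ (k + 1) * r₂ t ^ (k + 1) * x₁ t * (x₁ t ^ 2 + 2 * F t)) := by
      simp only [pohozaev, momentum, levelEnergy, ← heq]
      ring
    have := mul_nonneg (sub_nonneg.2 hr) (show 0 ≤ r₁ t ^ (k + 1) * r₂ t ^ (k + 1) * x₁ t *
      (x₁ t ^ 2 + 2 * F t) by have := hF t ht'; positivity)
    linarith

theorem pohozaev_of_eq_zero (hF : F τ = 0) :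
    pohozaev k f F r x τ = -(momentum k r x τ * (r τ * x τ)) := by
  simp only [pohozaev, levelEnergy, momentum, hF]
  ring

theorem pohozaev_lt_of_eq_zero (h₁ : Branch k f r₁ x₁ I) (h₂ : Branch k f r₂ x₂ I) (hτ : τ ∈ I)
    (hF : F τ = 0) (hr : r₂ τ ≤ r₁ τ) (hm : momentum k r₁ x₁ τ < momentum k r₂ x₂ τ) :
    pohozaev k f F r₂ x₂ τ < pohozaev k f F r₁ x₁ τ := by
  have hr₁ := h₁.r_pos τ hτ
  have hr₂ := h₂.r_pos τ hτ
  have hx₁ := h₁.x_pos τ hτ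
  have hx₂ := h₂.x_pos τ hτ
  have hrx : r₁ τ * x₁ τ < r₂ τ * x₂ τ := by
    contrapose! hm
    simp only [momentum, pow_succ, mul_assoc]
    gcongr
  rw [pohozaev_of_eq_zero hF, pohozaev_of_eq_zero hF]
  exact neg_lt_neg (mul_lt_mul'' hm hrx (h₁.momentum_pos hτ).le (by positivity))

theorem pohozaev_lt_of_r_eq (h₁ : Branch k f r₁ x₁ I) (hτ : τ ∈ I) (hr : r₁ τ = r₂ τ)
    (hx : x₁ τ < x₂ τ) (hFf : 0 ≤ F τ / f τ) :
    pohozaev k f F r₂ x₂ τ < pohozaev k f F r₁ x₁ τ := by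
  have hr₁ := h₁.r_pos τ hτ
  have hx₁ := h₁.x_pos τ hτ
  have hm : 2 * (k + 2) * (F τ / f τ) * (r₁ τ ^ (k + 1) * x₁ τ) ≤
      2 * (k + 2) * (F τ / f τ) * (r₁ τ ^ (k + 1) * x₂ τ) := by gcongr
  have hE : r₁ τ ^ (k + 2) * (x₁ τ ^ 2 + 2 * F τ) <
      r₁ τ ^ (k + 2) * (x₂ τ ^ 2 + 2 * F τ) := by gcongr
  simp only [pohozaev, momentum, levelEnergy, ← hr]
  linarith

theorem return_comparison (h₁ : Branch k f r₁ x₁ (Icc a c)) (h₂ : Branch k f r₂ x₂ (Icc a c))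
    (hac : a ≤ c) (hQ : PohozaevOn k f F (Icc a c)) (hf : ∀ τ ∈ Icc a c, f τ ≤ 0)
    (hF : ∀ τ ∈ Icc a c, 0 ≤ F τ) (hFc : F c = 0)
    (hP₁ : ∀ τ ∈ Icc a c, pohozaev k f F r₁ x₁ τ ≤ 0) (hx : x₁ a < x₂ a)
    (hm : momentum k r₁ x₁ a ≤ momentum k r₂ x₂ a)
    (hP : pohozaev k f F r₂ x₂ a < pohozaev k f F r₁ x₁ a) :
    x₁ c < x₂ c ∧ (r₁ c < r₂ c ∨ (r₂ c ≤ r₁ c ∧ r₁ c * x₁ c < r₂ c * x₂ c)) := by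
  have hc := right_mem_Icc.2 hac
  have steep := x_lt_of_pohozaev_lt h₁ h₂ hQ hf hF hP₁ hx hm hP
  refine ⟨steep c hc, (lt_or_ge (r₁ c) (r₂ c)).imp_right fun hr => ⟨hr, ?_⟩⟩
  have hr₁ := h₁.r_pos c hc
  have hr₂ := h₂.r_pos c hc
  have hx₂ := h₂.x_pos c hc
  by_contra! hy
  have hmc : momentum k r₂ x₂ c ≤ momentum k r₁ x₁ c := by
    simp only [momentum, pow_succ, mul_assoc]
    gcongr
  have hlt := pohozaev_mul_momentum_lt h₁ h₂ hac hQ hf hP₁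
    (fun s hs => steep s (Ico_subset_Icc_self hs)) hm hmc hP
  rw [pohozaev_of_eq_zero hFc, pohozaev_of_eq_zero hFc] at hlt
  have := mul_le_mul_of_nonneg_left hy (mul_pos (h₁.momentum_pos hc) (h₂.momentum_pos hc)).le
  linarith

theorem not_tendsto_of_forall_r_le (h₁ : Branch k f r₁ x₁ (Ico a c))
    (h₂ : Branch k f r₂ x₂ (Ico a c)) (hac : a < c) (hf : ∀ τ ∈ Ico a c, 0 ≤ f τ)
    (hr : ∀ τ ∈ Ico a c, r₁ τ ≤ r₂ τ) (hx : ∀ τ ∈ Ico a c, x₁ τ < x₂ τ) :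
    ¬Tendsto x₂ (𝓝[<] c) (𝓝 0) := by
  intro hlim
  have hgap : x₂ a - x₁ a ≤ 0 := by
    refine ge_of_tendsto hlim ?_
    filter_upwards [Ico_mem_nhdsLT hac] with τ hτ
    have hsub : Icc a τ ⊆ Ico a c := Icc_subset_Ico_right hτ.2
    have := x_sub_le (h₁.mono hsub) (h₂.mono hsub) hτ.1 (fun s hs => hf s (hsub hs))
      (fun s hs => hr s (hsub hs)) (fun s hs => hx s (hsub hs))
    linarith [h₁.x_pos τ hτ]
  linarith [hx a (left_mem_Ico.2 hac)]

theorem radialEnergy_deriv (h : Branch k f r x I) (hτ : τ ∈ I)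
    (hF : HasDerivAt F (f τ) τ) (hE : 0 < levelEnergy F x τ) :
    HasDerivAt (radialEnergy F r x)
      (-((k * x τ ^ 2 - 2 * F τ) / (x τ * √(levelEnergy F x τ)))) τ := by
  have hr := h.r_pos τ hτ
  have hx := h.x_pos τ hτ
  have := Real.sqrt_pos.2 hE
  refine ((h.r_deriv τ hτ).mul ((h.levelEnergy_deriv hF hτ).sqrt hE.ne')).congr_deriv ?_
  field_simp
  rw [Real.sq_sqrt hE.le, levelEnergy]
  ring

theorem radialEnergy_deriv_le {x y φ : ℝ} (k : ℕ) (hx : 0 < x) (hxy : x < y) (hφ : φ ≤ 0)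
    (hE : 0 < x ^ 2 + 2 * φ) :
    (k * y ^ 2 - 2 * φ) / (y * √(y ^ 2 + 2 * φ)) ≤
      (k * x ^ 2 - 2 * φ) / (x * √(x ^ 2 + 2 * φ)) := by
  have hy : 0 < y := hx.trans hxy
  have hsq : x ^ 2 ≤ y ^ 2 := by gcongr
  have hle : √(x ^ 2 + 2 * φ) ≤ √(y ^ 2 + 2 * φ) := by gcongr
  have hsx := Real.sqrt_pos.2 hE
  have hsy := hsx.trans_le hle
  have hcross : y * √(x ^ 2 + 2 * φ) ≤ x * √(y ^ 2 + 2 * φ) := by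
    refine (pow_le_pow_iff_left₀ (by positivity) (by positivity) two_ne_zero).1 ?_
    rw [mul_pow, mul_pow, Real.sq_sqrt hE.le, Real.sq_sqrt (by linarith)]
    nlinarith
  have hkinetic : k * y / √(y ^ 2 + 2 * φ) ≤ k * x / √(x ^ 2 + 2 * φ) := by
    rw [div_le_div_iff₀ hsy hsx, mul_assoc, mul_assoc]
    gcongr
  have hpotential : -(2 * φ) / (y * √(y ^ 2 + 2 * φ)) ≤ -(2 * φ) / (x * √(x ^ 2 + 2 * φ)) := by
    gcongr
    linarith
  have hsplit : ∀ z : ℝ, 0 < z → 0 < √(z ^ 2 + 2 * φ) →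
      (k * z ^ 2 - 2 * φ) / (z * √(z ^ 2 + 2 * φ)) =
        k * z / √(z ^ 2 + 2 * φ) + -(2 * φ) / (z * √(z ^ 2 + 2 * φ)) := fun z _ _ => by
    field_simp
    ring
  rw [hsplit y hy hsy, hsplit x hx hsx]
  gcongr

theorem radialEnergy_comparison (h₁ : Branch k f r₁ x₁ (Icc a c))
    (h₂ : Branch k f r₂ x₂ (Icc a c)) (hF : ∀ τ, HasDerivAt F (f τ) τ)
    (hF0 : ∀ τ ∈ Icc a c, F τ ≤ 0) (hE₁ : ∀ τ ∈ Icc a c, 0 < levelEnergy F x₁ τ)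
    (hE₂ : ∀ τ ∈ Icc a c, 0 < levelEnergy F x₂ τ) (hr : r₂ a ≤ r₁ a)
    (hW : radialEnergy F r₁ x₁ a < radialEnergy F r₂ x₂ a) (hac : a ≤ c) :
    radialEnergy F r₂ x₂ a - radialEnergy F r₁ x₁ a ≤
      radialEnergy F r₂ x₂ c - radialEnergy F r₁ x₁ c := by
  refine (steeper_comparison h₁ h₂ (fun τ hτ => h₁.radialEnergy_deriv hτ (hF τ) (hE₁ τ hτ))
    (fun τ hτ => h₂.radialEnergy_deriv hτ (hF τ) (hE₂ τ hτ)) (fun τ hτ hrτ hlt => ?_)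
    (fun τ hτ _ hx => neg_le_neg <|
      radialEnergy_deriv_le k (h₁.x_pos τ hτ) hx (hF0 τ hτ) (hE₁ τ hτ))
    hr hW c (right_mem_Icc.2 hac)).2.2
  have hr₁ := h₁.r_pos τ hτ
  have hx₂ := h₂.x_pos τ hτ
  contrapose! hlt
  simp only [radialEnergy, levelEnergy]
  gcongr

theorem r_le_mul_exp (h : Branch k f r x (Icc a c)) (hac : a ≤ c) {g : ℝ} (hg : 0 < g)
    (hgx : ∀ τ ∈ Icc a c, g ≤ r τ * x τ) : r c ≤ r a * Real.exp (g⁻¹ * (c - a)) := by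
  refine le_mul_exp_of_hasDerivAt_le_mul hac h.r_deriv fun τ hτ => ?_
  have hτ' := Ico_subset_Icc_self hτ
  rw [inv_mul_eq_div, div_le_div_iff₀ (h.x_pos τ hτ') hg, one_mul]
  exact hgx τ hτ'

theorem not_tendsto_of_le_radialEnergy (h : Branch k f r x (Ico a c)) (hac : a < c)
    (hF0 : ∀ τ ∈ Ico a c, F τ ≤ 0) {g : ℝ} (hg : 0 < g)
    (hgap : ∀ τ ∈ Ico a c, g ≤ radialEnergy F r x τ) :
    ¬Tendsto (levelEnergy F x) (𝓝[<] c) (𝓝 0) := by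
  intro hlim
  have hgx : ∀ τ ∈ Ico a c, g ≤ r τ * x τ := fun τ hτ => by
    refine (hgap τ hτ).trans (mul_le_mul_of_nonneg_left ?_ (h.r_pos τ hτ).le)
    rw [Real.sqrt_le_left (h.x_pos τ hτ).le, levelEnergy]
    linarith [hF0 τ hτ]
  have ha := h.r_pos a (left_mem_Ico.2 hac)
  obtain ⟨R, hR⟩ : ∃ R, ∀ τ ∈ Ico a c, r τ ≤ R := by
    refine ⟨r a * Real.exp (g⁻¹ * (c - a)), fun τ hτ => ?_⟩
    have hsub : Icc a τ ⊆ Ico a c := Icc_subset_Ico_right hτ.2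
    refine ((h.mono hsub).r_le_mul_exp hτ.1 hg fun s hs => hgx s (hsub hs)).trans ?_
    have := hτ.2.le
    gcongr
  have hRlim : Tendsto (fun τ => R * √(levelEnergy F x τ)) (𝓝[<] c) (𝓝 0) := by
    simpa using hlim.sqrt.const_mul R
  refine hg.not_ge (ge_of_tendsto hRlim ?_)
  filter_upwards [Ico_mem_nhdsLT hac] with τ hτ
  exact (hgap τ hτ).trans (mul_le_mul_of_nonneg_right (hR τ hτ) (Real.sqrt_nonneg _))

theorem not_tendsto_of_radialEnergy_lt (h₁ : Branch k f r₁ x₁ (Ico a c))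
    (h₂ : Branch k f r₂ x₂ (Ico a c)) (hac : a < c) (hF : ∀ τ, HasDerivAt F (f τ) τ)
    (hF0 : ∀ τ ∈ Ico a c, F τ ≤ 0) (hE₁ : ∀ τ ∈ Ico a c, 0 < levelEnergy F x₁ τ)
    (hE₂ : ∀ τ ∈ Ico a c, 0 < levelEnergy F x₂ τ) (hr : r₂ a ≤ r₁ a)
    (hW : radialEnergy F r₁ x₁ a < radialEnergy F r₂ x₂ a) :
    ¬Tendsto (levelEnergy F x₂) (𝓝[<] c) (𝓝 0) := by
  refine h₂.not_tendsto_of_le_radialEnergy hac hF0 (sub_pos.2 hW) fun τ hτ => ?_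
  have hsub : Icc a τ ⊆ Ico a c := Icc_subset_Ico_right hτ.2
  have hgap := radialEnergy_comparison (h₁.mono hsub) (h₂.mono hsub) hF
    (fun s hs => hF0 s (hsub hs)) (fun s hs => hE₁ s (hsub hs)) (fun s hs => hE₂ s (hsub hs))
    hr hW hτ.1
  have : 0 ≤ radialEnergy F r₁ x₁ τ := mul_nonneg (h₁.r_pos τ hτ).le (Real.sqrt_nonneg _)
  linarith

theorem not_tendsto_of_r_lt_of_x_lt (h₁ : Branch k f r₁ x₁ (Ico a c))
    (h₂ : Branch k f r₂ x₂ (Ico a c)) (hF : ∀ τ, HasDerivAt F (f τ) τ)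
    (hF0 : ∀ τ ∈ Ico a c, F τ ≤ 0) (hf : Continuous f) (hd : d ∈ Ico a c)
    (hfd : ∀ τ ∈ Ico d c, 0 ≤ f τ) (hE₁ : ∀ τ ∈ Ico a c, 0 < levelEnergy F x₁ τ)
    (hE₂ : ∀ τ ∈ Ico a c, 0 < levelEnergy F x₂ τ) (hr : r₁ a < r₂ a) (hx : x₁ a < x₂ a)
    (hlim : Tendsto (levelEnergy F x₂) (𝓝[<] c) (𝓝 0)) : ¬Tendsto x₂ (𝓝[<] c) (𝓝 0) := by
  rcases forall_r_lt_or_exists_eq h₁ h₂ hr with hall | ⟨q, hq, hrq, hle⟩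
  · have steep : ∀ τ ∈ Ico a c, x₁ τ < x₂ τ := fun τ hτ => by
      have hsub : Icc a τ ⊆ Ico a c := Icc_subset_Ico_right hτ.2
      exact x_lt_of_r_le (h₁.mono hsub) (h₂.mono hsub) hf.continuousOn
        (fun s hs => (hall s (hsub hs)).le) hx τ (right_mem_Icc.2 hτ.1)
    have hsub : Ico d c ⊆ Ico a c := Ico_subset_Ico_left hd.1
    exact not_tendsto_of_forall_r_le (h₁.mono hsub) (h₂.mono hsub) hd.2 hfd
      (fun s hs => (hall s (hsub hs)).le) (fun s hs => steep s (hsub hs))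
  · have hsub : Icc a q ⊆ Ico a c := Icc_subset_Ico_right hq.2
    have hsub' : Ico q c ⊆ Ico a c := Ico_subset_Ico_left hq.1
    have hxq := x_lt_of_r_le (h₁.mono hsub) (h₂.mono hsub) hf.continuousOn hle hx q
      (right_mem_Icc.2 hq.1)
    have hW : radialEnergy F r₁ x₁ q < radialEnergy F r₂ x₂ q := by
      have hx₁ := h₁.x_pos q hq
      have hr₂ := h₂.r_pos q hq
      have hE := (hE₁ q hq).le
      simp only [radialEnergy, hrq]
      simp only [levelEnergy] at hE ⊢
      gcongr
    exact absurd hlim <| not_tendsto_of_radialEnergy_lt (h₁.mono hsub') (h₂.mono hsub') hq.2 hF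
      (fun s hs => hF0 s (hsub' hs)) (fun s hs => hE₁ s (hsub' hs))
      (fun s hs => hE₂ s (hsub' hs)) hrq.ge hW

theorem mul_deriv_sub_add_le {C D : ℝ} (h₁ : Branch k f r₁ x₁ I) (h₂ : Branch k f r₂ x₂ I)
    (hτ : τ ∈ I) (hC : |f τ / (x₁ τ * x₂ τ)| ≤ C)
    (hD : |(k + 1) / (r₁ τ * r₂ τ) - 1 / (x₁ τ * x₂ τ)| ≤ D) :
    (r₂ τ - r₁ τ) * (1 / x₂ τ - 1 / x₁ τ) + (x₂ τ - x₁ τ) *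
        (-((k + 1) / r₂ τ) - f τ / x₂ τ - (-((k + 1) / r₁ τ) - f τ / x₁ τ)) ≤
      (C + D) * ((r₂ τ - r₁ τ) ^ 2 + (x₂ τ - x₁ τ) ^ 2) := by
  have hr₁ := h₁.r_pos τ hτ
  have hr₂ := h₂.r_pos τ hτ
  have hx₁ := h₁.x_pos τ hτ
  have hx₂ := h₂.x_pos τ hτ
  set u := r₂ τ - r₁ τ with hu
  set v := x₂ τ - x₁ τ with hv
  have huv := abs_mul_le_sq_add_sq u v
  have hv2 : v ^ 2 ≤ u ^ 2 + v ^ 2 := le_add_of_nonneg_left (sq_nonneg u)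
  calc _ = f τ / (x₁ τ * x₂ τ) * v ^ 2 +
        ((k + 1) / (r₁ τ * r₂ τ) - 1 / (x₁ τ * x₂ τ)) * (u * v) := by
        rw [hu, hv]
        field_simp
        ring
    _ ≤ |f τ / (x₁ τ * x₂ τ)| * v ^ 2 +
        |(k + 1) / (r₁ τ * r₂ τ) - 1 / (x₁ τ * x₂ τ)| * |u * v| := by
        rw [← abs_mul]
        gcongr <;> exact le_abs_self _
    _ ≤ C * (u ^ 2 + v ^ 2) + D * (u ^ 2 + v ^ 2) := by
        have := (abs_nonneg _).trans hC
        have := (abs_nonneg _).trans hD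
        gcongr
    _ = (C + D) * (u ^ 2 + v ^ 2) := by ring

theorem eqOn_of_eq (h₁ : Branch k f r₁ x₁ (Icc a c)) (h₂ : Branch k f r₂ x₂ (Icc a c))
    (hf : ContinuousOn f (Icc a c)) (hr : r₁ a = r₂ a) (hx : x₁ a = x₂ a) :
    EqOn r₁ r₂ (Icc a c) ∧ EqOn x₁ x₂ (Icc a c) := by
  obtain ⟨C, hC⟩ := h₁.exists_abs_div_mul_le h₂ hf
  have hcont : ContinuousOn (fun τ => (k + 1) / (r₁ τ * r₂ τ) - 1 / (x₁ τ * x₂ τ)) (Icc a c) :=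
    (continuousOn_const.div (h₁.r_cont.mul h₂.r_cont) fun τ hτ =>
      (mul_pos (h₁.r_pos τ hτ) (h₂.r_pos τ hτ)).ne').sub
      (continuousOn_const.div (h₁.x_cont.mul h₂.x_cont) fun τ hτ =>
        (mul_pos (h₁.x_pos τ hτ) (h₂.x_pos τ hτ)).ne')
  obtain ⟨D, hD⟩ := isCompact_Icc.exists_bound_of_continuousOn hcont
  have hIoc : Ioc a c ⊆ Icc a c := Ioc_subset_Icc_self
  have hzero : ∀ τ ∈ Ioc a c, r₂ τ - r₁ τ = 0 ∧ x₂ τ - x₁ τ = 0 := fun τ hτ => by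
    have ha : a ∈ Icc a c := left_mem_Icc.2 (hτ.1.le.trans hτ.2)
    exact eq_zero_of_mul_deriv_add_le
      (fun t ht => (h₂.r_deriv t (hIoc ht)).sub (h₁.r_deriv t (hIoc ht)))
      (fun t ht => (h₂.x_deriv t (hIoc ht)).sub (h₁.x_deriv t (hIoc ht)))
      (fun t ht => mul_deriv_sub_add_le h₁ h₂ (hIoc ht) (hC t (hIoc ht)) (hD t (hIoc ht)))
      (tendsto_sub_nhdsGT_of_eq (h₁.r_deriv a ha).continuousAt (h₂.r_deriv a ha).continuousAt hr)
      (tendsto_sub_nhdsGT_of_eq (h₁.x_deriv a ha).continuousAt (h₂.x_deriv a ha).continuousAt hx)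
      τ hτ
  have heq : ∀ τ ∈ Icc a c, r₁ τ = r₂ τ ∧ x₁ τ = x₂ τ := fun τ hτ => by
    rcases hτ.1.eq_or_lt with rfl | haτ
    · exact ⟨hr, hx⟩
    · obtain ⟨hu, hv⟩ := hzero τ ⟨haτ, hτ.2⟩
      exact ⟨(sub_eq_zero.1 hu).symm, (sub_eq_zero.1 hv).symm⟩
  exact ⟨fun τ hτ => (heq τ hτ).1, fun τ hτ => (heq τ hτ).2⟩

theorem tendsto_pohozaev {l : Filter ℝ} {R : ℝ} (hl : l ≤ 𝓝 c) (hF : ContinuousAt F c)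
    (hFf : ContinuousAt (fun s => F s / f s) c) (hr : Tendsto r l (𝓝 R))
    (hx : Tendsto x l (𝓝 0)) :
    Tendsto (pohozaev k f F r x) l (𝓝 (-(R ^ (k + 2) * (2 * F c)))) := by
  have := (((hFf.tendsto.mono_left hl).const_mul (2 * (k + 2 : ℝ))).mul
    ((hr.pow (k + 1)).mul hx)).neg.sub
    ((hr.pow (k + 2)).mul ((hx.pow 2).add ((hF.tendsto.mono_left hl).const_mul 2)))
  rw [show -(R ^ (k + 2) * (2 * F c)) = -(2 * (k + 2) * (F c / f c) * (R ^ (k + 1) * 0)) -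
    R ^ (k + 2) * (0 ^ 2 + 2 * F c) by ring]
  exact this

theorem r_le_and_x_lt_of_tendsto (h₁ : Branch k f r₁ x₁ (Ioc a c)) (h₂ : Branch k f r₂ x₂ (Icc a c))
    (hf : ContinuousOn f (Icc a c)) (hac : a < c) (hr : ∀ τ ∈ Ioo a c, r₁ τ < r₂ τ)
    (hx : Tendsto x₁ (𝓝[>] a) (𝓝 0)) : r₁ c ≤ r₂ c ∧ x₁ c < x₂ c := by
  have hrc : r₁ c ≤ r₂ c := by
    refine le_of_tendsto_of_tendsto (b := 𝓝[<] c)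
      ((h₁.r_deriv c (right_mem_Ioc.2 hac)).continuousAt.tendsto.mono_left nhdsWithin_le_nhds)
      ((h₂.r_deriv c (right_mem_Icc.2 hac.le)).continuousAt.tendsto.mono_left nhdsWithin_le_nhds) ?_
    filter_upwards [Ioo_mem_nhdsLT hac] with τ hτ using (hr τ hτ).le
  have ha : a ∈ Icc a c := left_mem_Icc.2 hac.le
  obtain ⟨τ, hxτ, hτ⟩ := ((hx.eventually_lt
    ((h₂.x_deriv a ha).continuousAt.tendsto.mono_left nhdsWithin_le_nhds)
    (h₂.x_pos a ha)).and (Ioo_mem_nhdsGT hac)).exists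
  have hsub : Icc τ c ⊆ Ioc a c := fun s hs => ⟨hτ.1.trans_le hs.1, hs.2⟩
  have hsub' := hsub.trans Ioc_subset_Icc_self
  refine ⟨hrc, x_lt_of_r_le (h₁.mono hsub) (h₂.mono hsub') (hf.mono hsub') (fun s hs => ?_) hxτ c
    (right_mem_Icc.2 hτ.2.le)⟩
  rcases hs.2.eq_or_lt with rfl | hsc
  · exact hrc
  · exact (hr s ⟨hτ.1.trans_le hs.1, hsc⟩).le

theorem exists_ordered_of_tendsto {R : ℝ} (h₂ : Branch k f r₂ x₂ (Icc a c)) (hac : a < c)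
    (hQ : PohozaevOn k f F (Icc a c)) (hr : Tendsto r₁ (𝓝[>] a) (𝓝 R))
    (hx : Tendsto x₁ (𝓝[>] a) (𝓝 0))
    (hP : pohozaev k f F r₂ x₂ a < -(R ^ (k + 2) * (2 * F a))) :
    ∃ τ ∈ Ioo a c, x₁ τ < x₂ τ ∧ momentum k r₁ x₁ τ < momentum k r₂ x₂ τ ∧
      pohozaev k f F r₂ x₂ τ < pohozaev k f F r₁ x₁ τ := by
  have ha : a ∈ Icc a c := left_mem_Icc.2 hac.le
  have hm : Tendsto (momentum k r₁ x₁) (𝓝[>] a) (𝓝 0) := by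
    have := (hr.pow (k + 1)).mul hx
    rwa [mul_zero] at this
  have hP₁ := tendsto_pohozaev (k := k) (f := f) nhdsWithin_le_nhds
    (hQ.hasDerivAt a ha).continuousAt (hQ.differentiableAt a ha).continuousAt hr hx
  have right {g : ℝ → ℝ} {g' : ℝ} (hg : HasDerivAt g g' a) : Tendsto g (𝓝[>] a) (𝓝 (g a)) :=
    hg.continuousAt.tendsto.mono_left nhdsWithin_le_nhds
  have hIoo : ∀ᶠ τ in 𝓝[>] a, τ ∈ Ioo a c := Ioo_mem_nhdsGT hac
  obtain ⟨τ, hτ, hxτ, hmτ, hPτ⟩ := (hIoo.and <|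
    (hx.eventually_lt (right (h₂.x_deriv a ha)) (h₂.x_pos a ha)).and <|
    (hm.eventually_lt (right (h₂.momentum_deriv ha)) (h₂.momentum_pos ha)).and <|
    (right (h₂.pohozaev_deriv hQ ha)).eventually_lt hP₁ hP).exists
  exact ⟨τ, hτ, hxτ, hmτ, hPτ⟩

end Branch

/-- `w` solves the radial equation in dimension `k + 2` on `(0, ∞)`, with `w' = p`. -/
structure Sol (k : ℕ) (f w p : ℝ → ℝ) : Prop where
  w_deriv : ∀ t, 0 < t → HasDerivAt w (p t) t
  p_deriv : ∀ t, 0 < t → HasDerivAt p (-((k + 1) / t * p t) - f (w t)) t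

/-- The weighted Wronskian of `w₁ - β` and `w₂ - β`, in dimension `k + 2`. -/
def wronskian (k : ℕ) (β : ℝ) (w₁ p₁ w₂ p₂ : ℝ → ℝ) (t : ℝ) : ℝ :=
  t ^ (k + 1) * (p₁ t * (w₂ t - β) - (w₁ t - β) * p₂ t)

namespace Sol

variable {k : ℕ} {f w p w₁ p₁ w₂ p₂ : ℝ → ℝ} {s t t₀ t₁ β M ε : ℝ}

theorem neg (h : Sol k f w p) (hodd : ∀ s, f (-s) = -f s) : Sol k f (-w) (-p) :=
  ⟨fun t ht => (h.w_deriv t ht).neg, fun t ht =>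
    (h.p_deriv t ht).neg.congr_deriv (by simp only [Pi.neg_apply, hodd]; ring)⟩

theorem w_cont (h : Sol k f w p) : ContinuousOn w (Ioi 0) := HasDerivAt.continuousOn h.w_deriv

theorem p_cont (h : Sol k f w p) : ContinuousOn p (Ioi 0) := HasDerivAt.continuousOn h.p_deriv

theorem pow_mul_p_deriv (h : Sol k f w p) (ht : 0 < t) :
    HasDerivAt (fun s => s ^ (k + 1) * p s) (-(t ^ (k + 1) * f (w t))) t := by
  refine ((hasDerivAt_pow (k + 1) t).mul (h.p_deriv t ht)).congr_deriv ?_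
  simp only [Nat.add_sub_cancel]
  push_cast
  field_simp
  ring

theorem wronskian_deriv (h₁ : Sol k f w₁ p₁) (h₂ : Sol k f w₂ p₂) (ht : 0 < t) :
    HasDerivAt (wronskian k β w₁ p₁ w₂ p₂)
      (t ^ (k + 1) * (f (w₂ t) * (w₁ t - β) - f (w₁ t) * (w₂ t - β))) t := by
  have hd := ((h₁.pow_mul_p_deriv ht).mul ((h₂.w_deriv t ht).sub_const β)).sub
    (((h₁.w_deriv t ht).sub_const β).mul (h₂.pow_mul_p_deriv ht))
  refine (hd.congr_deriv (by ring)).congr_of_eventuallyEq (.of_forall fun s => ?_)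
  simp only [wronskian, Pi.sub_apply, Pi.mul_apply]
  ring

theorem wronskian_nonpos (h₁ : Sol k f w₁ p₁) (h₂ : Sol k f w₂ p₂) (ht₀ : 0 ≤ t₀)
    (hf : ∀ t ∈ Ioo t₀ t₁, f (w₂ t) * (w₁ t - β) ≤ f (w₁ t) * (w₂ t - β)) {l : ℝ} (hl : l ≤ 0)
    (hlim : Tendsto (wronskian k β w₁ p₁ w₂ p₂) (𝓝[>] t₀) (𝓝 l)) :
    ∀ t ∈ Ioo t₀ t₁, wronskian k β w₁ p₁ w₂ p₂ t ≤ 0 := by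
  refine fun t ht => (ge_of_tendsto hlim ?_).trans hl
  filter_upwards [Ioc_mem_nhdsGT ht.1] with s hs
  have hs0 : 0 < s := ht₀.trans_lt hs.1
  refine antitoneOn_of_hasDerivAt_nonpos (a := s) (c := t)
    (fun q hq => h₁.wronskian_deriv h₂ (hs0.trans_le hq.1)) (fun q hq => ?_)
    (left_mem_Icc.2 hs.2) (right_mem_Icc.2 hs.2) hs.2
  exact mul_nonpos_of_nonneg_of_nonpos (pow_pos (hs0.trans hq.1) _).le
    (sub_nonpos.2 (hf q ⟨hs.1.trans hq.1, hq.2.trans ht.2⟩))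

theorem lt_of_wronskian_nonpos (h₁ : Sol k f w₁ p₁) (h₂ : Sol k f w₂ p₂) (ht₀ : 0 ≤ t₀)
    (c₁ : ContinuousOn w₁ (Icc t₀ t₁)) (c₂ : ContinuousOn w₂ (Icc t₀ t₁))
    (hβ : ∀ t ∈ Icc t₀ t₁, β < w₁ t) (h0 : w₁ t₀ < w₂ t₀) {l : ℝ} (hl : l ≤ 0)
    (hlim : Tendsto (wronskian k β w₁ p₁ w₂ p₂) (𝓝[>] t₀) (𝓝 l))
    (hf : ∀ s t, β < s → s ≤ t → f t * (s - β) ≤ f s * (t - β)) :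
    ∀ t ∈ Icc t₀ t₁, w₁ t < w₂ t := by
  refine forall_lt_of_ne_at_first_eq c₁ c₂ h0 fun t ht hlt heq => ?_
  have hsub : Icc t₀ t ⊆ Icc t₀ t₁ := Icc_subset_Icc_right ht.2
  have hW := h₁.wronskian_nonpos h₂ ht₀ (t₁ := t) (fun s hs =>
    hf _ _ (hβ s (hsub (Ioo_subset_Icc_self hs))) (hlt s (Ioo_subset_Ico_self hs)).le) hl hlim
  have hβ₂ : ∀ s ∈ Icc t₀ t, 0 < w₂ s - β := fun s hs => by
    have := hβ s (hsub hs)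
    rcases hs.2.eq_or_lt with rfl | hst
    · linarith
    · linarith [hlt s ⟨hs.1, hst⟩]
  have hmono := le_of_hasDerivAt_nonneg (g := fun s => (β - w₁ s) / (w₂ s - β)) ht.1.le
    ((continuousOn_const.sub (c₁.mono hsub)).div ((c₂.mono hsub).sub continuousOn_const)
      fun s hs => (hβ₂ s hs).ne')
    (fun s hs => ((h₁.w_deriv s (ht₀.trans_lt hs.1)).const_sub β).div
      ((h₂.w_deriv s (ht₀.trans_lt hs.1)).sub_const β) (hβ₂ s (Ioo_subset_Icc_self hs)).ne')
    fun s hs => by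
      have := nonpos_of_mul_nonpos_right (hW s hs) (pow_pos (ht₀.trans_lt hs.1) _)
      exact div_nonneg (by linarith) (sq_nonneg _)
  have hm := hβ₂ t₀ (left_mem_Icc.2 ht.1.le)
  have hquot : (β - w₁ t) / (w₂ t - β) = -1 := by
    rw [heq, ← neg_sub, neg_div, div_self (hβ₂ t (right_mem_Icc.2 ht.1.le)).ne']
  simp only [hquot, div_le_iff₀ hm] at hmono
  linarith

theorem eqOn_of_tendsto (h₁ : Sol k f w₁ p₁) (h₂ : Sol k f w₂ p₂) (ht₀ : 0 ≤ t₀) {L : ℝ}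
    (hL : 0 ≤ L) (hf : ∀ t ∈ Ioc t₀ t₁, |f (w₂ t) - f (w₁ t)| ≤ L * |w₂ t - w₁ t|)
    (hw : Tendsto (fun t => w₂ t - w₁ t) (𝓝[>] t₀) (𝓝 0))
    (hp : Tendsto (fun t => p₂ t - p₁ t) (𝓝[>] t₀) (𝓝 0)) :
    ∀ t ∈ Ioc t₀ t₁, w₁ t = w₂ t ∧ p₁ t = p₂ t := by
  have hpos : ∀ t ∈ Ioc t₀ t₁, 0 < t := fun t ht => ht₀.trans_lt ht.1
  have hzero := eq_zero_of_mul_deriv_add_le (C := 1 + L)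
    (fun t ht => (h₂.w_deriv t (hpos t ht)).sub (h₁.w_deriv t (hpos t ht)))
    (fun t ht => (h₂.p_deriv t (hpos t ht)).sub (h₁.p_deriv t (hpos t ht)))
    (fun t ht => ?_) hw hp
  · exact fun t ht => (hzero t ht).imp (fun h => (sub_eq_zero.1 h).symm)
      fun h => (sub_eq_zero.1 h).symm
  simp only [Pi.sub_apply]
  set u := w₂ t - w₁ t
  set v := p₂ t - p₁ t with hv
  have huv : |u * v| ≤ u ^ 2 + v ^ 2 := abs_mul_le_sq_add_sq u v
  have hforce : -(v * (f (w₂ t) - f (w₁ t))) ≤ L * |u * v| :=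
    calc _ ≤ |v| * |f (w₂ t) - f (w₁ t)| := (neg_le_abs _).trans (abs_mul _ _).le
      _ ≤ |v| * (L * |u|) := by gcongr; exact hf t ht
      _ = L * |u * v| := by rw [abs_mul]; ring
  have hfriction : 0 ≤ (k + 1) / t * v ^ 2 := by have := hpos t ht; positivity
  calc _ = u * v - (k + 1) / t * v ^ 2 + -(v * (f (w₂ t) - f (w₁ t))) := by rw [hv]; ring
    _ ≤ |u * v| + L * |u * v| := by linarith [le_abs_self (u * v)]
    _ = (1 + L) * |u * v| := by ring
    _ ≤ (1 + L) * (u ^ 2 + v ^ 2) := by gcongr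

theorem exists_abs_mul_p_le (h : Sol k f w p) (hw : ContinuousWithinAt w (Ici 0) 0)
    (hε : 0 < ε) (ht : 0 < t) : ∃ ξ ∈ Ioo 0 t, |ξ * p ξ| ≤ ε := by
  have hosc : Tendsto (fun s => w s - w (s / 2)) (𝓝[>] 0) (𝓝 0) := by
    have hhalf : Tendsto (fun s : ℝ => s / 2) (𝓝[>] 0) (𝓝[≥] 0) :=
      tendsto_nhdsWithin_iff.2 ⟨((continuous_id.div_const 2).tendsto' 0 0 (zero_div 2)).mono_left
        nhdsWithin_le_nhds, eventually_mem_nhdsWithin.mono fun s hs => (half_pos (mem_Ioi.1 hs)).le⟩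
    simpa using (hw.tendsto.mono_left (nhdsWithin_mono _ Ioi_subset_Ici_self)).sub
      (hw.tendsto.comp hhalf)
  obtain ⟨s, hs, hst⟩ := ((hosc.eventually (Metric.closedBall_mem_nhds 0 (half_pos hε))).and
    (Ioc_mem_nhdsGT ht)).exists
  rw [Real.dist_0_eq_abs] at hs
  have hs0 : 0 < s / 2 := half_pos hst.1
  obtain ⟨ξ, hξ, hslope⟩ := exists_hasDerivAt_eq_slope w p (half_lt_self hst.1)
    (h.w_cont.mono fun y hy => hs0.trans_le hy.1) fun y hy => h.w_deriv y (hs0.trans hy.1)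
  have hξ0 : 0 < ξ := hs0.trans hξ.1
  refine ⟨ξ, ⟨hξ0, hξ.2.trans_le hst.2⟩, ?_⟩
  rw [hslope, sub_half, abs_mul, abs_div, abs_of_pos hξ0, abs_of_pos hs0, mul_div_assoc',
    div_le_iff₀ hs0]
  calc ξ * |w s - w (s / 2)| ≤ s * (ε / 2) := by
        have := hst.1.le
        gcongr
        exact hξ.2.le
    _ = ε * (s / 2) := by ring

theorem abs_pow_mul_p_le (h : Sol k f w p) (hs : 0 < s) (hst : s ≤ t)
    (hM : ∀ y ∈ Icc s t, |f (w y)| ≤ M) :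
    |t ^ (k + 1) * p t| ≤ |s ^ (k + 1) * p s| + M * t ^ (k + 1) * t := by
  have hM0 : 0 ≤ M := (abs_nonneg _).trans (hM s (left_mem_Icc.2 hst))
  have hvar := norm_image_sub_le_of_norm_deriv_le_segment' (C := M * t ^ (k + 1))
    (fun y hy => (h.pow_mul_p_deriv (hs.trans_le hy.1)).hasDerivWithinAt) (fun y hy => ?_) t
    (right_mem_Icc.2 hst)
  · have := abs_sub_abs_le_abs_sub (t ^ (k + 1) * p t) (s ^ (k + 1) * p s)
    have : M * t ^ (k + 1) * (t - s) ≤ M * t ^ (k + 1) * t := by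
      have := pow_pos (hs.trans_le hst) (k + 1)
      gcongr
      linarith
    rw [Real.norm_eq_abs] at hvar
    linarith
  · have hy0 := hs.trans_le hy.1
    rw [norm_neg, norm_mul, mul_comm, Real.norm_of_nonneg (pow_pos hy0 _).le]
    gcongr
    exacts [hM y (Ico_subset_Icc_self hy), hy.2.le]

theorem abs_p_le (h : Sol k f w p) (hw : ContinuousWithinAt w (Ici 0) 0) (ht : t ∈ Ioc 0 1)
    (hM : ∀ y ∈ Ioc 0 t, |f (w y)| ≤ M) : |p t| ≤ M * t := by
  have hmom : |t ^ (k + 1) * p t| ≤ M * t ^ (k + 1) * t := by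
    refine le_of_forall_pos_le_add fun ε hε => ?_
    obtain ⟨ξ, hξ, hsmall⟩ := h.exists_abs_mul_p_le hw hε ht.1
    have hvar := h.abs_pow_mul_p_le hξ.1 hξ.2.le fun y hy => hM y ⟨hξ.1.trans_le hy.1, hy.2⟩
    have hpow : |ξ ^ (k + 1) * p ξ| ≤ |ξ * p ξ| := by
      rw [abs_mul, abs_mul, abs_of_pos hξ.1, abs_of_pos (pow_pos hξ.1 _)]
      gcongr
      exact pow_le_of_le_one hξ.1.le (hξ.2.le.trans ht.2) (Nat.succ_ne_zero k)
    linarith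
  have hpos : 0 < t ^ (k + 1) := pow_pos ht.1 _
  rw [abs_mul, abs_of_pos hpos] at hmom
  exact le_of_mul_le_mul_left (hmom.trans_eq (by ring)) hpos

theorem tendsto_p_zero (h : Sol k f w p) (hf : Continuous f) (hw : ContinuousOn w (Ici 0)) :
    Tendsto p (𝓝[>] 0) (𝓝 0) := by
  obtain ⟨M, hM⟩ := (isCompact_Icc (a := (0 : ℝ)) (b := 1)).exists_bound_of_continuousOn
    (hf.comp_continuousOn (hw.mono Icc_subset_Ici_self))
  refine squeeze_zero_norm' (a := fun t => M * t) ?_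
    ((Continuous.tendsto' (by fun_prop) _ _ (mul_zero M)).mono_left nhdsWithin_le_nhds)
  filter_upwards [Ioc_mem_nhdsGT zero_lt_one] with t ht
  exact h.abs_p_le (hw 0 self_mem_Ici) ht fun y hy => hM y ⟨hy.1.le, hy.2.trans ht.2⟩

end Sol

section Primitive

variable {f : ℝ → ℝ}

theorem hasDerivAt_Fint (hf : Continuous f) (s : ℝ) : HasDerivAt (Fint f) (f s) s :=
  hf.integral_hasStrictDerivAt 0 s |>.hasDerivAt

theorem Fint_zero (f : ℝ → ℝ) : Fint f 0 = 0 := intervalIntegral.integral_same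

theorem Fint_neg (hodd : ∀ s, f (-s) = -f s) (s : ℝ) : Fint f (-s) = Fint f s := by
  have h := intervalIntegral.integral_comp_neg (a := 0) (b := s) f
  rw [neg_zero, intervalIntegral.integral_symm 0 (-s)] at h
  simp only [hodd, intervalIntegral.integral_neg] at h
  exact (neg_injective h).symm

theorem Fint_abs (hodd : ∀ s, f (-s) = -f s) (s : ℝ) : Fint f |s| = Fint f s := by
  rcases abs_choice s with h | h <;> rw [h]
  exact Fint_neg hodd s

theorem hasDerivAt_div_of_eq_zero {g h : ℝ → ℝ} {g' a : ℝ} (hg : HasDerivAt g g' a)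
    (hga : g a = 0) (hh : ContinuousAt h a) (hha : h a ≠ 0) :
    HasDerivAt (fun s => g s / h s) (g' / h a) a := by
  refine hasDerivAt_iff_tendsto_slope.2 (((hasDerivAt_iff_tendsto_slope.1 hg).div
    (hh.tendsto.mono_left nhdsWithin_le_nhds) hha).congr fun s => ?_)
  rw [Pi.div_apply, slope_def_field, slope_def_field, hga, zero_div, sub_zero, sub_zero]
  exact div_right_comm _ _ _

theorem PohozaevOn.neg {k : ℕ} {f F : ℝ → ℝ} {I : Set ℝ} (h : PohozaevOn k f F I)
    (hf : ∀ s, f (-s) = -f s) (hF : ∀ s, F (-s) = F s) :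
    PohozaevOn k f F (Neg.neg ⁻¹' I) := by
  have hquot : (fun s => F s / f s) = fun s => -((fun s => F s / f s) (-s)) :=
    funext fun s => by simp only [hF, hf, div_neg, neg_neg]
  refine ⟨fun τ hτ => ?_, fun τ hτ => ?_, fun τ hτ => ?_, fun τ hτ => ?_⟩
  · have hd := (h.hasDerivAt (-τ) hτ).comp τ (hasDerivAt_neg τ)
    rw [hf, mul_neg_one, neg_neg] at hd
    exact hd.congr_of_eventuallyEq (.of_forall fun s => (hF s).symm)
  · rw [← neg_ne_zero, ← hf]
    exact h.ne_zero (-τ) hτ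
  · rw [hquot]
    exact ((h.differentiableAt (-τ) hτ).comp τ differentiableAt_id.neg).neg
  · rw [hquot, deriv.fun_neg, deriv_comp_neg (fun s => F s / f s), neg_neg]
    exact h.le_deriv (-τ) hτ

end Primitive

/-- The hypotheses on `f` under which the theorem is proved, in dimension `k + 2`: (f1), (f3),
(f4), continuity, and continuous differentiability above `β`. -/
structure Nonlinearity (k : ℕ) (f : ℝ → ℝ) (b β : ℝ) : Prop where
  cont : Continuous f
  differentiableAt : ∀ s, β < s → DifferentiableAt ℝ f s
  deriv_cont : ContinuousOn (deriv f) (Ioi β)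
  hf1 : Hf1 f b β
  hf3 : Hf3 f β
  hf4 : Hf4 (k + 2) f β

namespace Nonlinearity

variable {k : ℕ} {f : ℝ → ℝ} {b β s t m : ℝ}

theorem odd (N : Nonlinearity k f b β) (s : ℝ) : f (-s) = -f s := N.hf1.1 s

theorem b_lt (N : Nonlinearity k f b β) : b < β := N.hf1.2.2.2.1

theorem β_pos (N : Nonlinearity k f b β) : 0 < β := N.hf1.2.2.1.trans N.b_lt

theorem f_pos (N : Nonlinearity k f b β) (hs : b < s) : 0 < f s := N.hf1.2.2.2.2.1 s hs

theorem f_nonpos (N : Nonlinearity k f b β) (hs : s ∈ Icc 0 b) : f s ≤ 0 :=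
  N.hf1.2.2.2.2.2.1 s hs

theorem f_neg_of_lt_neg_β (N : Nonlinearity k f b β) (hs : s < -β) : f s < 0 := by
  have := N.f_pos (s := -s) (by linarith [N.b_lt])
  rw [N.odd] at this
  linarith

theorem Fint_β (N : Nonlinearity k f b β) : Fint f β = 0 := N.hf1.2.2.2.2.2.2.2

theorem Fint_cont (N : Nonlinearity k f b β) : Continuous (Fint f) :=
  continuous_iff_continuousAt.2 fun s => (hasDerivAt_Fint N.cont s).continuousAt

theorem Fint_nonpos (N : Nonlinearity k f b β) (hs : |s| ≤ β) : Fint f s ≤ 0 := by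
  rw [← Fint_abs N.odd]
  rcases le_total |s| b with h | h
  · rw [← Fint_zero f]
    exact antitoneOn_of_hasDerivAt_nonpos (fun t _ => hasDerivAt_Fint N.cont t)
      (fun t ht => N.f_nonpos ⟨ht.1.le, ht.2.le.trans h⟩) (left_mem_Icc.2 (abs_nonneg s))
      (right_mem_Icc.2 (abs_nonneg s)) (abs_nonneg s)
  · rw [← N.Fint_β]
    exact le_of_hasDerivAt_nonneg hs N.Fint_cont.continuousOn
      (fun t _ => hasDerivAt_Fint N.cont t) fun t ht => (N.f_pos (h.trans_lt ht.1)).le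

theorem Fint_pos (N : Nonlinearity k f b β) (hs : β < |s|) : 0 < Fint f s := by
  rw [← Fint_abs N.odd, ← N.Fint_β]
  refine strictMonoOn_of_deriv_pos (convex_Icc β |s|) N.Fint_cont.continuousOn (fun t ht => ?_)
    (left_mem_Icc.2 hs.le) (right_mem_Icc.2 hs.le) hs
  rw [interior_Icc] at ht
  rw [(hasDerivAt_Fint N.cont t).deriv]
  exact N.f_pos (N.b_lt.trans ht.1)

theorem pohozaevOn_Ici (N : Nonlinearity k f b β) : PohozaevOn k f (Fint f) (Ici β) := by
  have hne : ∀ s, β ≤ s → f s ≠ 0 := fun s hs => (N.f_pos (N.b_lt.trans_le hs)).ne'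
  have hβ : HasDerivAt (fun s => Fint f s / f s) 1 β := by
    have := hasDerivAt_div_of_eq_zero (hasDerivAt_Fint N.cont β) N.Fint_β N.cont.continuousAt
      (hne β le_rfl)
    rwa [div_self (hne β le_rfl)] at this
  refine ⟨fun s _ => hasDerivAt_Fint N.cont s, hne, fun s hs => ?_, fun s hs => ?_⟩ <;>
    rcases (mem_Ici.1 hs).eq_or_lt with rfl | hlt
  · exact hβ.differentiableAt
  · exact (hasDerivAt_Fint N.cont s).differentiableAt.div (N.differentiableAt s hlt) (hne s hs)
  · rw [hβ.deriv]
    linarith [k.cast_nonneg (α := ℝ)]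
  · have := N.hf4 s hlt
    rw [div_le_iff₀ (by positivity)] at this
    push_cast at this
    linarith

theorem pohozaevOn_Iic (N : Nonlinearity k f b β) : PohozaevOn k f (Fint f) (Iic (-β)) :=
  (N.pohozaevOn_Ici.neg N.odd (Fint_neg N.odd)).mono fun s (hs : s ≤ -β) =>
    show β ≤ -s from le_neg_of_le_neg hs

/-- By (f3), `s ↦ f s / (s - β)` is nonincreasing. -/
theorem mul_sub_le_mul_sub (N : Nonlinearity k f b β) (hs : β < s) (hst : s ≤ t) :
    f t * (s - β) ≤ f s * (t - β) := by
  have hanti := antitoneOn_of_hasDerivAt_nonpos (a := s) (c := t)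
    (fun τ hτ => (N.differentiableAt τ (hs.trans_le hτ.1)).hasDerivAt.div
      ((hasDerivAt_id τ).sub_const β) (sub_pos.2 (hs.trans_le hτ.1)).ne')
    (fun τ hτ => div_nonpos_of_nonpos_of_nonneg (by
      simp only [id]
      linarith [N.hf3 τ (hs.trans hτ.1).le]) (sq_nonneg _))
    (left_mem_Icc.2 hst) (right_mem_Icc.2 hst) hst
  exact (div_le_div_iff₀ (sub_pos.2 (hs.trans_le hst)) (sub_pos.2 hs)).1 hanti

theorem exists_lipschitz (N : Nonlinearity k f b β) (hm : m < -β) (a : ℝ) :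
    ∃ L, 0 ≤ L ∧ ∀ s ∈ Icc a m, ∀ t ∈ Icc a m, |f t - f s| ≤ L * |t - s| := by
  have hβ : ∀ s ∈ Icc (-m) (-a), β < s := fun s hs => (lt_neg_of_lt_neg hm).trans_le hs.1
  obtain ⟨L, hL⟩ := (isCompact_Icc (a := -m) (b := -a)).exists_bound_of_continuousOn
    (N.deriv_cont.mono hβ)
  refine ⟨max L 0, le_max_right _ _, fun s hs t ht => ?_⟩
  have h := (convex_Icc (-m) (-a)).norm_image_sub_le_of_norm_deriv_le
    (fun τ hτ => N.differentiableAt τ (hβ τ hτ)) (fun τ hτ => (hL τ hτ).trans (le_max_left L 0))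
    ⟨neg_le_neg ht.2, neg_le_neg ht.1⟩ ⟨neg_le_neg hs.2, neg_le_neg hs.1⟩
  rwa [N.odd, N.odd, neg_sub_neg, neg_sub_neg] at h

end Nonlinearity

/-- Twice the energy of a solution, `w'² + 2 F(w)`. -/
noncomputable def energy (f w p : ℝ → ℝ) (t : ℝ) : ℝ := p t ^ 2 + 2 * Fint f (w t)

namespace Sol

variable {k : ℕ} {f w p : ℝ → ℝ} {b β t t₀ : ℝ}

theorem energy_deriv (h : Sol k f w p) (hf : Continuous f) (ht : 0 < t) :
    HasDerivAt (energy f w p) (-(2 * ((k + 1) / t) * p t ^ 2)) t := by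
  refine (((h.p_deriv t ht).pow 2).add
    (((hasDerivAt_Fint hf (w t)).comp t (h.w_deriv t ht)).const_mul 2)).congr_deriv ?_
  push_cast
  ring

theorem energy_antitone (h : Sol k f w p) (hf : Continuous f) :
    AntitoneOn (energy f w p) (Ioi 0) := by
  intro s hs t _ hst
  have hs0 : 0 < s := hs
  refine antitoneOn_of_hasDerivAt_nonpos (fun τ hτ => h.energy_deriv hf (hs0.trans_le hτ.1))
    (fun τ hτ => ?_) (left_mem_Icc.2 hst) (right_mem_Icc.2 hst) hst
  have : 0 < τ := hs0.trans hτ.1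
  exact neg_nonpos.2 (by positivity)

theorem exists_tendsto_energy (h : Sol k f w p) (hf : Continuous f)
    (hlim : Tendsto w atTop (𝓝 0)) :
    ∃ ξ : ℝ → ℝ, (∀ t, 0 < t → ξ t ∈ Ioo t (t + 1)) ∧
      Tendsto (fun t => energy f w p (ξ t)) atTop (𝓝 0) := by
  have hmvt : ∀ t, 0 < t → ∃ c ∈ Ioo t (t + 1), p c = w (t + 1) - w t := fun t ht => by
    obtain ⟨c, hc, hslope⟩ := exists_hasDerivAt_eq_slope w p (lt_add_one t)
      (h.w_cont.mono fun s hs => ht.trans_le hs.1) fun s hs => h.w_deriv s (ht.trans hs.1)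
    exact ⟨c, hc, by simpa only [add_sub_cancel_left, div_one] using hslope⟩
  choose! ξ hξ hpξ using hmvt
  refine ⟨ξ, hξ, ?_⟩
  have hξt : Tendsto ξ atTop atTop := by
    refine tendsto_atTop_mono' atTop ?_ tendsto_id
    filter_upwards [eventually_gt_atTop 0] with t ht using (hξ t ht).1.le
  have hp : Tendsto (fun t => w (t + 1) - w t) atTop (𝓝 (0 - 0)) :=
    (hlim.comp (tendsto_atTop_add_const_right _ 1 tendsto_id)).sub hlim
  have hF : Tendsto (fun t => Fint f (w (ξ t))) atTop (𝓝 (Fint f 0)) :=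
    (hasDerivAt_Fint hf 0).continuousAt.tendsto.comp (hlim.comp hξt)
  have hsum := (hp.pow 2).add (hF.const_mul 2)
  rw [Fint_zero, sub_zero, mul_zero, add_zero, zero_pow two_ne_zero] at hsum
  refine hsum.congr' ?_
  filter_upwards [eventually_gt_atTop 0] with t ht
  rw [energy, hpξ t ht]

theorem energy_nonneg (h : Sol k f w p) (hf : Continuous f) (hlim : Tendsto w atTop (𝓝 0))
    (ht : 0 < t) : 0 ≤ energy f w p t := by
  obtain ⟨ξ, hξ, hE⟩ := h.exists_tendsto_energy hf hlim
  refine le_of_tendsto hE ?_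
  filter_upwards [eventually_ge_atTop t] with s hs
  have hlt : t < ξ s := hs.trans_lt (hξ s (ht.trans_le hs)).1
  exact h.energy_antitone hf ht (ht.trans hlt) hlt.le

theorem tendsto_energy (h : Sol k f w p) (hf : Continuous f) (hlim : Tendsto w atTop (𝓝 0)) :
    Tendsto (energy f w p) atTop (𝓝 0) := by
  obtain ⟨ξ, hξ, hE⟩ := h.exists_tendsto_energy hf hlim
  refine squeeze_zero' ?_ ?_ (hE.comp (tendsto_atTop_add_const_right _ (-1) tendsto_id))
  · filter_upwards [eventually_gt_atTop 0] with t ht using h.energy_nonneg hf hlim ht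
  · filter_upwards [eventually_gt_atTop 1] with t ht
    have hξt := hξ (t + -1) (by linarith)
    exact h.energy_antitone hf (show (0 : ℝ) < ξ (t + -1) by linarith [hξt.1])
      (show (0 : ℝ) < t by linarith) (by simpa using hξt.2.le)

theorem eq_zero_of_energy_eq_zero (h : Sol k f w p) (hf : Continuous f)
    (hlim : Tendsto w atTop (𝓝 0)) (ht₀ : 0 < t₀) (hE : energy f w p t₀ = 0) (ht : t₀ ≤ t) :
    w t = 0 ∧ p t = 0 := by
  have hE₀ : ∀ s ∈ Ici t₀, energy f w p s = 0 := fun s hs => le_antisymm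
    (hE ▸ h.energy_antitone hf ht₀ (ht₀.trans_le hs) hs) (h.energy_nonneg hf hlim (ht₀.trans_le hs))
  have hp : ∀ s ∈ Ici t₀, p s = 0 := fun s hs => by
    have hs0 : 0 < s := ht₀.trans_le hs
    have hd := (uniqueDiffOn_Ici t₀ s hs).eq_deriv _
      (h.energy_deriv hf hs0).hasDerivWithinAt
      ((hasDerivWithinAt_const s (Ici t₀) (0 : ℝ)).congr hE₀ (hE₀ s hs))
    have : 2 * ((k + 1 : ℝ) / s) ≠ 0 := by positivity
    simpa [this] using hd
  refine ⟨tendsto_nhds_unique (tendsto_const_nhds.congr' ?_) hlim, hp t ht⟩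
  filter_upwards [eventually_ge_atTop t] with s hs
  refine (constant_of_has_deriv_right_zero
    (h.w_cont.mono fun τ hτ => ht₀.trans_le (ht.trans hτ.1)) (fun τ hτ => ?_) s
    (right_mem_Icc.2 hs)).symm
  have hτ₀ : t₀ ≤ τ := ht.trans hτ.1
  exact hp τ hτ₀ ▸ (h.w_deriv τ (ht₀.trans_le hτ₀)).hasDerivWithinAt

theorem energy_pos (h : Sol k f w p) (hf : Continuous f) (hlim : Tendsto w atTop (𝓝 0))
    (ht : 0 < t) (hp : p t ≠ 0) : 0 < energy f w p t :=
  (h.energy_nonneg hf hlim ht).lt_of_ne' fun hE =>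
    hp (h.eq_zero_of_energy_eq_zero hf hlim ht hE le_rfl).2

theorem β_lt_abs_of_p_eq_zero (h : Sol k f w p) (N : Nonlinearity k f b β)
    (hlim : Tendsto w atTop (𝓝 0)) (ht : 0 < t) (hp : p t = 0) (hw : w t ≠ 0) : β < |w t| := by
  by_contra! hle
  have hE : energy f w p t = 0 := le_antisymm
    (by rw [energy, hp]; linarith [N.Fint_nonpos hle]) (h.energy_nonneg N.cont hlim ht)
  exact hw (h.eq_zero_of_energy_eq_zero N.cont hlim ht hE le_rfl).1

theorem β_lt_w_zero (h : Sol k f w p) (N : Nonlinearity k f b β) (hc : ContinuousOn w (Ici 0))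
    (hlim : Tendsto w atTop (𝓝 0)) (h0 : 0 < w 0) : β < w 0 := by
  by_contra! hle
  have hw0 : Tendsto w (𝓝[>] 0) (𝓝 (w 0)) :=
    (hc 0 self_mem_Ici).mono_left (nhdsWithin_mono _ Ioi_subset_Ici_self)
  have hE : Tendsto (energy f w p) (𝓝[>] 0) (𝓝 (0 ^ 2 + 2 * Fint f (w 0))) :=
    ((h.tendsto_p_zero N.cont hc).pow 2).add
      ((N.Fint_cont.continuousAt.tendsto.comp hw0).const_mul 2)
  have hF : Fint f (w 0) ≤ 0 := N.Fint_nonpos (by rwa [abs_of_pos h0])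
  have hzero : ∀ t, 0 < t → w t = 0 := fun t ht => by
    have : energy f w p t ≤ 0 ^ 2 + 2 * Fint f (w 0) := by
      refine ge_of_tendsto hE ?_
      filter_upwards [Ioo_mem_nhdsGT ht] with s hs
      exact h.energy_antitone N.cont hs.1 ht hs.2.le
    exact (h.eq_zero_of_energy_eq_zero N.cont hlim ht
      (le_antisymm (by linarith) (h.energy_nonneg N.cont hlim ht)) le_rfl).1
  refine h0.ne (tendsto_nhds_unique (tendsto_const_nhds.congr' ?_) hw0)
  filter_upwards [self_mem_nhdsWithin] with t ht using (hzero t ht).symm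

theorem signChange_of_p_ne_zero (h : Sol k f w p) (ht : 0 < t) (hw : w t = 0) (hp : p t ≠ 0) :
    SignChange w t := by
  refine ⟨hw, fun ε hε => ?_⟩
  have hU : Ioo (t - ε) (t + ε) ∩ Ioi 0 ∈ 𝓝 t :=
    inter_mem (Ioo_mem_nhds (sub_lt_self t hε) (lt_add_of_pos_right t hε)) (Ioi_mem_nhds ht)
  constructor <;> by_contra! hsign
  · have hmax : IsLocalMax w t := by
      filter_upwards [hU] with x hx using hw ▸ hsign x hx
    exact hp (hmax.hasDerivAt_eq_zero (h.w_deriv t ht))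
  · have hmin : IsLocalMin w t := by
      filter_upwards [hU] with x hx using hw ▸ hsign x hx
    exact hp (hmin.hasDerivAt_eq_zero (h.w_deriv t ht))

theorem exists_p_neg_near_zero (h : Sol k f w p) (hf : Continuous f) (hc : ContinuousOn w (Ici 0))
    (h0 : 0 < f (w 0)) : ∃ δ, 0 < δ ∧ ∀ t ∈ Ioc 0 δ, p t < 0 := by
  have hfw : Tendsto (fun t => f (w t)) (𝓝[>] 0) (𝓝 (f (w 0))) :=
    (hf.tendsto _).comp ((hc 0 self_mem_Ici).mono_left (nhdsWithin_mono _ Ioi_subset_Ici_self))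
  obtain ⟨δ, hδ, hsub⟩ := mem_nhdsGT_iff_exists_Ioc_subset.1 (hfw.eventually_const_lt h0)
  have hcont : ContinuousOn (fun s => s ^ (k + 1) * p s) (Icc 0 δ) := fun s hs => by
    rcases hs.1.eq_or_lt with rfl | hs0
    · refine (continuousWithinAt_Ioi_iff_Ici.1 ?_).mono Icc_subset_Ici_self
      have := (((continuous_pow (M := ℝ) (k + 1)).tendsto 0).mono_left nhdsWithin_le_nhds).mul
        (h.tendsto_p_zero hf hc)
      simpa [ContinuousWithinAt] using this
    · exact (h.pow_mul_p_deriv hs0).continuousAt.continuousWithinAt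
  have hanti : StrictAntiOn (fun s => s ^ (k + 1) * p s) (Icc 0 δ) := by
    refine strictAntiOn_of_deriv_neg (convex_Icc 0 δ) hcont fun s hs => ?_
    rw [interior_Icc] at hs
    rw [(h.pow_mul_p_deriv hs.1).deriv]
    exact neg_neg_of_pos (mul_pos (pow_pos hs.1 _) (hsub (Ioo_subset_Ioc_self hs)))
  refine ⟨δ, hδ, fun t ht => neg_of_mul_neg_right (?_ : t ^ (k + 1) * p t < 0)
    (pow_pos ht.1 _).le⟩
  simpa using hanti (left_mem_Icc.2 (mem_Ioi.1 hδ).le) (Ioc_subset_Icc_self ht) ht.1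

end Sol

/-- A solution `w` tending to `0` at infinity, positive at the origin, whose only sign change on
`(0, ∞)` is `z`; here `w' = p`. -/
structure OneNodeState (k : ℕ) (f w p : ℝ → ℝ) (z : ℝ) : Prop where
  sol : Sol k f w p
  cont : ContinuousOn w (Ici 0)
  lim : Tendsto w atTop (𝓝 0)
  w_zero_pos : 0 < w 0
  z_pos : 0 < z
  signChange : SignChange w z
  unique : ∀ t, 0 < t → SignChange w t → t = z

/-- The shape of a bound state with one sign change: `w` decreases from `w 0 > β` to a minimum
`w T < -β`, then increases to zero, which it may reach in finite time. -/
structure Shape (k : ℕ) (f w p : ℝ → ℝ) (β T : ℝ) : Prop where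
  sol : Sol k f w p
  cont : ContinuousOn w (Ici 0)
  lim : Tendsto w atTop (𝓝 0)
  β_pos : 0 < β
  β_lt : β < w 0
  T_pos : 0 < T
  p_neg : ∀ t ∈ Ioo 0 T, p t < 0
  p_T : p T = 0
  w_T : w T < -β
  w_nonpos : ∀ t, T < t → w t ≤ 0
  eq_zero : ∀ t, T < t → w t = 0 → ∀ s, t ≤ s → w s = 0 ∧ p s = 0
  p_pos : ∀ t, T < t → w t < 0 → 0 < p t

namespace OneNodeState

variable {k : ℕ} {f w p : ℝ → ℝ} {b β s t z T : ℝ}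

theorem eq_zero_of_w_eq_zero (h : OneNodeState k f w p z) (hf : Continuous f) (ht : 0 < t)
    (htz : t ≠ z) (hw : w t = 0) (hts : t ≤ s) : w s = 0 ∧ p s = 0 := by
  have hp : p t = 0 := by
    by_contra hp
    exact htz (h.unique t ht (h.sol.signChange_of_p_ne_zero ht hw hp))
  refine h.sol.eq_zero_of_energy_eq_zero hf h.lim ht ?_ hts
  rw [energy, hp, hw, Fint_zero, mul_zero, add_zero, zero_pow two_ne_zero]

theorem w_pos (h : OneNodeState k f w p z) (hf : Continuous f) (ht : t ∈ Ico 0 z) : 0 < w t := by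
  refine forall_lt_of_ne_at_first_eq continuousOn_const (h.cont.mono Icc_subset_Ici_self)
    h.w_zero_pos (fun s hs _ hs0 => ?_) t (right_mem_Icc.2 ht.1)
  have hsz : s < z := hs.2.trans_lt ht.2
  obtain ⟨x, hx, hpos⟩ := (h.signChange.2 (z - s) (sub_pos.2 hsz)).1
  exact hpos.ne' (h.eq_zero_of_w_eq_zero hf hs.1 hsz.ne hs0.symm (by linarith [hx.1.1])).1

theorem p_z_neg (h : OneNodeState k f w p z) (hf : Continuous f) : p z < 0 := by
  refine lt_of_le_of_ne (deriv_le_deriv_at_first_eq h.z_pos (hasDerivAt_const z 0)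
    (h.sol.w_deriv z h.z_pos) (fun s => h.w_pos hf) h.signChange.1.symm) fun hp => ?_
  have hE : energy f w p z = 0 := by
    rw [energy, hp, h.signChange.1, Fint_zero, mul_zero, add_zero, zero_pow two_ne_zero]
  obtain ⟨x, hx, hneg⟩ := (h.signChange.2 1 one_pos).2
  rcases le_or_gt z x with hzx | hxz
  · exact hneg.ne (h.sol.eq_zero_of_energy_eq_zero hf h.lim h.z_pos hE hzx).1
  · exact hneg.not_gt (h.w_pos hf ⟨le_of_lt hx.2, hxz⟩)

theorem w_nonpos (h : OneNodeState k f w p z) (hf : Continuous f) (hzt : z < t) : w t ≤ 0 := by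
  by_contra! hwt
  obtain ⟨x, hx, hneg⟩ := (h.signChange.2 (t - z) (sub_pos.2 hzt)).2
  have hzx : z < x := by
    by_contra! hxz
    rcases hxz.eq_or_lt with rfl | hlt
    · exact hneg.ne h.signChange.1
    · exact hneg.not_gt (h.w_pos hf ⟨le_of_lt hx.2, hlt⟩)
  have hxt : x ≤ t := by linarith [hx.1.2]
  obtain ⟨s, hs, hs0⟩ := intermediate_value_Icc hxt
    (h.cont.mono fun τ hτ => (h.z_pos.trans hzx).le.trans hτ.1) ⟨hneg.le, hwt.le⟩
  have hzs : z < s := hzx.trans_le hs.1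
  exact hwt.ne' (h.eq_zero_of_w_eq_zero hf (h.z_pos.trans hzs) hzs.ne' hs0 hs.2).1

theorem p_neg_of_le_z (h : OneNodeState k f w p z) (N : Nonlinearity k f b β)
    (ht : t ∈ Ioc 0 z) : p t < 0 := by
  have hβ := h.sol.β_lt_w_zero N h.cont h.lim h.w_zero_pos
  obtain ⟨δ, hδ, hneg⟩ := h.sol.exists_p_neg_near_zero N.cont h.cont (N.f_pos (N.b_lt.trans hβ))
  rcases le_or_gt t δ with htδ | hδt
  · exact hneg t ⟨ht.1, htδ⟩
  refine forall_lt_of_ne_at_first_eq (h.sol.p_cont.mono fun s hs => hδ.trans_le hs.1)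
    continuousOn_const (hneg δ ⟨hδ, le_rfl⟩) (fun s hs hlt hs0 => ?_) t (right_mem_Icc.2 hδt.le)
  have hs_pos : 0 < s := hδ.trans hs.1
  have hsz : s < z := by
    refine lt_of_le_of_ne (hs.2.trans ht.2) ?_
    rintro rfl
    exact (h.p_z_neg N.cont).ne hs0
  have hw := h.w_pos N.cont ⟨hs_pos.le, hsz⟩
  have hβs := h.sol.β_lt_abs_of_p_eq_zero N h.lim hs_pos hs0 hw.ne'
  rw [abs_of_pos hw] at hβs
  have hd := deriv_le_deriv_at_first_eq hs.1 (h.sol.p_deriv s hs_pos) (hasDerivAt_const s 0)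
    hlt hs0
  rw [hs0, mul_zero] at hd
  linarith [N.f_pos (N.b_lt.trans hβs)]

theorem exists_p_eq_zero (h : OneNodeState k f w p z) (hf : Continuous f) :
    ∃ t, z < t ∧ p t = 0 := by
  by_contra! hne
  have hneg : ∀ t, z ≤ t → p t < 0 := fun t ht =>
    forall_lt_of_ne_at_first_eq (h.sol.p_cont.mono fun s hs => h.z_pos.trans_le hs.1)
      continuousOn_const (h.p_z_neg hf) (fun s hs _ => hne s hs.1) t (right_mem_Icc.2 ht)
  have hanti : StrictAntiOn w (Ici z) := by
    refine strictAntiOn_of_deriv_neg (convex_Ici z)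
      (h.sol.w_cont.mono fun s hs => h.z_pos.trans_le hs) fun s hs => ?_
    rw [interior_Ici] at hs
    rw [(h.sol.w_deriv s (h.z_pos.trans hs)).deriv]
    exact hneg s (le_of_lt hs)
  have hz1 : z ≤ z + 1 := (lt_add_one z).le
  have hlt : w (z + 1) < w z := hanti self_mem_Ici hz1 (lt_add_one z)
  have hge : 0 ≤ w (z + 1) := by
    refine le_of_tendsto h.lim ?_
    filter_upwards [eventually_ge_atTop (z + 1)] with s hs
    exact hanti.antitoneOn hz1 (hz1.trans hs) hs
  linarith [h.signChange.1]

theorem exists_first_p_eq_zero (h : OneNodeState k f w p z) (N : Nonlinearity k f b β) :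
    ∃ T, z < T ∧ p T = 0 ∧ ∀ t ∈ Ioo 0 T, p t < 0 := by
  by_contra! hcon
  obtain ⟨t₁, ht₁, hpt₁⟩ := h.exists_p_eq_zero N.cont
  refine (forall_lt_of_ne_at_first_eq (h.sol.p_cont.mono fun s hs => h.z_pos.trans_le hs.1)
    continuousOn_const (h.p_z_neg N.cont) (fun T hT hlt hpT => ?_) t₁
    (right_mem_Icc.2 ht₁.le)).ne hpt₁
  obtain ⟨t, ht, hpt⟩ := hcon T hT.1 hpT
  rcases le_or_gt t z with htz | hzt
  · exact hpt.not_gt (h.p_neg_of_le_z N ⟨ht.1, htz⟩)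
  · exact hpt.not_gt (hlt t ⟨hzt.le, ht.2⟩)

theorem w_lt_neg_β (h : OneNodeState k f w p z) (N : Nonlinearity k f b β) (hzT : z < T)
    (hpT : p T = 0) (hneg : ∀ t ∈ Ioo 0 T, p t < 0) : w T < -β := by
  have hanti : StrictAntiOn w (Icc z T) := by
    refine strictAntiOn_of_deriv_neg (convex_Icc z T)
      (h.sol.w_cont.mono fun s hs => h.z_pos.trans_le hs.1) fun s hs => ?_
    rw [interior_Icc] at hs
    rw [(h.sol.w_deriv s (h.z_pos.trans hs.1)).deriv]
    exact hneg s ⟨h.z_pos.trans hs.1, hs.2⟩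
  have hw : w T < 0 := h.signChange.1 ▸
    hanti (left_mem_Icc.2 hzT.le) (right_mem_Icc.2 hzT.le) hzT
  have := h.sol.β_lt_abs_of_p_eq_zero N h.lim (h.z_pos.trans hzT) hpT hw.ne
  rw [abs_of_neg hw] at this
  linarith

theorem p_pos_of_lt (h : OneNodeState k f w p z) (N : Nonlinearity k f b β) (hzT : z < T)
    (hpT : p T = 0) (hwT : w T < -β) (hTt : T < t) (hwt : w t < 0) : 0 < p t := by
  have hT0 : 0 < T := h.z_pos.trans hzT
  have hd := h.sol.p_deriv T hT0
  rw [hpT, mul_zero, neg_zero, zero_sub] at hd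
  have hslope : Tendsto (slope p T) (𝓝[>] T) (𝓝 (-f (w T))) :=
    (hasDerivAt_iff_tendsto_slope.1 hd).mono_left (nhdsWithin_mono _ fun s hs => ne_of_gt hs)
  obtain ⟨a, ha, haT⟩ := ((hslope.eventually_const_lt (neg_pos.2 (N.f_neg_of_lt_neg_β hwT))).and
    (Ioo_mem_nhdsGT hTt)).exists
  have hpa : 0 < p a := by
    rw [slope_def_field, hpT, sub_zero] at ha
    exact (div_pos_iff_of_pos_right (sub_pos.2 haT.1)).1 ha
  refine forall_lt_of_ne_at_first_eq continuousOn_const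
    (h.sol.p_cont.mono fun s hs => hT0.trans (haT.1.trans_le hs.1)) hpa
    (fun s hs hlt hs0 => ?_) t (right_mem_Icc.2 haT.2.le)
  have hzs : z < s := hzT.trans (haT.1.trans hs.1)
  have hs_pos : 0 < s := h.z_pos.trans hzs
  have hws : w s < 0 := lt_of_le_of_ne (h.w_nonpos N.cont hzs) fun hws =>
    hwt.ne (h.eq_zero_of_w_eq_zero N.cont hs_pos hzs.ne' hws hs.2).1
  have hβs := h.sol.β_lt_abs_of_p_eq_zero N h.lim hs_pos hs0.symm hws.ne
  rw [abs_of_neg hws] at hβs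
  have hd' := deriv_le_deriv_at_first_eq hs.1 (hasDerivAt_const s 0) (h.sol.p_deriv s hs_pos)
    hlt hs0
  rw [← hs0, mul_zero] at hd'
  linarith [N.f_neg_of_lt_neg_β (lt_neg_of_lt_neg hβs)]

theorem exists_shape (h : OneNodeState k f w p z) (N : Nonlinearity k f b β) :
    ∃ T, Shape k f w p β T := by
  obtain ⟨T, hzT, hpT, hneg⟩ := h.exists_first_p_eq_zero N
  have hwT := h.w_lt_neg_β N hzT hpT hneg
  exact ⟨T, {
    sol := h.sol
    cont := h.cont
    lim := h.lim
    β_pos := N.β_pos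
    β_lt := h.sol.β_lt_w_zero N h.cont h.lim h.w_zero_pos
    T_pos := h.z_pos.trans hzT
    p_neg := hneg
    p_T := hpT
    w_T := hwT
    w_nonpos := fun t ht => h.w_nonpos N.cont (hzT.trans ht)
    eq_zero := fun t ht hw s => h.eq_zero_of_w_eq_zero N.cont (h.z_pos.trans (hzT.trans ht))
      (hzT.trans ht).ne' hw
    p_pos := fun t => h.p_pos_of_lt N hzT hpT hwT }⟩

end OneNodeState

theorem Sol.strictMonoOn {k : ℕ} {f g q : ℝ → ℝ} {J : Set ℝ} (h : Sol k f g q) (hJ : Convex ℝ J)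
    (hJ0 : J ⊆ Ioi 0) (hq : ∀ t ∈ J, 0 < q t) : StrictMonoOn g J := by
  refine strictMonoOn_of_deriv_pos hJ (h.w_cont.mono hJ0) fun t ht => ?_
  rw [(h.w_deriv t (hJ0 (interior_subset ht))).deriv]
  exact hq t (interior_subset ht)

/-- `g` is a solution with derivative `q` increasing on the open interval `J` with left endpoint
`t₀` with image `(a, c)`, and `r` inverts its restriction to `J`. -/
structure RisingPiece (k : ℕ) (f g q : ℝ → ℝ) (t₀ : ℝ) (J : Set ℝ) (a c : ℝ)
    (r : ℝ → ℝ) : Prop where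
  sol : Sol k f g q
  nonneg : 0 ≤ t₀
  isOpen : IsOpen J
  lt_of_mem : ∀ t ∈ J, t₀ < t
  Ioc_subset : ∀ t ∈ J, Ioc t₀ t ⊆ J
  q_pos : ∀ t ∈ J, 0 < q t
  image_eq : g '' J = Ioo a c
  leftInvOn : LeftInvOn r g J

namespace RisingPiece

variable {k : ℕ} {f g q g₁ q₁ g₂ q₂ r r₁ r₂ : ℝ → ℝ} {J J₁ J₂ : Set ℝ}
  {t t₀ t₁ s₁ s₂ τ a a₁ a₂ b c c₁ c₂ β : ℝ}

theorem pos_of_mem (P : RisingPiece k f g q t₀ J a c r) (ht : t ∈ J) : 0 < t :=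
  P.nonneg.trans_lt (P.lt_of_mem t ht)

theorem ordConnected (P : RisingPiece k f g q t₀ J a c r) : OrdConnected J :=
  ⟨fun s hs t ht _ hτ => P.Ioc_subset t ht ⟨(P.lt_of_mem s hs).trans_le hτ.1, hτ.2⟩⟩

theorem g_strictMonoOn (P : RisingPiece k f g q t₀ J a c r) : StrictMonoOn g J :=
  P.sol.strictMonoOn P.ordConnected.convex (fun _ ht => P.pos_of_mem ht) P.q_pos

theorem r_mem (P : RisingPiece k f g q t₀ J a c r) (hτ : τ ∈ Ioo a c) : r τ ∈ J := by
  obtain ⟨t, ht, rfl⟩ := P.image_eq.symm ▸ hτ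
  rwa [P.leftInvOn ht]

theorem g_r (P : RisingPiece k f g q t₀ J a c r) (hτ : τ ∈ Ioo a c) : g (r τ) = τ := by
  obtain ⟨t, ht, rfl⟩ := P.image_eq.symm ▸ hτ
  rw [P.leftInvOn ht]

theorem g_mem (P : RisingPiece k f g q t₀ J a c r) (ht : t ∈ J) : g t ∈ Ioo a c :=
  P.image_eq ▸ mem_image_of_mem g ht

theorem r_continuousAt (P : RisingPiece k f g q t₀ J a c r) (hτ : τ ∈ Ioo a c) :
    ContinuousAt r τ := by
  have hmono : StrictMonoOn r (Ioo a c) := by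
    intro σ hσ τ hτ hlt
    rwa [← P.g_strictMonoOn.lt_iff_lt (P.r_mem hσ) (P.r_mem hτ), P.g_r hσ, P.g_r hτ]
  refine hmono.continuousAt_of_image_mem_nhds (isOpen_Ioo.mem_nhds hτ) ?_
  refine mem_of_superset (P.isOpen.mem_nhds (P.r_mem hτ)) fun t ht => ?_
  exact ⟨g t, P.g_mem ht, P.leftInvOn ht⟩

theorem branch (P : RisingPiece k f g q t₀ J a c r) : Branch k f r (q ∘ r) (Ioo a c) := by
  have hpos : ∀ τ ∈ Ioo a c, 0 < r τ := fun τ hτ => P.pos_of_mem (P.r_mem hτ)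
  have hq : ∀ τ ∈ Ioo a c, 0 < q (r τ) := fun τ hτ => P.q_pos _ (P.r_mem hτ)
  have hr : ∀ τ ∈ Ioo a c, HasDerivAt r (1 / q (r τ)) τ := fun τ hτ => by
    rw [one_div]
    exact (P.sol.w_deriv _ (hpos τ hτ)).of_local_left_inverse (P.r_continuousAt hτ) (hq τ hτ).ne'
      (mem_of_superset (isOpen_Ioo.mem_nhds hτ) fun σ hσ => P.g_r hσ)
  refine ⟨hpos, hq, hr, fun τ hτ => ?_⟩
  refine ((P.sol.p_deriv _ (hpos τ hτ)).comp τ (hr τ hτ)).congr_deriv ?_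
  have := hq τ hτ
  have := hpos τ hτ
  simp only [P.g_r hτ, Function.comp_apply]
  field_simp

theorem tendsto_r_left (P : RisingPiece k f g q t₀ J a c r) (hac : a < c) :
    Tendsto r (𝓝[>] a) (𝓝[>] t₀) := by
  obtain ⟨σ, hσ⟩ := nonempty_Ioo.2 hac
  have hmono := P.branch.r_strictMonoOn (convex_Ioo a c)
  refine tendsto_nhdsWithin_iff.2 ⟨tendsto_order.2 ⟨fun s hs => ?_, fun s hs => ?_⟩, ?_⟩
  · filter_upwards [Ioo_mem_nhdsGT hac] with τ hτ using hs.trans (P.lt_of_mem _ (P.r_mem hτ))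
  · obtain ⟨t, h₀t, ht⟩ := exists_between (lt_min hs (P.lt_of_mem _ (P.r_mem hσ)))
    have htJ : t ∈ J := P.Ioc_subset _ (P.r_mem hσ) ⟨h₀t, (ht.trans_le (min_le_right _ _)).le⟩
    have hgt := P.g_mem htJ
    filter_upwards [Ioo_mem_nhdsGT hgt.1] with τ hτ
    calc r τ < r (g t) := hmono ⟨hτ.1, hτ.2.trans hgt.2⟩ hgt hτ.2
      _ = t := P.leftInvOn htJ
      _ < s := ht.trans_le (min_le_left _ _)
  · filter_upwards [Ioo_mem_nhdsGT hac] with τ hτ using P.lt_of_mem _ (P.r_mem hτ)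

theorem tendsto_r_right (P : RisingPiece k f g q t₀ (Ioo t₀ t₁) a c r) (hac : a < c) :
    Tendsto r (𝓝[<] c) (𝓝[<] t₁) := by
  obtain ⟨σ, hσ⟩ := nonempty_Ioo.2 hac
  have hmono := P.branch.r_strictMonoOn (convex_Ioo a c)
  refine tendsto_nhdsWithin_iff.2 ⟨tendsto_order.2 ⟨fun s hs => ?_, fun s hs => ?_⟩, ?_⟩
  · obtain ⟨t, ht, ht₁⟩ := exists_between (max_lt hs ((P.r_mem hσ).1.trans (P.r_mem hσ).2))
    have htJ : t ∈ Ioo t₀ t₁ := ⟨(le_max_right _ _).trans_lt ht, ht₁⟩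
    have hgt := P.g_mem htJ
    filter_upwards [Ioo_mem_nhdsLT hgt.2] with τ hτ
    calc s < t := (le_max_left _ _).trans_lt ht
      _ = r (g t) := (P.leftInvOn htJ).symm
      _ < r τ := hmono hgt ⟨hgt.1.trans hτ.1, hτ.2⟩ hτ.1
  · filter_upwards [Ioo_mem_nhdsLT hac] with τ hτ using (P.r_mem hτ).2.trans hs
  · filter_upwards [Ioo_mem_nhdsLT hac] with τ hτ using (P.r_mem hτ).2

theorem levelEnergy_eq (P : RisingPiece k f g q t₀ J a c r) (hτ : τ ∈ Ioo a c) :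
    levelEnergy (Fint f) (q ∘ r) τ = energy f g q (r τ) := by
  rw [levelEnergy, energy, P.g_r hτ, Function.comp_apply]

theorem levelEnergy_pos (P : RisingPiece k f g q t₀ J a c r) (hf : Continuous f)
    (hlim : Tendsto g atTop (𝓝 0)) (hτ : τ ∈ Ioo a c) : 0 < levelEnergy (Fint f) (q ∘ r) τ := by
  rw [P.levelEnergy_eq hτ]
  exact P.sol.energy_pos hf hlim (P.pos_of_mem (P.r_mem hτ)) (P.q_pos _ (P.r_mem hτ)).ne'

theorem le_of_r_le (P : RisingPiece k f g q t₀ J a c r) (ht : t ∈ J) (hτ : τ ∈ Ioo a c)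
    (h : t ≤ r τ) : g t ≤ τ :=
  (P.g_strictMonoOn.monotoneOn ht (P.r_mem hτ) h).trans_eq (P.g_r hτ)

theorem eq_of_r_le (P₁ : RisingPiece k f g₁ q₁ t₀ J₁ a c₁ r₁)
    (P₂ : RisingPiece k f g₂ q₂ t₀ J₂ a c₂ r₂) (N : Nonlinearity k f b β)
    (hg : Tendsto (fun t => g₂ t - g₁ t) (𝓝[>] t₀) (𝓝 0))
    (hq : Tendsto (fun t => q₂ t - q₁ t) (𝓝[>] t₀) (𝓝 0)) (hτ₁ : τ ∈ Ioo a c₁) (hτ₂ : τ ∈ Ioo a c₂)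
    (hτ : τ < -β) (hr : r₁ τ ≤ r₂ τ) : r₁ τ = r₂ τ ∧ q₁ (r₁ τ) = q₂ (r₂ τ) := by
  obtain ⟨L, hL, hLip⟩ := N.exists_lipschitz hτ a
  have hJ₁ := P₁.Ioc_subset _ (P₁.r_mem hτ₁)
  have hJ₂ := (Ioc_subset_Ioc_right hr).trans (P₂.Ioc_subset _ (P₂.r_mem hτ₂))
  have hend : r₁ τ ∈ Ioc t₀ (r₁ τ) := right_mem_Ioc.2 (P₁.lt_of_mem _ (P₁.r_mem hτ₁))
  obtain ⟨hgr, hqr⟩ := P₁.sol.eqOn_of_tendsto P₂.sol P₁.nonneg hL (fun t ht =>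
    hLip _ ⟨(P₁.g_mem (hJ₁ ht)).1.le, P₁.le_of_r_le (hJ₁ ht) hτ₁ ht.2⟩ _
      ⟨(P₂.g_mem (hJ₂ ht)).1.le, P₂.le_of_r_le (hJ₂ ht) hτ₂ (ht.2.trans hr)⟩) hg hq _ hend
  have heq : r₂ τ = r₁ τ := by
    rw [← P₂.leftInvOn (hJ₂ hend), ← hgr, P₁.g_r hτ₁]
  exact ⟨heq.symm, heq ▸ hqr⟩

theorem eqOn (P₁ : RisingPiece k f g₁ q₁ t₀ J₁ a c₁ r₁)
    (P₂ : RisingPiece k f g₂ q₂ t₀ J₂ a c₂ r₂) (N : Nonlinearity k f b β) (ha : a < -β)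
    (hg : Tendsto (fun t => g₂ t - g₁ t) (𝓝[>] t₀) (𝓝 0))
    (hq : Tendsto (fun t => q₂ t - q₁ t) (𝓝[>] t₀) (𝓝 0)) :
    EqOn r₁ r₂ (Ioo a (min c₁ c₂)) ∧ EqOn (q₁ ∘ r₁) (q₂ ∘ r₂) (Ioo a (min c₁ c₂)) := by
  have main : ∀ τ ∈ Ioo a (min c₁ c₂), r₁ τ = r₂ τ ∧ (q₁ ∘ r₁) τ = (q₂ ∘ r₂) τ := by
    intro τ hτ
    obtain ⟨σ, haσ, hσ⟩ := exists_between (lt_min hτ.1 ha)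
    have hστ := (hσ.trans_le (min_le_left _ _)).le
    have hsub₁ : Icc σ τ ⊆ Ioo a c₁ := fun s hs =>
      ⟨haσ.trans_le hs.1, hs.2.trans_lt (hτ.2.trans_le (min_le_left _ _))⟩
    have hsub₂ : Icc σ τ ⊆ Ioo a c₂ := fun s hs =>
      ⟨haσ.trans_le hs.1, hs.2.trans_lt (hτ.2.trans_le (min_le_right _ _))⟩
    have hσ₁ := hsub₁ (left_mem_Icc.2 hστ)
    have hσ₂ := hsub₂ (left_mem_Icc.2 hστ)
    have hσβ := hσ.trans_le (min_le_right _ _)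
    obtain ⟨hr, hx⟩ : r₁ σ = r₂ σ ∧ q₁ (r₁ σ) = q₂ (r₂ σ) := by
      rcases le_total (r₁ σ) (r₂ σ) with h | h
      · exact P₁.eq_of_r_le P₂ N hg hq hσ₁ hσ₂ hσβ h
      · refine (P₂.eq_of_r_le P₁ N ?_ ?_ hσ₂ hσ₁ hσβ h).imp Eq.symm Eq.symm
        · simpa only [neg_sub, neg_zero] using hg.neg
        · simpa only [neg_sub, neg_zero] using hq.neg
    have := (P₁.branch.mono hsub₁).eqOn_of_eq (P₂.branch.mono hsub₂) N.cont.continuousOn hr hx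
    exact ⟨this.1 (right_mem_Icc.2 hστ), this.2 (right_mem_Icc.2 hστ)⟩
  exact ⟨fun τ hτ => (main τ hτ).1, fun τ hτ => (main τ hτ).2⟩

theorem r_lt_of_lt (P₁ : RisingPiece k f g₁ q₁ s₁ J₁ a₁ c₁ r₁)
    (P₂ : RisingPiece k f g₂ q₂ s₂ J₂ a₂ c₂ r₂) (N : Nonlinearity k f b β) (hs : s₁ ≤ s₂)
    (hg₁ : ContinuousOn g₁ (Ici s₂)) (hg₂ : ContinuousOn g₂ (Ici s₂)) {l : ℝ} (hl : 0 ≤ l)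
    (hq₁ : Tendsto q₁ (𝓝[>] s₂) (𝓝 l)) (hq₂ : Tendsto q₂ (𝓝[>] s₂) (𝓝 0))
    (hβ : g₁ s₂ < -β) (hg : g₂ s₂ < g₁ s₂) (hτ₁ : τ ∈ Ioo a₁ c₁) (hτ₂ : τ ∈ Ioo a₂ c₂)
    (hτ : τ < -β) : r₁ τ < r₂ τ := by
  by_contra! hle
  have hs₂ : 0 ≤ s₂ := P₁.nonneg.trans hs
  have hmem : r₂ τ ∈ Ioc s₂ (r₁ τ) := ⟨P₂.lt_of_mem _ (P₂.r_mem hτ₂), hle⟩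
  have hgτ : ∀ t ∈ Ioc s₂ (r₁ τ), g₁ t ≤ τ := fun t ht =>
    P₁.le_of_r_le (P₁.Ioc_subset _ (P₁.r_mem hτ₁) ⟨hs.trans_lt ht.1, ht.2⟩) hτ₁ ht.2
  have hgβ : ∀ t ∈ Icc s₂ (r₁ τ), β < (-g₁) t := fun t ht => lt_neg.2 <| by
    rcases ht.1.eq_or_lt with rfl | hlt
    · exact hβ
    · exact (hgτ t ⟨hlt, ht.2⟩).trans_lt hτ
  have hlim : Tendsto (wronskian k β (-g₁) (-q₁) (-g₂) (-q₂)) (𝓝[>] s₂)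
      (𝓝 (s₂ ^ (k + 1) * (-l * (-g₂ s₂ - β) - (-g₁ s₂ - β) * -0))) := by
    have hw {g : ℝ → ℝ} (hc : ContinuousOn g (Ici s₂)) :
        Tendsto (fun t => -g t - β) (𝓝[>] s₂) (𝓝 (-g s₂ - β)) :=
      ((hc s₂ self_mem_Ici).mono_left (nhdsWithin_mono _ Ioi_subset_Ici_self)).neg.sub_const β
    exact (((continuous_pow (k + 1)).tendsto s₂).mono_left nhdsWithin_le_nhds).mul
      ((hq₁.neg.mul (hw hg₂)).sub ((hw hg₁).mul hq₂.neg))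
  have hl' : s₂ ^ (k + 1) * (-l * (-g₂ s₂ - β) - (-g₁ s₂ - β) * -0) ≤ 0 := by
    rw [neg_zero, mul_zero, sub_zero]
    exact mul_nonpos_of_nonneg_of_nonpos (pow_nonneg hs₂ _)
      (mul_nonpos_of_nonpos_of_nonneg (neg_nonpos.2 hl) (by linarith))
  have hlt := (P₁.sol.neg N.odd).lt_of_wronskian_nonpos (P₂.sol.neg N.odd) hs₂
    (hg₁.mono Icc_subset_Ici_self).neg (hg₂.mono Icc_subset_Ici_self).neg hgβ (neg_lt_neg hg) hl'
    hlim (fun s t => N.mul_sub_le_mul_sub) _ (Ioc_subset_Icc_self hmem)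
  rw [Pi.neg_apply, Pi.neg_apply, P₂.g_r hτ₂] at hlt
  linarith [hgτ _ hmem]

end RisingPiece

/-- A shape together with inverses of its two monotone pieces, the decreasing one being reflected
so that both pieces rise. -/
structure Profile (k : ℕ) (f w p : ℝ → ℝ) (β T : ℝ) (rA rB : ℝ → ℝ) : Prop
    extends Shape k f w p β T where
  A : RisingPiece k f (-w) (-p) 0 (Ioo 0 T) (-w 0) (-w T) rA
  B : RisingPiece k f w p T {t | T < t ∧ w t < 0} (w T) 0 rB

namespace Shape

variable {k : ℕ} {f w p : ℝ → ℝ} {β T s t : ℝ}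

theorem w_T_neg (h : Shape k f w p β T) : w T < 0 := by linarith [h.w_T, h.β_pos]

theorem w_strictAntiOn (h : Shape k f w p β T) : StrictAntiOn w (Icc 0 T) := by
  refine strictAntiOn_of_deriv_neg (convex_Icc 0 T) (h.cont.mono Icc_subset_Ici_self)
    fun t ht => ?_
  rw [interior_Icc] at ht
  rw [(h.sol.w_deriv t ht.1).deriv]
  exact h.p_neg t ht

theorem w_neg_of_le (h : Shape k f w p β T) (hwt : w t < 0) (hs : T < s) (hst : s ≤ t) :
    w s < 0 :=
  (h.w_nonpos s hs).lt_of_ne fun h0 => hwt.ne (h.eq_zero s hs h0 t hst).1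

theorem w_T_lt (h : Shape k f w p β T) (ht : T < t) (hwt : w t < 0) : w T < w t := by
  refine strictMonoOn_of_deriv_pos (convex_Icc T t)
    (h.sol.w_cont.mono fun s hs => h.T_pos.trans_le hs.1) (fun s hs => ?_)
    (left_mem_Icc.2 ht.le) (right_mem_Icc.2 ht.le) ht
  rw [interior_Icc] at hs
  rw [(h.sol.w_deriv s (h.T_pos.trans hs.1)).deriv]
  exact h.p_pos s hs.1 (h.w_neg_of_le hwt hs.1 hs.2.le)

theorem image_Ioo (h : Shape k f w p β T) : (-w) '' Ioo 0 T = Ioo (-w 0) (-w T) := by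
  have hanti := h.w_strictAntiOn
  have hT := h.T_pos.le
  refine (image_subset_iff.2 fun t ht => ?_).antisymm
    (intermediate_value_Ioo hT (h.cont.mono Icc_subset_Ici_self).neg)
  exact ⟨neg_lt_neg (hanti (left_mem_Icc.2 hT) (Ioo_subset_Icc_self ht) ht.1),
    neg_lt_neg (hanti (Ioo_subset_Icc_self ht) (right_mem_Icc.2 hT) ht.2)⟩

theorem image_setOf_neg (h : Shape k f w p β T) :
    w '' {t | T < t ∧ w t < 0} = Ioo (w T) 0 := by
  refine Subset.antisymm (image_subset_iff.2 fun t ht => ⟨h.w_T_lt ht.1 ht.2, ht.2⟩)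
    fun τ hτ => ?_
  obtain ⟨t, hwt, ht⟩ :=
    ((h.lim.eventually_const_lt hτ.2).and (eventually_gt_atTop T)).exists
  obtain ⟨s, hs, rfl⟩ := intermediate_value_Ioo ht.le
    (h.sol.w_cont.mono fun s hs => h.T_pos.trans_le hs.1) ⟨hτ.1, hwt⟩
  exact ⟨s, ⟨hs.1, hτ.2⟩, rfl⟩

theorem exists_profile (h : Shape k f w p β T) (hodd : ∀ s, f (-s) = -f s) :
    ∃ rA rB, Profile k f w p β T rA rB := by
  set J := {t | T < t ∧ w t < 0}
  have hJo : IsOpen J :=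
    (h.sol.w_cont.mono (Ioi_subset_Ioi h.T_pos.le)).isOpen_inter_preimage isOpen_Ioi isOpen_Iio
  have hJ : ∀ t ∈ J, Ioc T t ⊆ J := fun t ht s hs => ⟨hs.1, h.w_neg_of_le ht.2 hs.1 hs.2⟩
  have hJc : Convex ℝ J := OrdConnected.convex
    ⟨fun s hs t ht _ hτ => hJ t ht ⟨hs.1.trans_le hτ.1, hτ.2⟩⟩
  have hneg := h.sol.neg hodd
  refine ⟨Function.invFunOn (-w) (Ioo 0 T), Function.invFunOn w J, h,
    ⟨hneg, le_rfl, isOpen_Ioo, fun t ht => ht.1, fun t ht s hs => ⟨hs.1, hs.2.trans_lt ht.2⟩,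
      fun t ht => neg_pos.2 (h.p_neg t ht), h.image_Ioo, ?_⟩,
    ⟨h.sol, h.T_pos.le, hJo, fun t ht => ht.1, hJ, fun t ht => h.p_pos t ht.1 ht.2,
      h.image_setOf_neg, ?_⟩⟩
  · exact (hneg.strictMonoOn (convex_Ioo 0 T) (fun t ht => ht.1) fun t ht =>
      neg_pos.2 (h.p_neg t ht)).injOn.leftInvOn_invFunOn
  · exact (h.sol.strictMonoOn hJc (fun t ht => h.T_pos.trans ht.1) fun t ht =>
      h.p_pos t ht.1 ht.2).injOn.leftInvOn_invFunOn

/-- A solution with compact support reaches zero energy at its first zero, any other one only at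
infinity; in both cases the energy is small somewhere on the rising piece. -/
theorem exists_energy_lt (h : Shape k f w p β T) (hf : Continuous f) {ε : ℝ} (hε : 0 < ε) :
    ∃ t, T < t ∧ w t < 0 ∧ energy f w p t < ε := by
  obtain ⟨t, hEt, hTt⟩ :=
    (((h.sol.tendsto_energy hf h.lim).eventually_lt_const hε).and (eventually_gt_atTop T)).exists
  rcases (h.w_nonpos t hTt).lt_or_eq with hwt | hwt
  · exact ⟨t, hTt, hwt, hEt⟩
  have hw : ContinuousOn w (Icc T t) := h.sol.w_cont.mono fun s hs => h.T_pos.trans_le hs.1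
  obtain ⟨Z, ⟨⟨hTZ, hZt⟩, hwZ : w Z = 0⟩, hmin⟩ := (isCompact_Icc.of_isClosed_subset
    (hw.preimage_isClosed_of_isClosed isClosed_Icc (isClosed_singleton (x := (0 : ℝ))))
      inter_subset_left).exists_isLeast ⟨t, right_mem_Icc.2 hTt.le, hwt⟩
  have hTZ : T < Z := hTZ.lt_of_ne (by rintro rfl; exact h.w_T_neg.ne hwZ)
  have hEZ : energy f w p Z < ε := by
    rwa [energy, hwZ, (h.eq_zero Z hTZ hwZ Z le_rfl).2, Fint_zero, mul_zero, zero_pow two_ne_zero,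
      add_zero]
  have hE := (h.sol.energy_deriv hf (h.T_pos.trans hTZ)).continuousAt
  obtain ⟨s, hEs, hs⟩ := (((hE.eventually_lt_const hEZ).filter_mono nhdsWithin_le_nhds).and
    (Ioo_mem_nhdsLT hTZ)).exists
  exact ⟨s, hs.1, (h.w_nonpos s hs.1).lt_of_ne fun hws =>
    hs.2.not_ge (hmin ⟨⟨hs.1.le, hs.2.le.trans hZt⟩, hws⟩), hEs⟩

end Shape

namespace Profile

variable {k : ℕ} {f w p rA rB : ℝ → ℝ} {b β T τ : ℝ}

theorem neg_w_zero_lt (P : Profile k f w p β T rA rB) : -w 0 < -w T := by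
  linarith [P.w_T, P.β_lt, P.β_pos]

theorem branch_A (P : Profile k f w p β T rA rB) {I : Set ℝ}
    (hI : I ⊆ Ico (-β) (-w T)) : Branch k f rA ((-p) ∘ rA) I :=
  P.A.branch.mono fun _ hτ => ⟨(neg_lt_neg P.β_lt).trans_le (hI hτ).1, (hI hτ).2⟩

theorem branch_B (P : Profile k f w p β T rA rB) {I : Set ℝ} (hI : I ⊆ Ioo (w T) 0) :
    Branch k f rB (p ∘ rB) I :=
  P.B.branch.mono hI

theorem tendsto_rA (P : Profile k f w p β T rA rB) : Tendsto rA (𝓝[<] (-w T)) (𝓝 T) :=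
  (P.A.tendsto_r_right P.neg_w_zero_lt).mono_right nhdsWithin_le_nhds

theorem tendsto_rB (P : Profile k f w p β T rA rB) : Tendsto rB (𝓝[>] (w T)) (𝓝 T) :=
  (P.B.tendsto_r_left P.w_T_neg).mono_right nhdsWithin_le_nhds

theorem tendsto_p (P : Profile k f w p β T rA rB) : Tendsto p (𝓝 T) (𝓝 0) :=
  P.p_T ▸ (P.sol.p_deriv T P.T_pos).continuousAt.tendsto

theorem tendsto_neg_p (P : Profile k f w p β T rA rB) (hf : Continuous f) :
    Tendsto (-p) (𝓝[>] 0) (𝓝 0) := by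
  have := (P.sol.tendsto_p_zero hf P.cont).neg
  rwa [neg_zero] at this

theorem tendsto_xA_left (P : Profile k f w p β T rA rB) (hf : Continuous f) :
    Tendsto ((-p) ∘ rA) (𝓝[>] (-w 0)) (𝓝 0) :=
  (P.tendsto_neg_p hf).comp (P.A.tendsto_r_left P.neg_w_zero_lt)

theorem tendsto_xA_right (P : Profile k f w p β T rA rB) :
    Tendsto ((-p) ∘ rA) (𝓝[<] (-w T)) (𝓝 0) := by
  have := (P.tendsto_p.comp P.tendsto_rA).neg
  rwa [neg_zero] at this

theorem tendsto_xB_left (P : Profile k f w p β T rA rB) :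
    Tendsto (p ∘ rB) (𝓝[>] (w T)) (𝓝 0) :=
  P.tendsto_p.comp P.tendsto_rB

theorem levelEnergy_A_pos (P : Profile k f w p β T rA rB) (hf : Continuous f)
    (hτ : τ ∈ Ioo (-w 0) (-w T)) : 0 < levelEnergy (Fint f) ((-p) ∘ rA) τ :=
  P.A.levelEnergy_pos hf (neg_zero (G := ℝ) ▸ P.lim.neg) hτ

theorem tendsto_levelEnergy_B (P : Profile k f w p β T rA rB) (hf : Continuous f) :
    Tendsto (levelEnergy (Fint f) (p ∘ rB)) (𝓝[<] 0) (𝓝 0) := by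
  refine tendsto_order.2 ⟨fun a ha => ?_, fun ε hε => ?_⟩
  · filter_upwards [Ioo_mem_nhdsLT P.w_T_neg] with τ hτ
    exact ha.trans (P.B.levelEnergy_pos hf P.lim hτ)
  · obtain ⟨t, hTt, hwt, hEt⟩ := P.exists_energy_lt hf hε
    have htw := P.B.g_mem ⟨hTt, hwt⟩
    filter_upwards [Ioo_mem_nhdsLT hwt] with τ hτ
    have hτ' : τ ∈ Ioo (w T) 0 := ⟨htw.1.trans hτ.1, hτ.2⟩
    have hr : t ≤ rB τ := (P.B.leftInvOn ⟨hTt, hwt⟩).symm.trans_le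
      (P.B.branch.r_strictMonoOn (convex_Ioo _ _) htw hτ' hτ.1).le
    rw [P.B.levelEnergy_eq hτ']
    exact (P.sol.energy_antitone hf (P.T_pos.trans hTt) (P.B.branch.r_pos τ hτ') hr).trans_lt hEt

theorem tendsto_xB_right (P : Profile k f w p β T rA rB) (hf : Continuous f) :
    Tendsto (p ∘ rB) (𝓝[<] 0) (𝓝 0) := by
  have hF : Tendsto (Fint f) (𝓝[<] 0) (𝓝 (Fint f 0)) :=
    (hasDerivAt_Fint hf 0).continuousAt.tendsto.mono_left nhdsWithin_le_nhds
  have hsqrt := ((P.tendsto_levelEnergy_B hf).sub (hF.const_mul 2)).sqrt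
  rw [Fint_zero, mul_zero, sub_zero, Real.sqrt_zero] at hsqrt
  refine hsqrt.congr' ?_
  filter_upwards [Ioo_mem_nhdsLT P.w_T_neg] with τ hτ
  rw [levelEnergy, add_sub_cancel_right, Real.sqrt_sq (P.B.branch.x_pos τ hτ).le]

theorem tendsto_pohozaev_A (P : Profile k f w p β T rA rB) (N : Nonlinearity k f b β) :
    Tendsto (pohozaev k f (Fint f) rA ((-p) ∘ rA)) (𝓝[<] (-w T))
      (𝓝 (-(T ^ (k + 2) * (2 * Fint f (w T))))) := by
  rw [← Fint_neg N.odd]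
  exact Branch.tendsto_pohozaev nhdsWithin_le_nhds N.Fint_cont.continuousAt
    (N.pohozaevOn_Ici.differentiableAt _ (lt_neg.2 P.w_T).le).continuousAt P.tendsto_rA
    P.tendsto_xA_right

theorem tendsto_pohozaev_B (P : Profile k f w p β T rA rB) (N : Nonlinearity k f b β) :
    Tendsto (pohozaev k f (Fint f) rB (p ∘ rB)) (𝓝[>] (w T))
      (𝓝 (-(T ^ (k + 2) * (2 * Fint f (w T))))) :=
  Branch.tendsto_pohozaev nhdsWithin_le_nhds N.Fint_cont.continuousAt
    (N.pohozaevOn_Iic.differentiableAt _ P.w_T.le).continuousAt P.tendsto_rB P.tendsto_xB_left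

theorem le_pohozaev_A (P : Profile k f w p β T rA rB) (N : Nonlinearity k f b β)
    (hτ : τ ∈ Ico β (-w T)) : -(T ^ (k + 2) * (2 * Fint f (w T))) ≤
      pohozaev k f (Fint f) rA ((-p) ∘ rA) τ :=
  (P.branch_A (Ico_subset_Ico_left (by linarith [hτ.1, N.β_pos]))).le_pohozaev_of_tendsto hτ.2
    (N.pohozaevOn_Ici.mono fun _ hs => hτ.1.trans hs.1) (P.tendsto_pohozaev_A N)

theorem pohozaev_B_le (P : Profile k f w p β T rA rB) (N : Nonlinearity k f b β)
    (hτ : τ ∈ Ioc (w T) (-β)) : pohozaev k f (Fint f) rB (p ∘ rB) τ ≤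
      -(T ^ (k + 2) * (2 * Fint f (w T))) :=
  (P.branch_B fun s hs => ⟨hs.1, by linarith [hs.2, hτ.2, N.β_pos]⟩).pohozaev_le_of_tendsto hτ.1
    (N.pohozaevOn_Iic.mono fun _ hs => hs.2.trans hτ.2) (P.tendsto_pohozaev_B N)

theorem pohozaev_limit_neg (P : Profile k f w p β T rA rB) (N : Nonlinearity k f b β) :
    -(T ^ (k + 2) * (2 * Fint f (w T))) < 0 :=
  neg_neg_of_pos <| mul_pos (pow_pos P.T_pos _) <| mul_pos two_pos <|
    N.Fint_pos (lt_abs.2 (Or.inr (lt_neg.2 P.w_T)))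

end Profile

namespace Profile

variable {k : ℕ} {f w₁ w₂ p₁ p₂ rA₁ rA₂ rB₁ rB₂ : ℝ → ℝ} {b β T₁ T₂ c τ : ℝ}

theorem rA_lt (P₁ : Profile k f w₁ p₁ β T₁ rA₁ rB₁) (P₂ : Profile k f w₂ p₂ β T₂ rA₂ rB₂)
    (N : Nonlinearity k f b β) (hα : w₁ 0 < w₂ 0) (hτ : τ ∈ Ioo (-w₁ 0) (-β)) :
    rA₁ τ < rA₂ τ :=
  P₁.A.r_lt_of_lt P₂.A N le_rfl P₁.cont.neg P₂.cont.neg le_rfl (P₁.tendsto_neg_p N.cont)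
    (P₂.tendsto_neg_p N.cont) (neg_lt_neg P₁.β_lt) (neg_lt_neg hα)
    ⟨hτ.1, by linarith [hτ.2, P₁.w_T, P₁.β_pos]⟩
    ⟨by linarith [hτ.1], by linarith [hτ.2, P₂.w_T, P₁.β_pos]⟩ hτ.2

theorem rB_lt (P₁ : Profile k f w₁ p₁ β T₁ rA₁ rB₁) (P₂ : Profile k f w₂ p₂ β T₂ rA₂ rB₂)
    (N : Nonlinearity k f b β) (hS : w₂ T₂ < w₁ T₁) (hT : T₁ < T₂)
    (hτ : τ ∈ Ioo (w₁ T₁) (-β)) : rB₁ τ < rB₂ τ := by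
  have hτ₁ : τ ∈ Ioo (w₁ T₁) 0 := ⟨hτ.1, hτ.2.trans (neg_neg_of_pos P₁.β_pos)⟩
  have hτ₂ : τ ∈ Ioo (w₂ T₂) 0 := ⟨hS.trans hτ.1, hτ₁.2⟩
  rcases le_or_gt (rB₁ τ) T₂ with hle | hgt
  · exact hle.trans_lt (P₂.B.lt_of_mem _ (P₂.B.r_mem hτ₂))
  have hT₂ := P₁.B.Ioc_subset _ (P₁.B.r_mem hτ₁) ⟨hT, hgt.le⟩
  have hsub : Ici T₂ ⊆ Ioi 0 := Ici_subset_Ioi.2 P₂.T_pos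
  exact P₁.B.r_lt_of_lt P₂.B N hT.le (P₁.sol.w_cont.mono hsub) (P₂.sol.w_cont.mono hsub)
    (P₁.B.q_pos _ hT₂).le
    ((P₁.sol.p_deriv _ P₂.T_pos).continuousAt.tendsto.mono_left nhdsWithin_le_nhds)
    (P₂.tendsto_p.mono_left nhdsWithin_le_nhds) ((P₁.B.le_of_r_le hT₂ hτ₁ hgt.le).trans_lt hτ.2)
    (hS.trans (P₁.w_T_lt hT₂.1 hT₂.2)) hτ₁ hτ₂ hτ.2

theorem A_ordered (P₁ : Profile k f w₁ p₁ β T₁ rA₁ rB₁) (P₂ : Profile k f w₂ p₂ β T₂ rA₂ rB₂)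
    (N : Nonlinearity k f b β) (hα : w₁ 0 < w₂ 0) :
    rA₁ (-β) ≤ rA₂ (-β) ∧ ((-p₁) ∘ rA₁) (-β) < ((-p₂) ∘ rA₂) (-β) :=
  Branch.r_le_and_x_lt_of_tendsto
    (P₁.A.branch.mono fun τ hτ => ⟨hτ.1, by linarith [hτ.2, P₁.w_T, P₁.β_pos]⟩)
    (P₂.A.branch.mono fun τ hτ => ⟨by linarith [hτ.1], by linarith [hτ.2, P₂.w_T, P₁.β_pos]⟩)
    N.cont.continuousOn (neg_lt_neg P₁.β_lt) (fun _ => P₁.rA_lt P₂ N hα) (P₁.tendsto_xA_left N.cont)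

theorem B_ordered (P₁ : Profile k f w₁ p₁ β T₁ rA₁ rB₁) (P₂ : Profile k f w₂ p₂ β T₂ rA₂ rB₂)
    (N : Nonlinearity k f b β) (hS : w₂ T₂ < w₁ T₁) (hT : T₁ < T₂) :
    rB₁ (-β) ≤ rB₂ (-β) ∧ (p₁ ∘ rB₁) (-β) < (p₂ ∘ rB₂) (-β) :=
  Branch.r_le_and_x_lt_of_tendsto
    (P₁.branch_B fun τ hτ => ⟨hτ.1, by linarith [hτ.2, P₁.β_pos]⟩)
    (P₂.branch_B fun τ hτ => ⟨by linarith [hτ.1], by linarith [hτ.2, P₁.β_pos]⟩)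
    N.cont.continuousOn P₁.w_T (fun _ => P₁.rB_lt P₂ N hS hT) P₁.tendsto_xB_left

theorem false_of_B_ordered (P₁ : Profile k f w₁ p₁ β T₁ rA₁ rB₁)
    (P₂ : Profile k f w₂ p₂ β T₂ rA₂ rB₂) (N : Nonlinearity k f b β)
    (hx : (p₁ ∘ rB₁) (-β) < (p₂ ∘ rB₂) (-β))
    (hr : rB₁ (-β) < rB₂ (-β) ∨ (rB₂ (-β) ≤ rB₁ (-β) ∧
      rB₁ (-β) * (p₁ ∘ rB₁) (-β) < rB₂ (-β) * (p₂ ∘ rB₂) (-β))) : False := by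
  have hβ : -β < 0 := neg_neg_of_pos N.β_pos
  have hsub₁ : Ico (-β) 0 ⊆ Ioo (w₁ T₁) 0 := fun τ hτ => ⟨P₁.w_T.trans_le hτ.1, hτ.2⟩
  have hsub₂ : Ico (-β) 0 ⊆ Ioo (w₂ T₂) 0 := fun τ hτ => ⟨P₂.w_T.trans_le hτ.1, hτ.2⟩
  have hE₁ : ∀ τ ∈ Ico (-β) 0, 0 < levelEnergy (Fint f) (p₁ ∘ rB₁) τ := fun τ hτ =>
    P₁.B.levelEnergy_pos N.cont P₁.lim (hsub₁ hτ)
  have hE₂ : ∀ τ ∈ Ico (-β) 0, 0 < levelEnergy (Fint f) (p₂ ∘ rB₂) τ := fun τ hτ =>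
    P₂.B.levelEnergy_pos N.cont P₂.lim (hsub₂ hτ)
  have hF : ∀ τ ∈ Ico (-β) 0, Fint f τ ≤ 0 := fun τ hτ =>
    N.Fint_nonpos (abs_le.2 ⟨hτ.1, by linarith [hτ.2]⟩)
  rcases hr with hlt | ⟨hle, hlt⟩
  · refine Branch.not_tendsto_of_r_lt_of_x_lt (d := -b) (P₁.branch_B hsub₁) (P₂.branch_B hsub₂)
      (hasDerivAt_Fint N.cont) hF N.cont
      ⟨neg_le_neg N.b_lt.le, neg_neg_of_pos N.hf1.2.2.1⟩ (fun τ hτ => ?_) hE₁ hE₂ hlt hx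
      (P₂.tendsto_levelEnergy_B N.cont) (P₂.tendsto_xB_right N.cont)
    have := N.f_nonpos (s := -τ) ⟨by linarith [hτ.2], by linarith [hτ.1]⟩
    rw [N.odd] at this
    linarith
  · refine Branch.not_tendsto_of_radialEnergy_lt (P₁.branch_B hsub₁) (P₂.branch_B hsub₂) hβ
      (hasDerivAt_Fint N.cont) hF hE₁ hE₂ hle ?_ (P₂.tendsto_levelEnergy_B N.cont)
    have hx₁ := (P₁.branch_B hsub₁).x_pos (-β) (left_mem_Ico.2 hβ)
    simp only [radialEnergy, levelEnergy, Fint_neg N.odd, N.Fint_β, mul_zero, add_zero]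
    rwa [Real.sqrt_sq hx₁.le, Real.sqrt_sq (hx₁.trans hx).le]

theorem false_of_forall_rA_lt (P₁ : Profile k f w₁ p₁ β T₁ rA₁ rB₁)
    (P₂ : Profile k f w₂ p₂ β T₂ rA₂ rB₂) (N : Nonlinearity k f b β)
    (hx : ((-p₁) ∘ rA₁) (-β) < ((-p₂) ∘ rA₂) (-β))
    (hr : ∀ τ ∈ Ico (-β) (min (-w₁ T₁) (-w₂ T₂)), rA₁ τ < rA₂ τ) : False := by
  have hβ := N.β_pos
  have hS : w₂ T₂ < w₁ T₁ := by
    by_contra! hle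
    rw [min_eq_right (neg_le_neg hle)] at hr
    have h₁ := P₁.branch_A (Ico_subset_Ico_right (neg_le_neg hle))
    have h₂ := P₂.branch_A Subset.rfl
    have hxr : ∀ τ ∈ Ico (-β) (-w₂ T₂), ((-p₁) ∘ rA₁) τ < ((-p₂) ∘ rA₂) τ := fun τ hτ => by
      have hsub : Icc (-β) τ ⊆ Ico (-β) (-w₂ T₂) := Icc_subset_Ico_right hτ.2
      exact (h₁.mono hsub).x_lt_of_r_le (h₂.mono hsub) N.cont.continuousOn
        (fun s hs => (hr s (hsub hs)).le) hx τ (right_mem_Icc.2 hτ.1)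
    have hsub : Ico β (-w₂ T₂) ⊆ Ico (-β) (-w₂ T₂) := Ico_subset_Ico_left (by linarith)
    exact Branch.not_tendsto_of_forall_r_le (h₁.mono hsub) (h₂.mono hsub) (lt_neg.2 P₂.w_T)
      (fun τ hτ => (N.f_pos (N.b_lt.trans_le hτ.1)).le) (fun τ hτ => (hr τ (hsub hτ)).le)
      (fun τ hτ => hxr τ (hsub hτ)) P₂.tendsto_xA_right
  rw [min_eq_left (neg_le_neg hS.le)] at hr
  have hlevel : -w₁ T₁ ∈ Ioo (-w₂ 0) (-w₂ T₂) :=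
    ⟨by linarith [P₁.w_T, P₂.β_lt], neg_lt_neg hS⟩
  have hT : T₁ ≤ rA₂ (-w₁ T₁) := by
    refine le_of_tendsto_of_tendsto P₁.tendsto_rA
      ((P₂.A.r_continuousAt hlevel).tendsto.mono_left nhdsWithin_le_nhds) ?_
    filter_upwards [Ico_mem_nhdsLT (show -β < -w₁ T₁ by linarith [P₁.w_T])] with τ hτ
    exact (hr τ hτ).le
  obtain ⟨hrB, hxB⟩ := P₁.B_ordered P₂ N hS (hT.trans_lt (P₂.A.r_mem hlevel).2)
  refine P₁.false_of_B_ordered P₂ N hxB (hrB.lt_or_eq.imp_right fun heq => ⟨heq.ge, ?_⟩)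
  rw [heq]
  exact mul_lt_mul_of_pos_left hxB (P₂.B.branch.r_pos _ ⟨P₂.w_T, by linarith⟩)

theorem exists_comparison_level (P₁ : Profile k f w₁ p₁ β T₁ rA₁ rB₁)
    (P₂ : Profile k f w₂ p₂ β T₂ rA₂ rB₂) (N : Nonlinearity k f b β)
    (hc : c ∈ Ico (-β) (min (-w₁ T₁) (-w₂ T₂))) (hr : rA₁ c = rA₂ c)
    (hx : ((-p₁) ∘ rA₁) c < ((-p₂) ∘ rA₂) c) :
    ∃ e ∈ Ico β (min (-w₁ T₁) (-w₂ T₂)), rA₂ e ≤ rA₁ e ∧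
      momentum k rA₁ ((-p₁) ∘ rA₁) e < momentum k rA₂ ((-p₂) ∘ rA₂) e ∧
      pohozaev k f (Fint f) rA₂ ((-p₂) ∘ rA₂) e < pohozaev k f (Fint f) rA₁ ((-p₁) ∘ rA₁) e := by
  have h₁ := P₁.branch_A (Ico_subset_Ico_right (min_le_left (-w₁ T₁) (-w₂ T₂)))
  have h₂ := P₂.branch_A (Ico_subset_Ico_right (min_le_right (-w₁ T₁) (-w₂ T₂)))
  have hr₁ := h₁.r_pos c hc
  have hx₁ := h₁.x_pos c hc
  rcases le_or_gt β c with hβc | hcβ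
  · refine ⟨c, ⟨hβc, hc.2⟩, hr.ge, ?_, h₁.pohozaev_lt_of_r_eq hc hr hx (div_nonneg ?_ ?_)⟩
    · rw [momentum, momentum, ← hr]
      exact mul_lt_mul_of_pos_left hx (pow_pos hr₁ _)
    · rcases hβc.eq_or_lt with rfl | hlt
      · exact N.Fint_β.ge
      · exact (N.Fint_pos (hlt.trans_le (le_abs_self c))).le
    · exact (N.f_pos (N.b_lt.trans_le hβc)).le
  have hβM : β ∈ Ico (-β) (min (-w₁ T₁) (-w₂ T₂)) :=
    ⟨neg_le_self N.β_pos.le, lt_min (lt_neg.2 P₁.w_T) (lt_neg.2 P₂.w_T)⟩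
  have hsub : Icc c β ⊆ Ico (-β) (min (-w₁ T₁) (-w₂ T₂)) := fun s hs =>
    ⟨hc.1.trans hs.1, hs.2.trans_lt hβM.2⟩
  have hW : rA₁ c ^ (2 * k + 2) * levelEnergy (Fint f) ((-p₁) ∘ rA₁) c <
      rA₂ c ^ (2 * k + 2) * levelEnergy (Fint f) ((-p₂) ∘ rA₂) c := by
    rw [← hr]
    exact mul_lt_mul_of_pos_left
      (add_lt_add_left (pow_lt_pow_left₀ hx hx₁.le two_ne_zero) _) (pow_pos hr₁ _)
  obtain ⟨hrβ, -, hgap⟩ := Branch.energy_comparison (h₁.mono hsub) (h₂.mono hsub)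
    (hasDerivAt_Fint N.cont) (fun τ hτ => N.Fint_nonpos (abs_le.2 ⟨hc.1.trans hτ.1, hτ.2⟩))
    (fun τ hτ => (P₁.levelEnergy_A_pos N.cont ⟨(neg_lt_neg P₁.β_lt).trans_le (hsub hτ).1,
      (hsub hτ).2.trans_le (min_le_left _ _)⟩).le) hr.ge hW β (right_mem_Icc.2 hcβ.le)
  have hm : momentum k rA₁ ((-p₁) ∘ rA₁) β < momentum k rA₂ ((-p₂) ∘ rA₂) β := by
    refine lt_of_pow_lt_pow_left₀ 2 (h₂.momentum_pos hβM).le ?_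
    have hWβ := (sub_pos.2 hW).trans_le hgap
    simp only [levelEnergy, N.Fint_β] at hWβ
    simp only [momentum]
    ring_nf at hWβ ⊢
    linarith
  exact ⟨β, ⟨le_rfl, hβM.2⟩, hrβ, hm, h₁.pohozaev_lt_of_eq_zero h₂ hβM N.Fint_β hrβ hm⟩

theorem depth_lt_of_comparison_level (P₁ : Profile k f w₁ p₁ β T₁ rA₁ rB₁)
    (P₂ : Profile k f w₂ p₂ β T₂ rA₂ rB₂) (N : Nonlinearity k f b β)
    (hc : c ∈ Ico β (min (-w₁ T₁) (-w₂ T₂))) (hr : rA₂ c ≤ rA₁ c)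
    (hm : momentum k rA₁ ((-p₁) ∘ rA₁) c < momentum k rA₂ ((-p₂) ∘ rA₂) c)
    (hP : pohozaev k f (Fint f) rA₂ ((-p₂) ∘ rA₂) c <
      pohozaev k f (Fint f) rA₁ ((-p₁) ∘ rA₁) c) :
    w₂ T₂ < w₁ T₁ ∧
      -(T₂ ^ (k + 2) * (2 * Fint f (w₂ T₂))) < -(T₁ ^ (k + 2) * (2 * Fint f (w₁ T₁))) := by
  have hβc : -β ≤ c := (neg_le_self N.β_pos.le).trans hc.1
  have hf : ∀ τ, c ≤ τ → 0 ≤ f τ := fun τ hτ => (N.f_pos (N.b_lt.trans_le (hc.1.trans hτ))).le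
  have hS : w₂ T₂ < w₁ T₁ := by
    by_contra! hle
    have hmlim := (P₂.tendsto_rA.pow (k + 1)).mul P₂.tendsto_xA_right
    rw [mul_zero] at hmlim
    exact Branch.not_tendsto_momentum_of_momentum_lt
      (P₁.branch_A (Ico_subset_Ico hβc (neg_le_neg hle))) (P₂.branch_A (Ico_subset_Ico_left hβc))
      (hc.2.trans_le (min_le_right _ _)) (fun τ hτ => hf τ hτ.1) hr hm hmlim
  have hc₁ : c < -w₁ T₁ := hc.2.trans_le (min_le_left _ _)
  have h₁ := P₁.branch_A (Ico_subset_Ico_left hβc)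
  have h₂ : Branch k f rA₂ ((-p₂) ∘ rA₂) (Icc c (-w₁ T₁)) := P₂.branch_A fun τ hτ =>
    ⟨hβc.trans hτ.1, hτ.2.trans_lt (neg_lt_neg hS)⟩
  refine ⟨hS, (P₂.le_pohozaev_A N ⟨(lt_neg.2 P₁.w_T).le, neg_lt_neg hS⟩).trans_lt
    (h₁.pohozaev_lt_of_tendsto h₂ hc₁ (N.pohozaevOn_Ici.mono fun τ hτ => hc.1.trans hτ.1)
      (fun τ hτ => ?_) hP (P₁.tendsto_pohozaev_A N))⟩
  exact ((h₁.mono (Icc_subset_Ico_right hτ.2)).momentum_lt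
    (h₂.mono (Icc_subset_Icc_right hτ.2.le)) (fun s hs => hf s hs.1) hr hm τ
    (right_mem_Icc.2 hτ.1)).le

theorem false_of_crossing (P₁ : Profile k f w₁ p₁ β T₁ rA₁ rB₁)
    (P₂ : Profile k f w₂ p₂ β T₂ rA₂ rB₂) (N : Nonlinearity k f b β)
    (hc : c ∈ Ico (-β) (min (-w₁ T₁) (-w₂ T₂))) (hr : rA₁ c = rA₂ c)
    (hx : ((-p₁) ∘ rA₁) c < ((-p₂) ∘ rA₂) c) : False := by
  obtain ⟨e, he, hre, hme, hPe⟩ := P₁.exists_comparison_level P₂ N hc hr hx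
  obtain ⟨hS, hL⟩ := P₁.depth_lt_of_comparison_level P₂ N he hre hme hPe
  have hβ := neg_neg_of_pos N.β_pos
  have h₂ : Branch k f rB₂ (p₂ ∘ rB₂) (Icc (w₁ T₁) (-β)) := P₂.branch_B fun t ht =>
    ⟨hS.trans_le ht.1, ht.2.trans_lt hβ⟩
  obtain ⟨τ, hτ, hxτ, hmτ, hPτ⟩ := h₂.exists_ordered_of_tendsto P₁.w_T
    (N.pohozaevOn_Iic.mono fun t ht => ht.2) P₁.tendsto_rB P₁.tendsto_xB_left
    ((P₂.pohozaev_B_le N ⟨hS, P₁.w_T.le⟩).trans_lt hL)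
  have hmem : ∀ t ∈ Icc τ (-β), t ∈ Ioc (w₁ T₁) (-β) := fun t ht => ⟨hτ.1.trans_le ht.1, ht.2⟩
  have h₁ : Branch k f rB₁ (p₁ ∘ rB₁) (Icc τ (-β)) := P₁.branch_B fun t ht =>
    ⟨(hmem t ht).1, ht.2.trans_lt hβ⟩
  have hFβ : Fint f (-β) = 0 := by rw [Fint_neg N.odd, N.Fint_β]
  have hf : ∀ t ∈ Icc τ (-β), f t ≤ 0 := fun t ht => by
    have := N.f_pos (s := -t) (by linarith [ht.2, N.b_lt])
    rw [N.odd] at this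
    linarith
  have hF : ∀ t ∈ Icc τ (-β), 0 ≤ Fint f t := fun t ht => by
    rcases ht.2.eq_or_lt with rfl | hlt
    · exact hFβ.ge
    · exact (N.Fint_pos (lt_abs.2 (Or.inr (lt_neg.2 hlt)))).le
  obtain ⟨hxβ, hrβ⟩ := h₁.return_comparison (h₂.mono (Icc_subset_Icc_left hτ.1.le)) hτ.2.le
    (N.pohozaevOn_Iic.mono fun t ht => ht.2) hf hF hFβ
    (fun t ht => ((P₁.pohozaev_B_le N (hmem t ht)).trans_lt (P₁.pohozaev_limit_neg N)).le)
    hxτ hmτ.le hPτ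
  exact P₁.false_of_B_ordered P₂ N hxβ hrβ

theorem not_lt (P₁ : Profile k f w₁ p₁ β T₁ rA₁ rB₁) (P₂ : Profile k f w₂ p₂ β T₂ rA₂ rB₂)
    (N : Nonlinearity k f b β) : ¬w₁ 0 < w₂ 0 := by
  intro hα
  obtain ⟨hr, hx⟩ := P₁.A_ordered P₂ N hα
  have hβM : -β < min (-w₁ T₁) (-w₂ T₂) :=
    lt_min (by linarith [P₁.w_T, N.β_pos]) (by linarith [P₂.w_T, N.β_pos])
  rcases hr.eq_or_lt with heq | hlt
  · exact P₁.false_of_crossing P₂ N (left_mem_Ico.2 hβM) heq hx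
  have h₁ := P₁.branch_A (Ico_subset_Ico_right (min_le_left (-w₁ T₁) (-w₂ T₂)))
  have h₂ := P₂.branch_A (Ico_subset_Ico_right (min_le_right (-w₁ T₁) (-w₂ T₂)))
  rcases h₁.forall_r_lt_or_exists_eq h₂ hlt with hall | ⟨c, hc, hrc, hle⟩
  · exact P₁.false_of_forall_rA_lt P₂ N hx hall
  · have hsub : Icc (-β) c ⊆ Ico (-β) (min (-w₁ T₁) (-w₂ T₂)) := Icc_subset_Ico_right hc.2
    exact P₁.false_of_crossing P₂ N hc hrc ((h₁.mono hsub).x_lt_of_r_le (h₂.mono hsub)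
      N.cont.continuousOn hle hx c (right_mem_Icc.2 hc.1))

end Profile

theorem RisingPiece.g_eq_of_eqOn {k : ℕ} {f g₁ q₁ g₂ q₂ r₁ r₂ : ℝ → ℝ} {J₁ J₂ : Set ℝ}
    {t₀ a c₁ c₂ t : ℝ} (P₁ : RisingPiece k f g₁ q₁ t₀ J₁ a c₁ r₁)
    (P₂ : RisingPiece k f g₂ q₂ t₀ J₂ a c₂ r₂) (h : EqOn r₁ r₂ (Ioo a (min c₁ c₂)))
    (ht : t ∈ J₁) (hlt : g₁ t < c₂) : g₁ t = g₂ t := by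
  have hgt := P₁.g_mem ht
  rw [← P₁.leftInvOn ht, P₁.g_r hgt, h ⟨hgt.1, lt_min hgt.2 hlt⟩, P₂.g_r ⟨hgt.1, hlt⟩]

namespace Profile

variable {k : ℕ} {f w₁ w₂ p₁ p₂ rA₁ rA₂ rB₁ rB₂ : ℝ → ℝ} {b β T₁ T₂ t : ℝ}

theorem A_eqOn (P₁ : Profile k f w₁ p₁ β T₁ rA₁ rB₁) (P₂ : Profile k f w₂ p₂ β T₂ rA₂ rB₂)
    (N : Nonlinearity k f b β) (h0 : w₁ 0 = w₂ 0) :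
    EqOn rA₁ rA₂ (Ioo (-w₁ 0) (min (-w₁ T₁) (-w₂ T₂))) ∧
      EqOn ((-p₁) ∘ rA₁) ((-p₂) ∘ rA₂) (Ioo (-w₁ 0) (min (-w₁ T₁) (-w₂ T₂))) := by
  have hw {w : ℝ → ℝ} (hc : ContinuousOn w (Ici 0)) :
      Tendsto (-w) (𝓝[>] 0) (𝓝 (-w 0)) :=
    ((hc 0 self_mem_Ici).mono_left (nhdsWithin_mono _ Ioi_subset_Ici_self)).neg
  refine P₁.A.eqOn (h0 ▸ P₂.A) N (neg_lt_neg P₁.β_lt) ?_ ?_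
  · simpa only [h0, sub_self] using (hw P₂.cont).sub (hw P₁.cont)
  · simpa only [sub_self] using (P₂.tendsto_neg_p N.cont).sub (P₁.tendsto_neg_p N.cont)

theorem w_T_le (P₁ : Profile k f w₁ p₁ β T₁ rA₁ rB₁) (P₂ : Profile k f w₂ p₂ β T₂ rA₂ rB₂)
    (N : Nonlinearity k f b β) (h0 : w₁ 0 = w₂ 0) : w₁ T₁ ≤ w₂ T₂ := by
  by_contra! hlt
  have hlevel : -w₁ T₁ ∈ Ioo (-w₂ 0) (-w₂ T₂) := ⟨h0 ▸ P₁.neg_w_zero_lt, neg_lt_neg hlt⟩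
  have hx := (P₁.A_eqOn P₂ N h0).2
  rw [min_eq_left (neg_le_neg hlt.le)] at hx
  have hlim : Tendsto ((-p₁) ∘ rA₁) (𝓝[<] (-w₁ T₁)) (𝓝 (((-p₂) ∘ rA₂) (-w₁ T₁))) :=
    ((P₂.A.branch.x_deriv _ hlevel).continuousAt.tendsto.mono_left nhdsWithin_le_nhds).congr'
      (hx.symm.eventuallyEq_of_mem (Ioo_mem_nhdsLT P₁.neg_w_zero_lt))
  exact (P₂.A.branch.x_pos _ hlevel).ne (tendsto_nhds_unique P₁.tendsto_xA_right hlim)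

theorem w_T_eq (P₁ : Profile k f w₁ p₁ β T₁ rA₁ rB₁) (P₂ : Profile k f w₂ p₂ β T₂ rA₂ rB₂)
    (N : Nonlinearity k f b β) (h0 : w₁ 0 = w₂ 0) : w₁ T₁ = w₂ T₂ :=
  (P₁.w_T_le P₂ N h0).antisymm (P₂.w_T_le P₁ N h0.symm)

theorem T_eq (P₁ : Profile k f w₁ p₁ β T₁ rA₁ rB₁) (P₂ : Profile k f w₂ p₂ β T₂ rA₂ rB₂)
    (N : Nonlinearity k f b β) (h0 : w₁ 0 = w₂ 0) : T₁ = T₂ := by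
  have hT := P₁.w_T_eq P₂ N h0
  have hr := (P₁.A_eqOn P₂ N h0).1
  rw [← hT, min_self] at hr
  exact tendsto_nhds_unique_of_eventuallyEq P₁.tendsto_rA (hT ▸ P₂.tendsto_rA)
    (hr.eventuallyEq_of_mem (Ioo_mem_nhdsLT P₁.neg_w_zero_lt))

theorem eqOn_Ioo (P₁ : Profile k f w₁ p₁ β T₁ rA₁ rB₁) (P₂ : Profile k f w₂ p₂ β T₂ rA₂ rB₂)
    (N : Nonlinearity k f b β) (h0 : w₁ 0 = w₂ 0) : EqOn w₁ w₂ (Ioo 0 T₁) := fun _ ht =>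
  neg_injective <| P₁.A.g_eq_of_eqOn (h0 ▸ P₂.A) (P₁.A_eqOn P₂ N h0).1 ht
    ((P₁.A.g_mem ht).2.trans_eq (congrArg Neg.neg (P₁.w_T_eq P₂ N h0)))

theorem eq_of_neg (P₁ : Profile k f w₁ p₁ β T₁ rA₁ rB₁) (P₂ : Profile k f w₂ p₂ β T₂ rA₂ rB₂)
    (N : Nonlinearity k f b β) (h0 : w₁ 0 = w₂ 0) (ht : T₁ < t) (hneg : w₁ t < 0) :
    w₁ t = w₂ t := by
  obtain rfl := P₁.T_eq P₂ N h0
  have hT := P₁.w_T_eq P₂ N h0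
  have B₂ := P₂.B
  rw [← hT] at B₂
  have hq : Tendsto (fun t => p₂ t - p₁ t) (𝓝[>] T₁) (𝓝 0) := by
    simpa only [sub_self] using
      (P₂.tendsto_p.sub P₁.tendsto_p).mono_left nhdsWithin_le_nhds
  refine P₁.B.g_eq_of_eqOn B₂ (P₁.B.eqOn B₂ N P₁.w_T ?_ hq).1 ⟨ht, hneg⟩ hneg
  exact tendsto_sub_nhdsGT_of_eq (P₁.sol.w_deriv _ P₁.T_pos).continuousAt
    (P₂.sol.w_deriv _ P₁.T_pos).continuousAt hT

theorem eqOn_Ici (P₁ : Profile k f w₁ p₁ β T₁ rA₁ rB₁) (P₂ : Profile k f w₂ p₂ β T₂ rA₂ rB₂)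
    (N : Nonlinearity k f b β) (h0 : w₁ 0 = w₂ 0) : EqOn w₁ w₂ (Ici 0) := by
  intro t ht
  rcases (mem_Ici.1 ht).eq_or_lt with rfl | ht₀
  · exact h0
  rcases lt_trichotomy t T₁ with hlt | rfl | hgt
  · exact P₁.eqOn_Ioo P₂ N h0 ⟨ht₀, hlt⟩
  · rw [P₁.w_T_eq P₂ N h0, ← P₁.T_eq P₂ N h0]
  have hgt₂ : T₂ < t := P₁.T_eq P₂ N h0 ▸ hgt
  rcases (P₁.w_nonpos t hgt).lt_or_eq with hneg | hzero₁
  · exact P₁.eq_of_neg P₂ N h0 hgt hneg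
  rcases (P₂.w_nonpos t hgt₂).lt_or_eq with hneg | hzero₂
  · exact (P₂.eq_of_neg P₁ N h0.symm hgt₂ hneg).symm
  · rw [hzero₁, hzero₂]

end Profile

theorem Sol.of_boundState {k : ℕ} {f u : ℝ → ℝ} (h : BoundState (k + 2) f u) :
    Sol k f u (deriv u) where
  w_deriv t ht := (h.2.1 t ht).1.hasDerivAt
  p_deriv t ht := by
    refine (h.2.1 t ht).2.hasDerivAt.congr_deriv ?_
    have := h.2.2.1 t ht
    push_cast at this
    linear_combination this

theorem OneNodeState.exists_of_boundState {k : ℕ} {f u : ℝ → ℝ} (h : BoundState (k + 2) f u)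
    (hpos : 0 < u 0) (hc : ExactSignChanges u 1) : ∃ z, OneNodeState k f u (deriv u) z := by
  obtain ⟨z, hz⟩ := Set.ncard_eq_one.1 hc.2
  obtain ⟨hz₀, hsign⟩ : z ∈ {z | 0 < z ∧ SignChange u z} := hz ▸ mem_singleton z
  refine ⟨z, .of_boundState h, h.1, h.2.2.2.2, hpos, hz₀, hsign, fun t ht hs => ?_⟩
  exact (hz ▸ (⟨ht, hs⟩ : t ∈ {z | 0 < z ∧ SignChange u z}) : t ∈ ({z} : Set ℝ))

theorem Profile.exists_of_boundState {k : ℕ} {f u : ℝ → ℝ} {b β : ℝ} (N : Nonlinearity k f b β)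
    (h : BoundState (k + 2) f u) (hpos : 0 < u 0) (hc : ExactSignChanges u 1) :
    ∃ T rA rB, Profile k f u (deriv u) β T rA rB := by
  obtain ⟨z, hz⟩ := OneNodeState.exists_of_boundState h hpos hc
  obtain ⟨T, hT⟩ := hz.exists_shape N
  exact ⟨T, hT.exists_profile N.odd⟩

end Paper

open Paper Set Filter MeasureTheory

theorem uniqueness_second_bound_state_general
    (n : ℕ) (hn : 2 ≤ n)
    (f : ℝ → ℝ) (b β : ℝ) (hf : Continuous f)
    (h1 : Hf1 f b β) (hdiff : ∀ s, β < s → DifferentiableAt ℝ f s)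
    (hderiv : ContinuousOn (deriv f) (Ioi β)) (h3 : Hf3 f β) (h4 : Hf4 n f β)
    (u₁ u₂ : ℝ → ℝ) (hs₁ : BoundState n f u₁) (hs₂ : BoundState n f u₂)
    (hp₁ : 0 < u₁ 0) (hp₂ : 0 < u₂ 0)
    (hc₁ : ExactSignChanges u₁ 1) (hc₂ : ExactSignChanges u₂ 1) :
    u₁ 0 = u₂ 0 ∧ EqOn u₁ u₂ (Ici 0) := by
  obtain ⟨k, rfl⟩ := Nat.exists_eq_add_of_le' hn
  have N : Nonlinearity k f b β := ⟨hf, hdiff, hderiv, h1, h3, h4⟩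
  obtain ⟨T₁, rA₁, rB₁, P₁⟩ := Profile.exists_of_boundState N hs₁ hp₁ hc₁
  obtain ⟨T₂, rA₂, rB₂, P₂⟩ := Profile.exists_of_boundState N hs₂ hp₂ hc₂
  have h0 : u₁ 0 = u₂ 0 := le_antisymm (not_lt.1 (P₂.not_lt P₁ N)) (not_lt.1 (P₁.not_lt P₂ N))
  exact ⟨h0, P₁.eqOn_Ici P₂ N h0⟩

/-- **Theorem 1.2 (first part).** Under (f1), (f2), (f3), (f4), problem (P) has at most one
solution with `u 0 > 0` having exactly one sign change in `(0,∞)`. -/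
theorem uniqueness_second_bound_state
    (n : ℕ) (hn : 2 ≤ n)
    (f : ℝ → ℝ) (b β : ℝ) (hf : Continuous f)
    (h1 : Hf1 f b β) (h2 : Hf2 f) (h3 : Hf3 f β) (h4 : Hf4 n f β)
    (u₁ u₂ : ℝ → ℝ) (hs₁ : BoundState n f u₁) (hs₂ : BoundState n f u₂)
    (hp₁ : 0 < u₁ 0) (hp₂ : 0 < u₂ 0)
    (hc₁ : ExactSignChanges u₁ 1) (hc₂ : ExactSignChanges u₂ 1) :
    u₁ 0 = u₂ 0 ∧ EqOn u₁ u₂ (Ici 0) := by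
  have hβ : 0 < β := h1.2.2.1.trans h1.2.2.2.1
  exact uniqueness_second_bound_state_general n hn f b β hf h1 (fun s hs => h2.2.1 s (hβ.trans hs))
    (h2.2.2.1.mono (Ioi_subset_Ioi hβ.le)) h3 h4 u₁ u₂ hs₁ hs₂ hp₁ hp₂ hc₁ hc₂
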